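/- arXiv:2510.13305 — 5 statements merged into one kernel-verified Lean document; each statement's English description precedes it below -/
import Mathlib

section
/- Let X and Y be open subsets of ℂ and f : X → ℂ holomorphic with f(X) ⊆ Y. Then f : X → Y is a branched covering if and only if the following three conditions hold: f is nowhere constant, f has no asymptotic value in Y, and the set of critical values of f has no accumulation point in Y. -/
/-- `φ` is a biholomorphism from `U` onto `V`. -/
def Biholo (φ : ℂ → ℂ) (U V : Set ℂ) : Prop :=
  DifferentiableOn ℂ φ U ∧ Set.BijOn φ U V ∧
    ∃ φ' : ℂ → ℂ, DifferentiableOn ℂ φ' V ∧ Set.InvOn φ' φ U V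

/-- `f : X → Y` is a branched covering: every `y ∈ Y` has an open neighbourhood
`V ⊆ Y`, biholomorphic to `𝔻` via `ψ` with `ψ y = 0`, such that on every connected
component `U` of `f⁻¹(V)`, `ψ ∘ f` is equivalent to `z ↦ z^d` on `𝔻` for some `d ≥ 1`. -/
def IsBranchedCovering (f : ℂ → ℂ) (X Y : Set ℂ) : Prop :=
  ∀ y ∈ Y, ∃ V : Set ℂ, IsOpen V ∧ y ∈ V ∧ V ⊆ Y ∧
    ∃ ψ : ℂ → ℂ, Biholo ψ V (Metric.ball (0:ℂ) 1) ∧ ψ y = 0 ∧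
      ∀ U : Set ℂ,
        (∃ x ∈ {z ∈ X | f z ∈ V}, U = connectedComponentIn {z ∈ X | f z ∈ V} x) →
        ∃ d : ℕ, 1 ≤ d ∧ ∃ φ : ℂ → ℂ, Biholo φ U (Metric.ball (0:ℂ) 1) ∧
          ∀ z ∈ U, ψ (f z) = (φ z) ^ d

/-- `f` is constant on no nonempty open subset of `X`. -/
def NowhereConstantOn (f : ℂ → ℂ) (X : Set ℂ) : Prop :=
  ∀ U : Set ℂ, IsOpen U → U.Nonempty → U ⊆ X → ¬ ∃ c : ℂ, ∀ z ∈ U, f z = c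

/-- `y` is an asymptotic value of `f : X → ℂ`. -/
def IsAsympVal (f : ℂ → ℂ) (X : Set ℂ) (y : ℂ) : Prop :=
  ∃ γ : ℝ → ℂ,
    ContinuousOn γ (Set.Ico 0 1) ∧
    (∀ t ∈ Set.Ico (0:ℝ) 1, γ t ∈ X) ∧
    (∀ K : Set ℂ, K ⊆ X → IsCompact K →
      ∃ t₀ ∈ Set.Ico (0:ℝ) 1, ∀ t, t₀ ≤ t → t < 1 → γ t ∉ K) ∧
    Filter.Tendsto (fun t => f (γ t)) (nhdsWithin 1 (Set.Ico 0 1)) (nhds y)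

/-- `y` is an asymptotic value of `f : X → Y`. -/
def IsAsympValIn (f : ℂ → ℂ) (X Y : Set ℂ) (y : ℂ) : Prop :=
  y ∈ Y ∧ IsAsympVal f X y

open Topology Filter Set

/-- lifts of a path on a half-open interval -/
def IsLift5 {E : Type*} [TopologicalSpace E] (p : E → ℂ) (α : ℝ → ℂ) (e₀ : E) (s : ℝ)
    (γ : ℝ → E) : Prop :=
  ContinuousOn γ (Ico 0 s) ∧ γ 0 = e₀ ∧ ∀ t ∈ Ico 0 s, p (γ t) = α t

theorem lift_mono5 {E : Type*} [TopologicalSpace E] {p : E → ℂ} {α : ℝ → ℂ} {e₀ : E} {s s' : ℝ}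
    {γ : ℝ → E} (h : IsLift5 p α e₀ s γ) (hs : s' ≤ s) : IsLift5 p α e₀ s' γ :=
  ⟨h.1.mono (Ico_subset_Ico_right hs), h.2.1, fun t ht => h.2.2 t ⟨ht.1, ht.2.trans_le hs⟩⟩

theorem lift_unique5 {E : Type*} [TopologicalSpace E] [T2Space E] {p : E → ℂ}
    (hp : IsLocalHomeomorph p) {α : ℝ → ℂ} {e₀ : E} {s : ℝ} {γ γ' : ℝ → E}
    (h : IsLift5 p α e₀ s γ) (h' : IsLift5 p α e₀ s γ') : EqOn γ γ' (Ico 0 s) := by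
  rcases le_or_gt s 0 with hs | hs
  · simp [Ico_eq_empty (not_lt.2 hs)]
  refine (T2Space.isSeparatedMap p).eqOn_of_comp_eqOn hp.isLocallyInjective isPreconnected_Ico
    h.1 h'.1 (fun t ht => ?_) (a := 0) ⟨le_rfl, hs⟩ (h.2.1.trans h'.2.1.symm)
  simp only [Function.comp, h.2.2 t ht, h'.2.2 t ht]

theorem lift_extend5 {E : Type*} [TopologicalSpace E] [T2Space E] {p : E → ℂ}
    (hp : IsLocalHomeomorph p) {α : ℝ → ℂ} (hα : Continuous α) {e₀ : E} {s : ℝ} (hs : 0 < s)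
    {γ : ℝ → E} (h : IsLift5 p α e₀ s γ) {x : E} (hx : p x = α s)
    (hc : MapClusterPt x (𝓝[<] s) γ) : ∃ s' > s, ∃ γ', IsLift5 p α e₀ s' γ' := by
  classical
  obtain ⟨e, hxe, rfl⟩ := hp x
  have hT : ∀ᶠ t in 𝓝 s, α t ∈ e.target :=
    hα.continuousAt.eventually (e.open_target.mem_nhds (hx ▸ e.map_source hxe))
  obtain ⟨δ, hδ, hδT⟩ := Metric.eventually_nhds_iff.1 hT
  have hfr := mapClusterPt_iff_frequently.1 hc _ (e.open_source.mem_nhds hxe)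
  have hev : ∀ᶠ t in 𝓝[<] s, t ∈ Ioo (max 0 (s - δ)) s :=
    Ioo_mem_nhdsLT (max_lt hs (by linarith))
  obtain ⟨t₁, ht₁s, ht₁, ht₁'⟩ := (hfr.and_eventually hev).exists
  have h0 : 0 < t₁ := (le_max_left _ _).trans_lt ht₁
  have h1 : s - δ < t₁ := (le_max_right _ _).trans_lt ht₁
  have htar : ∀ t, t₁ ≤ t → t < s + δ → α t ∈ e.target := fun t h2 h3 => hδT (by
    rw [Real.dist_eq, abs_lt]; constructor <;> linarith)
  have hsc : ∀ t, t₁ ≤ t → t < s + δ → ContinuousAt (fun t => e.symm (α t)) t := fun t h2 h3 =>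
    (e.symm.continuousAt (htar t h2 h3)).comp hα.continuousAt
  have heq : EqOn γ (fun t => e.symm (α t)) (Ico t₁ s) := by
    refine (T2Space.isSeparatedMap e).eqOn_of_comp_eqOn hp.isLocallyInjective isPreconnected_Ico
      (h.1.mono (Ico_subset_Ico_left h0.le))
      (fun t ht => (hsc t ht.1 (by linarith [ht.2])).continuousWithinAt)
      (fun t ht => ?_) (a := t₁) ⟨le_rfl, ht₁'⟩ ?_
    · simp only [Function.comp]
      rw [h.2.2 t ⟨h0.le.trans ht.1, ht.2⟩, e.right_inv (htar t ht.1 (by linarith [ht.2]))]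
    · show γ t₁ = e.symm (α t₁)
      rw [← h.2.2 t₁ ⟨h0.le, ht₁'⟩, e.left_inv ht₁s]
  refine ⟨s + δ, by linarith, fun t => if t < s then γ t else e.symm (α t), ?_, ?_, ?_⟩
  · intro t ht
    rcases lt_or_ge t s with hts | hts
    · have : ContinuousWithinAt γ (Ico 0 (s + δ)) t := by
        refine (h.1 t ⟨ht.1, hts⟩).mono_of_mem_nhdsWithin ?_
        filter_upwards [self_mem_nhdsWithin, mem_nhdsWithin_of_mem_nhds (Iio_mem_nhds hts)]
          with u hu hu'
        exact ⟨hu.1, hu'⟩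
      refine this.congr_of_eventuallyEq ?_ (by simp [hts])
      filter_upwards [mem_nhdsWithin_of_mem_nhds (Iio_mem_nhds hts)] with u hu
      simp [show u < s from hu]
    · refine ((hsc t (by linarith) ht.2).congr ?_).continuousWithinAt
      filter_upwards [Ioi_mem_nhds (show t₁ < t by linarith)] with u hu
      rcases lt_or_ge u s with hus | hus
      · simp [hus, heq ⟨le_of_lt hu, hus⟩]
      · simp [not_lt.2 hus]
  · simp [hs, h.2.1]
  · intro t ht
    rcases lt_or_ge t s with hts | hts
    · simp [hts, h.2.2 t ⟨ht.1, hts⟩]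
    · simp [not_lt.2 hts, e.right_inv (htar t (by linarith) ht.2)]

theorem lift_exists5 {E : Type*} [TopologicalSpace E] [T2Space E] {p : E → ℂ}
    (hp : IsLocalHomeomorph p) {α : ℝ → ℂ} (hα : Continuous α) {e₀ : E} (he₀ : p e₀ = α 0)
    {b : ℝ} (hb : 0 < b)
    (H : ∀ s, 0 < s → s < b → ∀ γ, IsLift5 p α e₀ s γ → ∃ x, p x = α s ∧
      MapClusterPt x (𝓝[<] s) γ) : ∃ γ, IsLift5 p α e₀ b γ := by
  classical
  set S : Set ℝ := {s | 0 < s ∧ s ≤ b ∧ ∃ γ, IsLift5 p α e₀ s γ} with hS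
  have hne : S.Nonempty := by
    obtain ⟨e, hxe, rfl⟩ := hp e₀
    have hT : ∀ᶠ t in 𝓝 (0:ℝ), α t ∈ e.target :=
      hα.continuousAt.eventually (e.open_target.mem_nhds (he₀ ▸ e.map_source hxe))
    obtain ⟨δ, hδ, hδT⟩ := Metric.eventually_nhds_iff.1 hT
    have htar : ∀ t ∈ Ico 0 (min δ b), α t ∈ e.target := fun t ht => hδT (by
      rw [Real.dist_eq, abs_lt]
      have := ht.2.trans_le (min_le_left _ _)
      constructor <;> linarith [ht.1])
    refine ⟨min δ b, lt_min hδ hb, min_le_right _ _, fun t => e.symm (α t), ?_, ?_, ?_⟩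
    · exact fun t ht => ((e.symm.continuousAt (htar t ht)).comp hα.continuousAt).continuousWithinAt
    · simp [← he₀, e.left_inv hxe]
    · exact fun t ht => e.right_inv (htar t ht)
  have hbd : BddAbove S := ⟨b, fun s hs => hs.2.1⟩
  set σ := sSup S with hσ
  have hσ0 : 0 < σ := by
    obtain ⟨s, hs⟩ := hne
    exact hs.1.trans_le (le_csSup hbd hs)
  have hσb : σ ≤ b := csSup_le hne fun s hs => hs.2.1
  have hlt : ∀ t, t < σ → ∃ s, t < s ∧ ∃ γ, IsLift5 p α e₀ s γ := fun t ht => by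
    obtain ⟨s, hs, hts⟩ := exists_lt_of_lt_csSup hne ht
    exact ⟨s, hts, hs.2.2⟩
  -- glue
  have hglue : ∃ γ, IsLift5 p α e₀ σ γ := by
    have : Nonempty E := ⟨e₀⟩
    choose! s hs Γ hΓ using hlt
    have key : ∀ t ∈ Ico 0 σ, ∀ u ∈ Ico 0 σ, u < s t → Γ u u = Γ t u := by
      intro t ht u hu hut
      have h1 := lift_mono5 (hΓ t ht.2) (min_le_left (s t) (s u))
      have h2 := lift_mono5 (hΓ u hu.2) (min_le_right (s t) (s u))
      exact (lift_unique5 hp h1 h2 ⟨hu.1, lt_min hut (hs u hu.2)⟩).symm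
    refine ⟨fun t => Γ t t, ?_, (hΓ 0 hσ0).2.1, fun t ht => (hΓ t ht.2).2.2 t ⟨ht.1, hs t ht.2⟩⟩
    intro t ht
    have hN : ∀ᶠ u in 𝓝[Ico 0 σ] t, u ∈ Ico 0 σ ∧ u < s t := by
      filter_upwards [self_mem_nhdsWithin, mem_nhdsWithin_of_mem_nhds (Iio_mem_nhds (hs t ht.2))]
        with u hu hu'
      exact ⟨hu, hu'⟩
    have : ContinuousWithinAt (Γ t) (Ico 0 σ) t := by
      refine ((hΓ t ht.2).1 t ⟨ht.1, hs t ht.2⟩).mono_of_mem_nhdsWithin ?_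
      filter_upwards [hN] with u hu
      exact ⟨hu.1.1, hu.2⟩
    refine this.congr_of_eventuallyEq ?_ rfl
    filter_upwards [hN] with u hu using key t ht u hu.1 hu.2
  rcases hσb.eq_or_lt with h | h
  · exact h ▸ hglue
  · exfalso
    obtain ⟨γ, hγ⟩ := hglue
    obtain ⟨x, hx, hc⟩ := H σ hσ0 h γ hγ
    obtain ⟨s', hs', γ', hγ'⟩ := lift_extend5 hp hα hσ0 hγ hx hc
    have : min s' b ∈ S := ⟨lt_min (hσ0.trans hs') hb, min_le_right _ _, γ',
      lift_mono5 hγ' (min_le_left _ _)⟩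
    exact absurd (le_csSup hbd this) (not_le.2 (lt_min hs' h))

/-- cluster points of paths whose image converges -/
theorem cluster5 {X Y : Set ℂ} {f : ℂ → ℂ} (hX : IsOpen X) (hf : DifferentiableOn ℂ f X)
    (hA : ¬ ∃ y : ℂ, IsAsympValIn f X Y y) {γ : ℝ → ℂ} {s : ℝ} (hs : 0 < s)
    (hγ : ContinuousOn γ (Ico 0 s)) (hγX : ∀ t ∈ Ico 0 s, γ t ∈ X) {c : ℂ} (hc : c ∈ Y)
    (hlim : Tendsto (fun t => f (γ t)) (𝓝[<] s) (𝓝 c)) :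
    ∃ x ∈ X, f x = c ∧ MapClusterPt x (𝓝[<] s) γ := by
  have hmap : ∀ t ∈ Ico (0:ℝ) 1, s * t ∈ Ico 0 s := fun t ht =>
    ⟨mul_nonneg hs.le ht.1, by nlinarith [ht.2]⟩
  have hK : ∃ K ⊆ X, IsCompact K ∧ ∃ᶠ t in 𝓝[<] s, γ t ∈ K := by
    by_contra hcon
    push Not at hcon
    refine hA ⟨c, hc, fun t => γ (s * t), ?_, fun t ht => hγX _ (hmap t ht), ?_, ?_⟩
    · exact hγ.comp (by fun_prop) hmap
    · intro K hKX hKc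
      have := hcon K hKX hKc
      obtain ⟨a, ha, haK⟩ := (mem_nhdsLT_iff_exists_Ioo_subset' hs).1 this
      refine ⟨max 0 ((a / s + 1) / 2), ⟨le_max_left _ _, max_lt one_pos ?_⟩, fun t ht ht1 => ?_⟩
      · have : a / s < 1 := (div_lt_one hs).2 ha
        linarith
      · have h1 : a / s < 1 := (div_lt_one hs).2 ha
        have h2 : a / s < t := by linarith [le_max_right 0 ((a / s + 1) / 2)]
        refine haK ⟨?_, ?_⟩
        · rw [div_lt_iff₀ hs] at h2; linarith
        · nlinarith
    · refine hlim.comp ?_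
      refine tendsto_nhdsWithin_iff.2 ⟨?_, ?_⟩
      · have : Tendsto (fun t : ℝ => s * t) (𝓝 1) (𝓝 (s * 1)) :=
          (continuous_const.mul continuous_id).tendsto _
        rw [mul_one] at this
        exact this.mono_left nhdsWithin_le_nhds
      · filter_upwards [self_mem_nhdsWithin] with t ht using (hmap t ht).2
  obtain ⟨K, hKX, hKc, hfr⟩ := hK
  obtain ⟨x, hxK, hx⟩ := hKc.exists_mapClusterPt_of_frequently hfr
  refine ⟨x, hKX hxK, ?_, hx⟩
  have h1 : MapClusterPt (f x) (𝓝[<] s) (f ∘ γ) :=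
    hx.continuousAt_comp (hf.continuousOn.continuousAt (hX.mem_nhds (hKX hxK)))
  by_contra hne
  obtain ⟨u, v, hu, hv, hxu, hcv, huv⟩ := t2_separation hne
  have h2 := mapClusterPt_iff_frequently.1 h1 u (hu.mem_nhds hxu)
  have h3 := hlim.eventually (hv.mem_nhds hcv)
  obtain ⟨t, ht, ht'⟩ := (h2.and_eventually h3).exists
  exact huv.le_bot ⟨ht, ht'⟩

theorem localHomeo5 {W : Set ℂ} {f : ℂ → ℂ} (hW : IsOpen W) (hf : DifferentiableOn ℂ f W)
    (hd : ∀ z ∈ W, deriv f z ≠ 0) : IsLocalHomeomorph (fun z : W => f z) := by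
  rw [isLocalHomeomorph_iff_isLocalHomeomorphOn_univ]
  refine IsLocalHomeomorphOn.comp (g := f) (t := W) ?_
    (hW.isOpenEmbedding_subtypeVal.isLocalHomeomorph.isLocalHomeomorphOn) (fun z _ => z.2)
  intro z hz
  have h1 : HasStrictDerivAt f (deriv f z) z :=
    (hf.analyticAt (hW.mem_nhds hz)).hasStrictDerivAt
  have h2 := h1.hasStrictFDerivAt_equiv (hd z hz)
  exact ⟨h2.toOpenPartialHomeomorph f, h2.mem_toOpenPartialHomeomorph_source, rfl⟩

theorem pathLift5 {X Y V : Set ℂ} {f : ℂ → ℂ} {y : ℂ} (hX : IsOpen X)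
    (hf : DifferentiableOn ℂ f X)
    (hA : ¬ ∃ y : ℂ, IsAsympValIn f X Y y) (hVY : V ⊆ Y)
    {W : Set ℂ} (hW : W = {z ∈ X | f z ∈ V ∧ f z ≠ y}) (hWo : IsOpen W)
    (hd : ∀ z ∈ W, deriv f z ≠ 0) {α : ℝ → ℂ} (hα : Continuous α) {b : ℝ} (hb : 0 < b)
    (hαV : ∀ t ∈ Ico 0 b, α t ∈ V ∧ α t ≠ y) (e₀ : W) (he₀ : f e₀ = α 0) :
    ∃ γ, IsLift5 (fun z : W => f z) α e₀ b γ := by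
  have hWX : W ⊆ X := by rw [hW]; exact fun z hz => hz.1
  refine lift_exists5 (localHomeo5 hWo (hf.mono hWX) hd) hα he₀ hb ?_
  intro s hs hsb γ hγ
  have hsV := hαV s ⟨hs.le, hsb⟩
  have hlim : Tendsto (fun t => f (γ t)) (𝓝[<] s) (𝓝 (α s)) := by
    refine (hα.continuousAt.tendsto.mono_left nhdsWithin_le_nhds).congr' ?_
    filter_upwards [Ioo_mem_nhdsLT hs] with t ht using (hγ.2.2 t ⟨ht.1.le, ht.2⟩).symm
  obtain ⟨x, hxX, hx, hc⟩ := cluster5 hX hf hA hs (γ := fun t => (γ t : ℂ))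
    (continuous_subtype_val.comp_continuousOn hγ.1) (fun t _ => hWX (γ t).2) (hVY hsV.1) hlim
  have hxW : x ∈ W := by rw [hW]; exact ⟨hxX, hx ▸ hsV.1, hx ▸ hsV.2⟩
  refine ⟨⟨x, hxW⟩, hx, ?_⟩
  rw [mapClusterPt_iff_frequently] at hc ⊢
  intro N hN
  rw [nhds_subtype_eq_comap] at hN
  obtain ⟨M, hM, hMN⟩ := hN
  exact (hc M hM).mono fun t ht => hMN ht

theorem localForm5 {X : Set ℂ} {f : ℂ → ℂ} {x y r : ℂ} (hX : IsOpen X)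
    (hf : DifferentiableOn ℂ f X) (hN : NowhereConstantOn f X) (hx : x ∈ X) (hxy : f x = y)
    (hr : r ≠ 0) : ∃ d : ℕ, 1 ≤ d ∧ ∃ h : ℂ → ℂ, ∃ δ : ℝ, 0 < δ ∧ h 0 = x ∧
      ContinuousOn h (Metric.ball 0 δ) ∧ InjOn h (Metric.ball 0 δ) ∧
      (∀ ζ ∈ Metric.ball (0:ℂ) δ, h ζ ∈ X ∧ f (h ζ) = y + r * ζ ^ d) ∧
      ∃ c : ℂ, c ≠ 0 ∧ HasDerivAt h c 0 := by
  have han : AnalyticAt ℂ (fun z => f z - y) x :=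
    (hf.analyticAt (hX.mem_nhds hx)).sub analyticAt_const
  have hnc : ¬ ∀ᶠ z in 𝓝 x, f z - y = 0 := by
    intro hev
    obtain ⟨U, hU, hUo, hxU⟩ := eventually_nhds_iff.1 (hev.and (hX.mem_nhds hx))
    exact hN U hUo ⟨x, hxU⟩ (fun z hz => (hU z hz).2) ⟨y, fun z hz => sub_eq_zero.1 (hU z hz).1⟩
  obtain ⟨d, G, hG, hG0, hfG⟩ := han.exists_eventuallyEq_pow_smul_nonzero_iff.2 hnc
  have hd : d ≠ 0 := by
    rintro rfl
    have := hfG.self_of_nhds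
    simp [hxy] at this
    exact hG0 this.symm
  obtain ⟨c, hc⟩ := IsAlgClosed.exists_pow_nat_eq (G x / r) (Nat.pos_of_ne_zero hd)
  have hc0 : c ≠ 0 := by
    rintro rfl
    rw [zero_pow hd] at hc
    exact div_ne_zero hG0 hr hc.symm
  set k : ℂ → ℂ := fun z => c * (G z / G x) ^ ((d:ℂ)⁻¹) with hk
  have hkx : k x = c := by simp [hk, div_self hG0]
  have hkan : AnalyticAt ℂ k x := by
    refine analyticAt_const.mul ((hG.div analyticAt_const hG0).cpow analyticAt_const ?_)
    simp [div_self hG0]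
  have hkd : ∀ z, k z ^ d = G z / r := fun z => by
    simp only [hk]
    rw [mul_pow, Complex.cpow_nat_inv_pow _ hd, hc]
    field_simp
  set η : ℂ → ℂ := fun z => (z - x) * k z with hη
  have hηd : HasStrictDerivAt η c x := by
    have h1 : HasStrictDerivAt (fun z => z - x) 1 x := (hasStrictDerivAt_id x).sub_const x
    have h2 := h1.mul hkan.hasStrictDerivAt
    have h3 : HasStrictDerivAt η (1 * k x + (x - x) * deriv k x) x := h2
    rwa [hkx, sub_self, zero_mul, add_zero, one_mul] at h3
  have hηx : η x = 0 := by simp [hη]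
  have hηf : ∀ᶠ z in 𝓝 x, f z = y + r * η z ^ d := by
    filter_upwards [hfG] with z hz
    simp only [hη]
    rw [mul_pow, hkd]
    rw [smul_eq_mul] at hz
    field_simp
    linear_combination hz
  set h := HasStrictDerivAt.localInverse η c x hηd hc0 with hh
  have hhd : HasStrictDerivAt h c⁻¹ 0 := by
    have := hηd.to_localInverse hc0
    rwa [hηx] at this
  have hhr : ∀ᶠ ζ in 𝓝 (0:ℂ), η (h ζ) = ζ := by
    have := hηd.eventually_right_inverse hc0
    rwa [hηx] at this
  have hh0 : h 0 = x := by
    have := (hηd.eventually_left_inverse hc0).self_of_nhds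
    rwa [hηx] at this
  have hhx : ∀ᶠ ζ in 𝓝 (0:ℂ), f (h ζ) = y + r * η (h ζ) ^ d ∧ h ζ ∈ X := by
    have h1 : Tendsto h (𝓝 0) (𝓝 x) := by
      have := hhd.hasDerivAt.continuousAt.tendsto
      rwa [hh0] at this
    exact h1.eventually (hηf.and (hX.mem_nhds hx))
  obtain ⟨K, s, hs, hKs⟩ := hhd.hasStrictFDerivAt.exists_lipschitzOnWith
  obtain ⟨δ, hδ, hδs⟩ := Metric.eventually_nhds_iff_ball.1 ((hhr.and hhx).and hs)
  refine ⟨d, Nat.one_le_iff_ne_zero.2 hd, h, δ, hδ, hh0,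
    hKs.continuousOn.mono fun z hz => (hδs z hz).2, ?_, ?_, c⁻¹, inv_ne_zero hc0, hhd.hasDerivAt⟩
  · intro a ha b hb hab
    rw [← (hδs a ha).1.1, ← (hδs b hb).1.1, hab]
  · intro ζ hζ
    obtain ⟨⟨h1, h2, h3⟩, -⟩ := hδs ζ hζ
    exact ⟨h3, by rw [h2, h1]⟩

theorem extend5 {X Y V : Set ℂ} {f : ℂ → ℂ} {x y : ℂ} {r : ℝ} (hX : IsOpen X)
    (hf : DifferentiableOn ℂ f X) (hA : ¬ ∃ y : ℂ, IsAsympValIn f X Y y) (hVY : V ⊆ Y)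
    (hV : V = Metric.ball y r) (hr : 0 < r) {W : Set ℂ}
    (hW : W = {z ∈ X | f z ∈ V ∧ f z ≠ y}) (hWo : IsOpen W)
    (hd : ∀ z ∈ W, deriv f z ≠ 0) {d : ℕ} (hd1 : 1 ≤ d) {h : ℂ → ℂ} {δ : ℝ} (hδ : 0 < δ)
    (hδ1 : δ ≤ 1) (hh0 : h 0 = x) (hhc : ContinuousOn h (Metric.ball 0 δ))
    (hhX : ∀ ζ ∈ Metric.ball (0:ℂ) δ, h ζ ∈ X ∧ f (h ζ) = y + r * ζ ^ d) :
    ∃ Φ : ℂ → ℂ, EqOn Φ h (Metric.ball 0 δ) ∧ 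
      ∀ ζ ∈ Metric.ball (0:ℂ) 1, ζ ≠ 0 → ContinuousAt Φ ζ ∧ Φ ζ ∈ X ∧
        f (Φ ζ) = y + r * ζ ^ d := by
  classical
  have hWX : W ⊆ X := by rw [hW]; exact fun z hz => hz.1
  have hlh := localHomeo5 hWo (hf.mono hWX) hd
  have hqV : ∀ ζ : ℂ, ‖ζ‖ < 1 → ζ ≠ 0 → y + r * ζ ^ d ∈ V ∧ y + r * ζ ^ d ≠ y := by
    intro ζ h1 h2
    constructor
    · rw [hV, Metric.mem_ball, dist_eq_norm]
      have : ‖ζ‖ ^ d < 1 := pow_lt_one₀ (norm_nonneg _) h1 (by omega)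
      simp only [add_sub_cancel_left, norm_mul, norm_pow, Complex.norm_real, Real.norm_eq_abs,
        abs_of_pos hr]
      nlinarith
    · simp [hr.ne', h2]
  have hhW : ∀ ζ : ℂ, ‖ζ‖ < δ → ζ ≠ 0 → h ζ ∈ W := by
    intro ζ h1 h2
    obtain ⟨h3, h4⟩ := hhX ζ (by simpa using h1)
    rw [hW]
    have := hqV ζ (by linarith) h2
    exact ⟨h3, h4 ▸ this⟩
  set A := {ζ : ℂ // ‖ζ‖ < 1 ∧ ζ ≠ 0} with hAdef
  set κ : ℝ := δ / 2 with hκ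
  have hκ0 : 0 < κ := by positivity
  have hκ1 : κ < 1 := by linarith
  let c : ℝ → ℝ := fun t => κ + t * (1 - κ)
  have hc : Continuous c := by fun_prop
  have hcpos : ∀ t, 0 ≤ t → 0 < c t := fun t ht => by
    have : 0 ≤ t * (1 - κ) := mul_nonneg ht (by linarith)
    show 0 < κ + t * (1 - κ); linarith
  have hcle : ∀ t b, 1 < b → t < b → c t < b := fun t b hb ht => by
    show κ + t * (1 - κ) < b; nlinarith
  let α : A → ℝ → ℂ := fun a t => y + r * ((c t : ℂ) * a.1) ^ d
  have hαc : ∀ a, Continuous (α a) := fun a => by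
    have : Continuous fun t => (c t : ℂ) := Complex.continuous_ofReal.comp hc
    show Continuous fun t => y + r * ((c t : ℂ) * a.1) ^ d
    fun_prop
  have hnorm : ∀ (a : A) t, 0 ≤ t → ‖(c t : ℂ) * a.1‖ = c t * ‖a.1‖ := fun a t ht => by
    rw [norm_mul, Complex.norm_real, Real.norm_eq_abs, abs_of_pos (hcpos t ht)]
  have hne : ∀ (a : A) t, 0 ≤ t → (c t : ℂ) * a.1 ≠ 0 := fun a t ht =>
    mul_ne_zero (by exact_mod_cast (hcpos t ht).ne') a.2.2
  have hapos : ∀ a : A, 0 < ‖a.1‖ := fun a => norm_pos_iff.2 a.2.2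
  have hc0 : ∀ a : A, ‖(c 0 : ℂ) * a.1‖ < δ := fun a => by
    rw [hnorm a 0 le_rfl]
    have : c 0 = κ := by simp [c]
    rw [this]
    nlinarith [a.2.1, hapos a]
  let e₀ : A → W := fun a => ⟨h ((c 0 : ℂ) * a.1), hhW _ (hc0 a) (hne a 0 le_rfl)⟩
  have hex : ∀ a : A, ∃ γ, IsLift5 (fun z : W => f z) (α a) (e₀ a) (1 / ‖a.1‖) γ := by
    intro a
    have hb1 : 1 < 1 / ‖a.1‖ := by rw [lt_div_iff₀ (hapos a)]; linarith [a.2.1]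
    refine pathLift5 hX hf hA hVY hW hWo hd (hαc a) (by linarith) ?_ (e₀ a) ?_
    · intro t ht
      refine hqV _ ?_ (hne a t ht.1)
      rw [hnorm a t ht.1, ← lt_div_iff₀ (hapos a)]
      exact hcle t _ hb1 ht.2
    · exact (hhX _ (by simpa using hc0 a)).2
  choose γ hγ using hex
  have hb1 : ∀ a : A, 1 < 1 / ‖a.1‖ := fun a => by
    rw [lt_div_iff₀ (hapos a)]; linarith [a.2.1]
  -- continuity of the family
  let F : C(unitInterval × A, ℂ) := ⟨fun q => α q.2 q.1, by
    have : Continuous fun t => (c t : ℂ) := Complex.continuous_ofReal.comp hc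
    show Continuous fun q : unitInterval × A => y + r * ((c q.1 : ℂ) * q.2.1) ^ d
    have h1 : Continuous fun q : unitInterval × A => (c q.1 : ℂ) :=
      this.comp (continuous_subtype_val.comp continuous_fst)
    have h2 : Continuous fun q : unitInterval × A => (q.2.1 : ℂ) :=
      (continuous_subtype_val (p := fun ζ : ℂ => ‖ζ‖ < 1 ∧ ζ ≠ 0)).comp continuous_snd
    exact continuous_const.add (continuous_const.mul ((h1.mul h2).pow d))⟩
  have hgc : Continuous (fun q : unitInterval × A => γ q.2 q.1) := by
    refine hlh.continuous_lift (T2Space.isSeparatedMap _) F ?_ ?_ ?_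
    · ext q
      exact (hγ q.2).2.2 q.1 ⟨q.1.2.1, q.1.2.2.trans_lt (hb1 _)⟩
    · have : (fun a : A => γ a ((0 : unitInterval) : ℝ)) = e₀ := by
        ext a
        exact congrArg Subtype.val ((hγ a).2.1)
      show Continuous (fun a : A => γ a ((0 : unitInterval) : ℝ))
      rw [this]
      refine Continuous.subtype_mk ?_ _
      refine hhc.comp_continuous (continuous_const.mul continuous_subtype_val) fun a => ?_
      simpa using hc0 a
    · intro a
      exact (hγ a).1.comp_continuous continuous_subtype_val fun t =>
        ⟨t.2.1, t.2.2.trans_lt (hb1 _)⟩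
  let Φ : ℂ → ℂ := fun ζ => if hζ : ‖ζ‖ < 1 ∧ ζ ≠ 0 then (γ ⟨ζ, hζ⟩ 1 : ℂ) else x
  have hΦ : ∀ a : A, Φ a.1 = γ a 1 := fun a => by
    simp only [Φ, dif_pos a.2]
    rfl
  refine ⟨Φ, ?_, ?_⟩
  · intro ζ hζ
    have hζδ : ‖ζ‖ < δ := by simpa using hζ
    by_cases h0 : ζ = 0
    · simp [Φ, h0, hh0]
    let a : A := ⟨ζ, by linarith, h0⟩
    rw [show Φ ζ = γ a 1 from hΦ a]
    have hδ2 : 1 < δ / ‖ζ‖ := by rw [lt_div_iff₀ (hapos a)]; simpa using hζδ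
    have hδ3 : δ / ‖ζ‖ ≤ 1 / ‖a.1‖ := div_le_div_of_nonneg_right hδ1 (norm_nonneg _)
    have hm : ∀ t ∈ Ico 0 (δ / ‖ζ‖), ‖(c t : ℂ) * a.1‖ < δ := fun t ht => by
      rw [hnorm a t ht.1, ← lt_div_iff₀ (hapos a)]
      exact hcle t _ hδ2 ht.2
    let γ' : ℝ → W := fun t => if ht : t ∈ Ico 0 (δ / ‖ζ‖) then
      ⟨h ((c t : ℂ) * a.1), hhW _ (hm t ht) (hne a t ht.1)⟩ else e₀ a
    have hγ' : ∀ t ∈ Ico 0 (δ / ‖ζ‖), (γ' t : ℂ) = h ((c t : ℂ) * a.1) := fun t ht => by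
      simp only [γ', dif_pos ht]
    have hl : IsLift5 (fun z : W => f z) (α a) (e₀ a) (δ / ‖ζ‖) γ' := by
      refine ⟨?_, ?_, ?_⟩
      · rw [Topology.IsInducing.subtypeVal.continuousOn_iff]
        refine ContinuousOn.congr (f := fun t => h ((c t : ℂ) * a.1)) ?_ hγ'
        refine hhc.comp ?_ fun t ht => by simpa using hm t ht
        exact ((Complex.continuous_ofReal.comp hc).mul continuous_const).continuousOn
      · exact Subtype.ext (hγ' 0 ⟨le_rfl, by linarith⟩)
      · intro t ht
        show f (γ' t) = _
        rw [hγ' t ht]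
        exact (hhX _ (by simpa using hm t ht)).2
    have := lift_unique5 hlh (lift_mono5 (hγ a) hδ3) hl (show (1:ℝ) ∈ _ from ⟨zero_le_one, hδ2⟩)
    rw [this, hγ' 1 ⟨zero_le_one, hδ2⟩]
    simp [c, a]
  · intro ζ hζ h0
    have hζ1 : ‖ζ‖ < 1 := by simpa using hζ
    let a : A := ⟨ζ, hζ1, h0⟩
    refine ⟨?_, ?_, ?_⟩
    · have hAo : IsOpen {ζ : ℂ | ‖ζ‖ < 1 ∧ ζ ≠ 0} :=
        (isOpen_lt continuous_norm continuous_const).inter isOpen_ne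
      have h1 : Continuous (fun a : A => Φ a.1) := by
        simp only [hΦ]
        exact continuous_subtype_val.comp (hgc.comp (Continuous.prodMk_right (1 : unitInterval)))
      have h2 : ContinuousOn Φ {ζ : ℂ | ‖ζ‖ < 1 ∧ ζ ≠ 0} :=
        continuousOn_iff_continuous_domRestrict.2 h1
      exact h2.continuousAt (hAo.mem_nhds ⟨hζ1, h0⟩)
    · rw [show Φ ζ = γ a 1 from hΦ a]; exact hWX (γ a 1).2
    · rw [show Φ ζ = γ a 1 from hΦ a]
      have := (hγ a).2.2 1 ⟨zero_le_one, hb1 a⟩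
      refine this.trans ?_
      simp [α, c, a]

theorem liftDeriv5 {f Φ q : ℂ → ℂ} {ζ f' q' : ℂ} (hf : HasStrictDerivAt f f' (Φ ζ)) (hf' : f' ≠ 0)
    (hΦ : ContinuousAt Φ ζ) (hq : HasDerivAt q q' ζ) (he : ∀ᶠ ξ in 𝓝 ζ, f (Φ ξ) = q ξ) :
    HasDerivAt Φ (f'⁻¹ * q') ζ := by
  have h1 := (hf.to_localInverse hf').hasDerivAt
  have h2 := hΦ.eventually (hf.eventually_left_inverse hf')
  rw [he.self_of_nhds] at h1
  refine (h1.comp ζ hq).congr_of_eventuallyEq ?_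
  filter_upwards [h2, he] with ξ h3 h4
  rw [← h3, h4]
  rfl

theorem backward5 {X Y : Set ℂ} (hX : IsOpen X) (hY : IsOpen Y)
    {f : ℂ → ℂ} (hf : DifferentiableOn ℂ f X) (hN : NowhereConstantOn f X)
    (hA : ¬ ∃ y : ℂ, IsAsympValIn f X Y y)
    (hC : ¬ ∃ y ∈ Y, AccPt y (Filter.principal (f '' {z ∈ X | deriv f z = 0}))) :
    IsBranchedCovering f X Y := by
  intro y hy
  have h1 : ∀ᶠ z in 𝓝 y, ¬ (z ≠ y ∧ z ∈ f '' {z ∈ X | deriv f z = 0}) := by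
    by_contra hcon
    exact hC ⟨y, hy, accPt_iff_frequently.2 hcon⟩
  obtain ⟨r, hr, hrB⟩ := Metric.eventually_nhds_iff_ball.1 (h1.and (hY.mem_nhds hy))
  have hrc : (r : ℂ) ≠ 0 := by exact_mod_cast hr.ne'
  obtain ⟨V, hV⟩ : ∃ V, V = Metric.ball y r := ⟨_, rfl⟩
  have hVo : IsOpen V := hV ▸ Metric.isOpen_ball
  have hVY : V ⊆ Y := fun z hz => (hrB z (hV ▸ hz)).2
  have hyV : y ∈ V := hV ▸ Metric.mem_ball_self hr
  have hcrit : ∀ z ∈ X, f z ∈ V → f z ≠ y → deriv f z ≠ 0 := fun z hz hzV hzy h0 =>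
    (hrB (f z) (hV ▸ hzV)).1 ⟨hzy, z, ⟨hz, h0⟩, rfl⟩
  have hmemV : ∀ z, z ∈ V ↔ ‖(z - y) / r‖ < 1 := fun z => by
    rw [hV, Metric.mem_ball, dist_eq_norm, norm_div, Complex.norm_real, Real.norm_eq_abs,
      abs_of_pos hr, div_lt_one hr]
  have hanX : ∀ z ∈ X, AnalyticAt ℂ f z := fun z hz => hf.analyticAt (hX.mem_nhds hz)
  refine ⟨V, hVo, hyV, hVY, fun z => (z - y) / r, ?_, by simp, ?_⟩
  · refine ⟨by fun_prop, ⟨?_, ?_, ?_⟩, fun ζ => y + r * ζ, by fun_prop, ?_, ?_⟩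
    · intro z hz; simpa using (hmemV z).1 hz
    · intro a _ b _ hab
      simp only at hab
      field_simp at hab
      linear_combination hab
    · intro ζ hζ
      refine ⟨y + r * ζ, (hmemV _).2 ?_, ?_⟩
      · simpa [hrc] using hζ
      · simp [hrc]
    · intro z _
      simp only
      field_simp
      ring
    · intro ζ _
      simp [hrc]
  rintro U ⟨x₀, hx₀, hU⟩
  obtain ⟨P, hP⟩ : ∃ P, P = {z ∈ X | f z ∈ V} := ⟨_, rfl⟩
  rw [← hP] at hx₀ hU
  have hPX : P ⊆ X := by rw [hP]; exact fun z hz => hz.1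
  have hPo : IsOpen P := by rw [hP]; exact hf.continuousOn.isOpen_inter_preimage hX hVo
  obtain ⟨W, hW⟩ : ∃ W, W = {z ∈ X | f z ∈ V ∧ f z ≠ y} := ⟨_, rfl⟩
  have hWo : IsOpen W := by
    rw [hW]
    exact hf.continuousOn.isOpen_inter_preimage hX (hVo.inter isOpen_ne)
  have hWd : ∀ z ∈ W, deriv f z ≠ 0 := by
    intro z hz
    rw [hW] at hz
    exact hcrit z hz.1 hz.2.1 hz.2.2
  have hWP : W ⊆ P := by rw [hW, hP]; exact fun z hz => ⟨hz.1, hz.2.1⟩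
  -- a preimage of y in U
  obtain ⟨x, hxU, hxy⟩ : ∃ x ∈ U, f x = y := by
    by_cases hx₀y : f x₀ = y
    · exact ⟨x₀, hU ▸ mem_connectedComponentIn hx₀, hx₀y⟩
    have hx₀' := hx₀
    rw [hP] at hx₀'
    let e₀ : W := ⟨x₀, by rw [hW]; exact ⟨hx₀'.1, hx₀'.2, hx₀y⟩⟩
    let α : ℝ → ℂ := fun t => y + ((1 - t : ℝ) : ℂ) * (f x₀ - y)
    have hαc : Continuous α := by fun_prop
    have hαV : ∀ t ∈ Ico (0:ℝ) 1, α t ∈ V ∧ α t ≠ y := by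
      intro t ht
      constructor
      · rw [hV, Metric.mem_ball, dist_eq_norm]
        have h2 : ‖f x₀ - y‖ < r := by
          have := hx₀'.2
          rwa [hV, Metric.mem_ball, dist_eq_norm] at this
        simp only [α, add_sub_cancel_left, norm_mul, Complex.norm_real, Real.norm_eq_abs]
        rw [abs_of_pos (by linarith [ht.2])]
        nlinarith [ht.1, ht.2, norm_nonneg (f x₀ - y)]
      · have h2 : ((1 - t : ℝ) : ℂ) ≠ 0 := by
          exact_mod_cast (by linarith [ht.2] : (0:ℝ) < 1 - t).ne'
        simp only [α, ne_eq, add_eq_left, mul_eq_zero, not_or]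
        exact ⟨h2, sub_ne_zero.2 hx₀y⟩
    obtain ⟨γ, hγ⟩ := pathLift5 hX hf hA hVY hW hWo hWd hαc one_pos hαV e₀ (by simp [α, e₀])
    have hγc : ContinuousOn (fun t => (γ t : ℂ)) (Ico 0 1) :=
      continuous_subtype_val.comp_continuousOn hγ.1
    have hlim : Tendsto (fun t => f (γ t)) (𝓝[<] 1) (𝓝 y) := by
      have h2 : Tendsto α (𝓝 1) (𝓝 (α 1)) := hαc.tendsto _
      have h3 : α 1 = y := by simp [α]
      rw [h3] at h2
      refine (h2.mono_left nhdsWithin_le_nhds).congr' ?_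
      filter_upwards [Ioo_mem_nhdsLT one_pos] with t ht using (hγ.2.2 t ⟨ht.1.le, ht.2⟩).symm
    obtain ⟨x, hxX, hxy, hcl⟩ := cluster5 hX hf hA one_pos hγc
      (fun t _ => hPX (hWP (γ t).2)) hy hlim
    refine ⟨x, ?_, hxy⟩
    have hγU : ∀ t ∈ Ico (0:ℝ) 1, (γ t : ℂ) ∈ U := by
      intro t ht
      have h2 : IsPreconnected ((fun t => (γ t : ℂ)) '' Ico 0 1) := isPreconnected_Ico.image _ hγc
      rw [hU]
      refine h2.subset_connectedComponentIn (F := P) ?_ ?_ ⟨t, ht, rfl⟩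
      · exact ⟨0, ⟨le_rfl, one_pos⟩, by simp [hγ.2.1, e₀]⟩
      · rintro _ ⟨t, _, rfl⟩
        exact hWP (γ t).2
    have hxP : x ∈ P := by rw [hP]; exact ⟨hxX, hxy ▸ hyV⟩
    have hxcl : x ∈ closure U := by
      rw [mem_closure_iff_nhds]
      intro N hN
      have h2 := mapClusterPt_iff_frequently.1 hcl N hN
      have h3 : ∀ᶠ t in 𝓝[<] (1:ℝ), t ∈ Ioo (0:ℝ) 1 := Ioo_mem_nhdsLT one_pos
      obtain ⟨t, ht, ht'⟩ := (h2.and_eventually h3).exists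
      exact ⟨_, ht, hγU t ⟨ht'.1.le, ht'.2⟩⟩
    -- U ∪ {x} is preconnected
    have hUpre : IsPreconnected U := hU ▸ isPreconnected_connectedComponentIn
    have h4 : IsPreconnected (insert x U) :=
      hUpre.subset_closure (subset_insert _ _) (insert_subset hxcl subset_closure)
    have h5 : insert x U ⊆ connectedComponentIn P x₀ := by
      refine h4.subset_connectedComponentIn (mem_insert_of_mem _ ?_) (insert_subset hxP ?_)
      · rw [hU]; exact mem_connectedComponentIn hx₀
      · rw [hU]; exact connectedComponentIn_subset _ _
    rw [hU]
    exact h5 (mem_insert _ _)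
  have hUP : U ⊆ P := hU ▸ connectedComponentIn_subset _ _
  have hUx : U = connectedComponentIn P x := by
    rw [hU] at hxU ⊢
    exact (connectedComponentIn_eq hxU)
  have hxX : x ∈ X := hPX (hUP hxU)
  obtain ⟨d, hd1, h, δ', hδ', hh0, hhc, hhinj, hhX, c₀, hc₀, hhd⟩ :=
    localForm5 hX hf hN hxX hxy hrc
  obtain ⟨δ, hδdef⟩ : ∃ δ, δ = min δ' 1 := ⟨_, rfl⟩
  have hδ : 0 < δ := hδdef ▸ lt_min hδ' one_pos
  have hδ1 : δ ≤ 1 := hδdef ▸ min_le_right _ _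
  have hsub : Metric.ball (0:ℂ) δ ⊆ Metric.ball 0 δ' :=
    Metric.ball_subset_ball (hδdef ▸ min_le_left _ _)
  obtain ⟨Φ, hΦh, hΦ⟩ := extend5 hX hf hA hVY hV hr hW hWo hWd hd1 hδ hδ1 hh0 (hhc.mono hsub)
    (fun ζ hζ => hhX ζ (hsub hζ))
  have hΦ0 : Φ 0 = x := (hΦh (Metric.mem_ball_self hδ)).trans hh0
  have hfΦ : ∀ ζ ∈ Metric.ball (0:ℂ) 1, Φ ζ ∈ X ∧ f (Φ ζ) = y + r * ζ ^ d := by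
    intro ζ hζ
    by_cases h0 : ζ = 0
    · subst h0
      rw [hΦ0, hxy, zero_pow (by omega)]
      exact ⟨hxX, by simp⟩
    · exact (hΦ ζ hζ h0).2
  have hψΦ : ∀ ζ ∈ Metric.ball (0:ℂ) 1, (f (Φ ζ) - y) / r = ζ ^ d := by
    intro ζ hζ
    rw [(hfΦ ζ hζ).2]
    field_simp
    ring
  have hΦP : ∀ ζ ∈ Metric.ball (0:ℂ) 1, Φ ζ ∈ P := by
    intro ζ hζ
    rw [hP]
    refine ⟨(hfΦ ζ hζ).1, (hmemV _).2 ?_⟩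
    rw [hψΦ ζ hζ, norm_pow]
    exact pow_lt_one₀ (norm_nonneg _) (by simpa using hζ) (by omega)
  have hder : ∀ ζ ∈ Metric.ball (0:ℂ) 1, ∃ c : ℂ, c ≠ 0 ∧ HasDerivAt Φ c ζ := by
    intro ζ hζ
    by_cases h0 : ζ = 0
    · subst h0
      refine ⟨c₀, hc₀, hhd.congr_of_eventuallyEq ?_⟩
      filter_upwards [Metric.ball_mem_nhds (0:ℂ) hδ] with ξ hξ using hΦh hξ
    · have hq : HasDerivAt (fun ξ : ℂ => y + r * ξ ^ d) (r * (d * ζ ^ (d - 1))) ζ :=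
        ((hasDerivAt_pow d ζ).const_mul (r:ℂ)).const_add y
      have hΦW : deriv f (Φ ζ) ≠ 0 := by
        have h2 := hΦP ζ hζ
        rw [hP] at h2
        refine hcrit _ h2.1 h2.2 ?_
        rw [(hfΦ ζ hζ).2]
        simp [hrc, h0]
      refine ⟨_, ?_, liftDeriv5 (hanX _ (hfΦ ζ hζ).1).hasStrictDerivAt hΦW (hΦ ζ hζ h0).1 hq ?_⟩
      · have : (d : ℂ) ≠ 0 := by exact_mod_cast (by omega : d ≠ 0)
        exact mul_ne_zero (inv_ne_zero hΦW) (mul_ne_zero hrc (mul_ne_zero this (pow_ne_zero _ h0)))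
      · filter_upwards [Metric.isOpen_ball.mem_nhds hζ] with ξ hξ using (hfΦ ξ hξ).2
  have hΦdiff : DifferentiableOn ℂ Φ (Metric.ball 0 1) := fun ζ hζ => by
    obtain ⟨c, -, hc⟩ := hder ζ hζ
    exact hc.differentiableAt.differentiableWithinAt
  have hΦan : AnalyticOnNhd ℂ Φ (Metric.ball 0 1) := hΦdiff.analyticOnNhd Metric.isOpen_ball
  have hpc : IsPreconnected (Metric.ball (0:ℂ) 1) := (convex_ball 0 1).isPreconnected
  -- injectivity
  have hinj : InjOn Φ (Metric.ball 0 1) := by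
    intro a ha b hb hab
    have hpow : a ^ d = b ^ d := by rw [← hψΦ a ha, ← hψΦ b hb, hab]
    by_cases ha0 : a = 0
    · subst ha0
      rw [zero_pow (by omega)] at hpow
      exact (pow_eq_zero_iff (by omega)).1 hpow.symm |>.symm
    obtain ⟨ω, hω⟩ : ∃ ω, ω = b / a := ⟨_, rfl⟩
    have hωd : ω ^ d = 1 := by
      rw [hω, div_pow, ← hpow, div_self (pow_ne_zero _ ha0)]
    have hω1 : ‖ω‖ = 1 := Complex.norm_eq_one_of_pow_eq_one hωd (by omega)
    have hωa : ω * a = b := by rw [hω]; field_simp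
    have hωm : ∀ (ρ : ℝ), ∀ ζ ∈ Metric.ball (0:ℂ) ρ, ω * ζ ∈ Metric.ball (0:ℂ) ρ := by
      intro ρ ζ hζ
      simpa [hω1] using hζ
    have hΨan : AnalyticOnNhd ℂ (fun ζ => Φ (ω * ζ)) (Metric.ball 0 1) := by
      refine DifferentiableOn.analyticOnNhd ?_ Metric.isOpen_ball
      exact hΦdiff.comp (by fun_prop) (hωm 1)
    have hda : deriv f (Φ a) ≠ 0 := by
      have h2 := hΦP a ha
      rw [hP] at h2
      refine hcrit _ h2.1 h2.2 ?_
      rw [(hfΦ a ha).2]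
      simp [hrc, ha0]
    have hloc : Φ =ᶠ[𝓝 a] (fun ζ => Φ (ω * ζ)) := by
      have hs := (hanX _ (hfΦ a ha).1).hasStrictDerivAt
      have h2 := hs.eventually_left_inverse hda
      have h3 := (hΦan a ha).continuousAt.eventually h2
      have h4 : ContinuousAt (fun ζ => Φ (ω * ζ)) a := (hΨan a ha).continuousAt
      have h5 : Tendsto (fun ζ => Φ (ω * ζ)) (𝓝 a) (𝓝 (Φ a)) := by
        have := h4.tendsto
        simp only [hωa, ← hab] at this
        exact this
      have h6 := h5.eventually h2
      filter_upwards [h3, h6, Metric.isOpen_ball.mem_nhds ha] with ζ h7 h8 h9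
      rw [← h7, ← h8, (hfΦ ζ h9).2, (hfΦ _ (hωm 1 ζ h9)).2, mul_pow, hωd, one_mul]
    have hall := hΦan.eqOn_of_preconnected_of_eventuallyEq hΨan hpc ha hloc
    -- evaluate near zero
    have hδm : ((δ / 2 : ℝ) : ℂ) ∈ Metric.ball (0:ℂ) δ := by
      simp only [Metric.mem_ball, dist_zero_right, Complex.norm_real, Real.norm_eq_abs]
      rw [abs_of_pos (by positivity)]; linarith
    have h2 := hall (Metric.ball_subset_ball hδ1 hδm)
    simp only at h2
    rw [hΦh hδm, hΦh (hωm _ _ hδm)] at h2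
    have h3 := hhinj (hsub hδm) (hsub (hωm _ _ hδm)) h2
    have h4 : ((δ / 2 : ℝ) : ℂ) ≠ 0 := by exact_mod_cast (by positivity : (0:ℝ) < δ / 2).ne'
    have h5 : ω = 1 := by
      have : (ω - 1) * ((δ / 2 : ℝ) : ℂ) = 0 := by linear_combination -h3
      rcases mul_eq_zero.1 this with h6 | h6
      · exact sub_eq_zero.1 h6
      · exact absurd h6 h4
    rw [← hωa, h5, one_mul]
  -- local inverses
  have hlocinv : ∀ ζ ∈ Metric.ball (0:ℂ) 1, ∃ ℓ : ℂ → ℂ, DifferentiableAt ℂ ℓ (Φ ζ) ∧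
      ∀ᶠ z in 𝓝 (Φ ζ), ℓ z ∈ Metric.ball (0:ℂ) 1 ∧ Φ (ℓ z) = z := by
    intro ζ hζ
    obtain ⟨c, hc, hcd⟩ := hder ζ hζ
    have hs : HasStrictDerivAt Φ c ζ := hcd.deriv ▸ (hΦan ζ hζ).hasStrictDerivAt
    have h2 := (hs.to_localInverse hc).hasDerivAt
    have h3 := (hs.eventually_left_inverse hc).self_of_nhds
    have h4 := h2.continuousAt.tendsto
    rw [h3] at h4
    exact ⟨_, h2.differentiableAt,
      (h4.eventually (Metric.isOpen_ball.mem_nhds hζ)).and (hs.eventually_right_inverse hc)⟩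
  have hO : IsOpen (Φ '' Metric.ball 0 1) := by
    rw [isOpen_iff_mem_nhds]
    rintro _ ⟨ζ, hζ, rfl⟩
    obtain ⟨ℓ, -, hℓ⟩ := hlocinv ζ hζ
    filter_upwards [hℓ] with z hz using ⟨ℓ z, hz.1, hz.2⟩
  have hUeq : U = Φ '' Metric.ball 0 1 := by
    have hxim : x ∈ Φ '' Metric.ball 0 1 := ⟨0, by simp, hΦ0⟩
    apply Subset.antisymm
    · have hUpre : IsPreconnected U := hU ▸ isPreconnected_connectedComponentIn
      refine hUpre.subset_of_closure_inter_subset hO ⟨x, hxU, hxim⟩ ?_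
      rintro z ⟨hz, hzU⟩
      have hzP := hUP hzU
      rw [hP] at hzP
      obtain ⟨u, hu, hulim⟩ := mem_closure_iff_seq_limit.1 hz
      choose ξ hξ hξu using hu
      have h2 : ∀ n, ξ n ∈ Metric.closedBall (0:ℂ) 1 := fun n => Metric.ball_subset_closedBall (hξ n)
      obtain ⟨ζ, hζ, σ, hσ, hlim⟩ := (isCompact_closedBall (0:ℂ) 1).tendsto_subseq h2
      have hfz : ContinuousAt f z := (hanX z hzP.1).continuousAt
      have h3 : Tendsto (fun n => (f (u (σ n)) - y) / r) atTop (𝓝 ((f z - y) / r)) :=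
        ((hfz.tendsto.comp (hulim.comp hσ.tendsto_atTop)).sub_const y).div_const _
      have h4 : Tendsto (fun n => (ξ (σ n)) ^ d) atTop (𝓝 (ζ ^ d)) := hlim.pow d
      have h5 : ζ ^ d = (f z - y) / r := by
        refine tendsto_nhds_unique h4 (h3.congr fun n => ?_)
        rw [← hξu, hψΦ _ (hξ _)]
      have h6 : ‖ζ‖ ^ d < 1 := by
        rw [← norm_pow, h5]; exact (hmemV _).1 hzP.2
      have h7 : ζ ∈ Metric.ball (0:ℂ) 1 := by
        have : ‖ζ‖ < 1 := by
          by_contra hcon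
          exact absurd h6 (not_lt.2 (one_le_pow₀ (not_lt.1 hcon)))
        simpa using this
      refine ⟨ζ, h7, ?_⟩
      have h8 : Tendsto (fun n => Φ (ξ (σ n))) atTop (𝓝 (Φ ζ)) :=
        (hΦan ζ h7).continuousAt.tendsto.comp hlim
      refine tendsto_nhds_unique h8 ((hulim.comp hσ.tendsto_atTop).congr fun n => ?_)
      simp [hξu]
    · rw [hUx]
      refine (hpc.image _ hΦdiff.continuousOn).subset_connectedComponentIn hxim ?_
      rintro _ ⟨ζ, hζ, rfl⟩
      exact hΦP ζ hζ
  refine ⟨d, hd1, Function.invFunOn Φ (Metric.ball 0 1), ?_, ?_⟩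
  · have hleft : LeftInvOn (Function.invFunOn Φ (Metric.ball 0 1)) Φ (Metric.ball 0 1) :=
      hinj.leftInvOn_invFunOn
    have hb : BijOn Φ (Metric.ball 0 1) U := hUeq ▸ hinj.bijOn_image
    have hinvOn : InvOn (Function.invFunOn Φ (Metric.ball 0 1)) Φ (Metric.ball 0 1) U :=
      hb.invOn_invFunOn
    refine ⟨?_, BijOn.symm hinvOn.symm hb, Φ, hΦdiff, hinvOn.symm⟩
    rw [hUeq]
    rintro _ ⟨ζ, hζ, rfl⟩
    obtain ⟨ℓ, hℓd, hℓ⟩ := hlocinv ζ hζ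
    refine (hℓd.congr_of_eventuallyEq ?_).differentiableWithinAt
    filter_upwards [hℓ] with z hz
    conv_lhs => rw [← hz.2]
    exact hleft hz.1
  · intro z hz
    rw [hUeq] at hz
    obtain ⟨ζ, hζ, rfl⟩ := hz
    rw [hinj.leftInvOn_invFunOn hζ]
    exact hψΦ ζ hζ

theorem biholo_deriv5 {φ : ℂ → ℂ} {U V : Set ℂ} (hU : IsOpen U) (hV : IsOpen V)
    (h : Biholo φ U V) {z : ℂ} (hz : z ∈ U) : deriv φ z ≠ 0 := by
  obtain ⟨h1, h2, φ', h3, h4⟩ := h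
  intro h0
  have h5 : HasDerivAt φ (deriv φ z) z := (h1.differentiableAt (hU.mem_nhds hz)).hasDerivAt
  have h6 : HasDerivAt φ' (deriv φ' (φ z)) (φ z) :=
    (h3.differentiableAt (hV.mem_nhds (h2.mapsTo hz))).hasDerivAt
  have h7 := h6.comp z h5
  have h8 : HasDerivAt (φ' ∘ φ) 1 z := by
    refine (hasDerivAt_id z).congr_of_eventuallyEq ?_
    filter_upwards [hU.mem_nhds hz] with w hw using h4.1 hw
  have := h7.unique h8
  simp [h0] at this

theorem forward5 {X Y : Set ℂ} (hX : IsOpen X)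
    {f : ℂ → ℂ} (hf : DifferentiableOn ℂ f X) (hXY : f '' X ⊆ Y)
    (hB : IsBranchedCovering f X Y) :
      (NowhereConstantOn f X ∧
       (¬ ∃ y : ℂ, IsAsympValIn f X Y y) ∧
       (¬ ∃ y ∈ Y, AccPt y (Filter.principal (f '' {z ∈ X | deriv f z = 0})))) := by
  have hPo : ∀ V, IsOpen V → IsOpen {z ∈ X | f z ∈ V} := fun V hV =>
    hf.continuousOn.isOpen_inter_preimage hX hV
  refine ⟨?_, ?_, ?_⟩
  · rintro U₀ hU₀ ⟨x, hx⟩ hU₀X ⟨c, hc⟩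
    obtain ⟨V, hVo, hyV, hVY, ψ, hψ, hψy, H⟩ := hB (f x) (hXY ⟨x, hU₀X hx, rfl⟩)
    have hxP : x ∈ {z ∈ X | f z ∈ V} := ⟨hU₀X hx, hyV⟩
    obtain ⟨d, hd, φ, hφ, hφf⟩ := H _ ⟨x, hxP, rfl⟩
    have hUo := (hPo V hVo).connectedComponentIn (x := x)
    have hxU := mem_connectedComponentIn hxP
    refine biholo_deriv5 hUo Metric.isOpen_ball hφ hxU ?_
    have : φ =ᶠ[𝓝 x] fun _ => 0 := by
      filter_upwards [hUo.mem_nhds hxU, hU₀.mem_nhds hx] with z hz hz'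
      have h1 := hφf z hz
      rw [hc z hz', ← hc x hx, hψy] at h1
      exact (pow_eq_zero_iff (by omega)).1 h1.symm
    rw [this.deriv_eq]
    simp
  · rintro ⟨y, hy, γ, hγc, hγX, hγK, hlim⟩
    obtain ⟨V, hVo, hyV, hVY, ψ, hψ, hψy, H⟩ := hB y hy
    have hnb : (𝓝[Ico (0:ℝ) 1] 1) = 𝓝[<] 1 := by
      rw [nhdsWithin_Ico_eq_nhdsLT one_pos]
    rw [hnb] at hlim
    have h1 := hlim.eventually (hVo.mem_nhds hyV)
    obtain ⟨a, ha, haV⟩ := (mem_nhdsLT_iff_exists_Ioo_subset' (one_pos (α := ℝ))).1 h1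
    obtain ⟨t₁, ht₁⟩ : ∃ t₁, t₁ = (max a 0 + 1) / 2 := ⟨_, rfl⟩
    have hm : max a 0 < 1 := max_lt ha one_pos
    have h2 : 0 ≤ t₁ ∧ a < t₁ ∧ t₁ < 1 := by
      have := le_max_left a 0
      have := le_max_right a 0
      refine ⟨?_, ?_, ?_⟩ <;> linarith
    have hγP : ∀ t ∈ Ico t₁ 1, γ t ∈ {z ∈ X | f z ∈ V} := fun t ht =>
      ⟨hγX t ⟨h2.1.trans ht.1, ht.2⟩, haV ⟨h2.2.1.trans_le ht.1, ht.2⟩⟩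
    have hxP := hγP t₁ ⟨le_rfl, h2.2.2⟩
    obtain ⟨d, hd, φ, ⟨hφd, hφb, φ', hφ'd, hφ'⟩, hφf⟩ := H _ ⟨γ t₁, hxP, rfl⟩
    have hγU : ∀ t ∈ Ico t₁ 1, γ t ∈ connectedComponentIn {z ∈ X | f z ∈ V} (γ t₁) := by
      intro t ht
      have h3 : IsPreconnected (γ '' Ico t₁ 1) :=
        isPreconnected_Ico.image _ (hγc.mono (Ico_subset_Ico_left h2.1))
      refine h3.subset_connectedComponentIn ⟨t₁, ⟨le_rfl, h2.2.2⟩, rfl⟩ ?_ ⟨t, ht, rfl⟩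
      rintro _ ⟨t, ht, rfl⟩
      exact hγP t ht
    have hcb : Metric.closedBall (0:ℂ) (1/2) ⊆ Metric.ball 0 1 :=
      Metric.closedBall_subset_ball (by norm_num)
    have hKc : IsCompact (φ' '' Metric.closedBall (0:ℂ) (1/2)) :=
      (isCompact_closedBall _ _).image_of_continuousOn (hφ'd.continuousOn.mono hcb)
    have hKX : φ' '' Metric.closedBall (0:ℂ) (1/2) ⊆ X := by
      rintro _ ⟨ζ, hζ, rfl⟩
      obtain ⟨z, hz, hzζ⟩ := hφb.surjOn (hcb hζ)
      rw [← hzζ, hφ'.1 hz]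
      exact (connectedComponentIn_subset _ _ hz).1
    obtain ⟨t₀, ht₀, hK⟩ := hγK _ hKX hKc
    have hψc : ContinuousAt ψ y := hψ.1.continuousOn.continuousAt (hVo.mem_nhds hyV)
    have h4 : Tendsto (fun t => ψ (f (γ t))) (𝓝[<] 1) (𝓝 0) := by
      have := hψc.tendsto.comp hlim
      rwa [hψy] at this
    have h5 := h4.eventually (Metric.ball_mem_nhds (0:ℂ) (show (0:ℝ) < (1/2) ^ d by positivity))
    have h6 : ∀ᶠ t in 𝓝[<] (1:ℝ), t ∈ Ioo (max t₀ t₁) 1 := Ioo_mem_nhdsLT (max_lt ht₀.2 h2.2.2)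
    obtain ⟨t, ht, ht'⟩ := (h5.and h6).exists
    have h7 : t₀ < t := (le_max_left _ _).trans_lt ht'.1
    have h8 : t₁ < t := (le_max_right _ _).trans_lt ht'.1
    have h9 := hγU t ⟨h8.le, ht'.2⟩
    refine hK t h7.le ht'.2 ⟨φ (γ t), ?_, hφ'.1 h9⟩
    rw [hφf _ h9, dist_zero_right, norm_pow] at ht
    simpa using (lt_of_pow_lt_pow_left₀ d (by norm_num) ht).le
  · rintro ⟨y, hy, hacc⟩
    obtain ⟨V, hVo, hyV, hVY, ψ, hψ, hψy, H⟩ := hB y hy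
    obtain ⟨_, ⟨hwy, z, ⟨hzX, hz0⟩, rfl⟩, hwV⟩ :=
      ((accPt_iff_frequently.1 hacc).and_eventually (hVo.mem_nhds hyV)).exists
    have hzP : z ∈ {z ∈ X | f z ∈ V} := ⟨hzX, hwV⟩
    obtain ⟨d, hd, φ, hφ, hφf⟩ := H _ ⟨z, hzP, rfl⟩
    have hUo := (hPo V hVo).connectedComponentIn (x := z)
    have hzU := mem_connectedComponentIn hzP
    have h1 := biholo_deriv5 hUo Metric.isOpen_ball hφ hzU
    have h2 : HasDerivAt f 0 z := hz0 ▸ (hf.differentiableAt (hX.mem_nhds hzX)).hasDerivAt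
    have h3 : HasDerivAt ψ (deriv ψ (f z)) (f z) :=
      (hψ.1.differentiableAt (hVo.mem_nhds hwV)).hasDerivAt
    have h4 := h3.comp z h2
    have h5 : HasDerivAt φ (deriv φ z) z :=
      (hφ.1.differentiableAt (hUo.mem_nhds hzU)).hasDerivAt
    have h6 := h5.pow d
    have h7 : HasDerivAt (ψ ∘ f) _ z := h6.congr_of_eventuallyEq (by
      filter_upwards [hUo.mem_nhds hzU] with w hw using hφf w hw)
    have h8 := h4.unique h7
    have hd0 : (d : ℂ) ≠ 0 := by exact_mod_cast (by omega : d ≠ 0)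
    have h9 : φ z ^ (d - 1) = 0 := by
      simpa [hd0, h1] using h8.symm
    have h10 : φ z = 0 := eq_zero_of_pow_eq_zero h9
    have h11 : ψ (f z) = ψ y := by
      rw [hφf z hzU, h10, hψy, zero_pow (by omega)]
    exact hwy (hψ.2.1.injOn hwV hyV h11)

/-- `f : X → Y` is a branched covering iff it is nowhere constant,
has no asymptotic value in `Y`, and its set of critical values has no accumulation
point in `Y`. -/
theorem stmt_5 (X Y : Set ℂ) (hX : IsOpen X) (hY : IsOpen Y)
    (f : ℂ → ℂ) (hf : DifferentiableOn ℂ f X) (hXY : f '' X ⊆ Y) :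
    IsBranchedCovering f X Y ↔
      (NowhereConstantOn f X ∧
       (¬ ∃ y : ℂ, IsAsympValIn f X Y y) ∧
       (¬ ∃ y ∈ Y, AccPt y (Filter.principal (f '' {z ∈ X | deriv f z = 0})))) := by
  exact ⟨fun h => forward5 hX hf hXY h, fun ⟨h1, h2, h3⟩ => backward5 hX hY hf h1 h2 h3⟩
end

section
/- Let X and Y be open subsets of ℂ and f : X → ℂ holomorphic, nowhere constant, with f(X) ⊆ Y, and proper as a map X → Y (the preimage in X of every compact subset of Y is compact). Then f : X → Y is a branched covering. Moreover, if Y is connected, then f has finite degree: there exists d ∈ ℕ such that every y ∈ Y which is not a critical value of f has exactly d preimages in X. -/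
open Filter Topology in
theorem aux_local_form (f : ℂ → ℂ) (x : ℂ) (hf : AnalyticAt ℂ f x)
    (hne : ¬ ∀ᶠ z in 𝓝 x, f z = f x) (W : Set ℂ) (hW : W ∈ 𝓝 x) :
    ∃ (d : ℕ) (e : OpenPartialHomeomorph ℂ ℂ), 1 ≤ d ∧ x ∈ e.source ∧ e.source ⊆ W ∧ e x = 0 ∧
      DifferentiableOn ℂ e e.source ∧ DifferentiableOn ℂ e.symm e.target ∧
      ∀ z ∈ e.source, f z - f x = e z ^ d := by
  have hF : AnalyticAt ℂ (fun z => f z - f x) x := hf.sub analyticAt_const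
  have hF0 : ¬ ∀ᶠ z in 𝓝 x, (fun z => f z - f x) z = 0 := by
    simpa [sub_eq_zero] using hne
  obtain ⟨n, g, hg, hgx, hfg⟩ := hF.exists_eventuallyEq_pow_smul_nonzero_iff.2 hF0
  have hn : n ≠ 0 := by
    rintro rfl
    have := hfg.self_of_nhds
    simp at this
    exact hgx this.symm
  obtain ⟨c, hc⟩ := IsAlgClosed.exists_pow_nat_eq (g x) (Nat.pos_of_ne_zero hn)
  have hc0 : c ≠ 0 := by
    rintro rfl
    rw [zero_pow hn] at hc
    exact hgx hc.symm
  set k : ℂ → ℂ := fun z => c * Complex.exp (Complex.log (g z / g x) / n) with hk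
  have hkA : AnalyticAt ℂ k x := by
    refine analyticAt_const.mul (AnalyticAt.cexp ?_)
    refine AnalyticAt.div_const (AnalyticAt.clog (hg.div_const) ?_)
    simp [div_self hgx]
  have hkx : k x = c := by simp [hk, div_self hgx]
  set G : ℂ → ℂ := fun z => (z - x) * k z with hG
  have hGA : AnalyticAt ℂ G x := (analyticAt_id.sub analyticAt_const).mul hkA
  have hGd : HasDerivAt G c x := by
    have := ((hasDerivAt_id x).sub_const x).mul hkA.differentiableAt.hasDerivAt
    exact this.congr_deriv (by simp [hkx])
  have hGd' : deriv G x ≠ 0 := by rw [hGd.deriv]; exact hc0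
  let e0 := (hGA.hasStrictDerivAt.hasStrictFDerivAt_equiv hGd').toOpenPartialHomeomorph G
  have he0 : (e0 : ℂ → ℂ) = G := rfl
  have hx0 : x ∈ e0.source :=
    (hGA.hasStrictDerivAt.hasStrictFDerivAt_equiv hGd').mem_toOpenPartialHomeomorph_source
  have hev : ∀ᶠ z in 𝓝 x, AnalyticAt ℂ G z ∧ deriv G z ≠ 0 ∧ f z - f x = G z ^ n ∧ z ∈ W := by
    filter_upwards [hGA.eventually_analyticAt, hGA.deriv.continuousAt.eventually_ne hGd', hfg,
      hg.continuousAt.eventually_ne hgx, hW] with z h1 h2 h3 h4 h5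
    refine ⟨h1, h2, ?_, h5⟩
    rw [h3, hG]
    simp only [smul_eq_mul, mul_pow, hk]
    rw [← Complex.exp_nat_mul, mul_div_cancel₀ _ (by exact_mod_cast hn),
      Complex.exp_log (div_ne_zero h4 hgx), hc, mul_div_cancel₀ _ hgx]
  obtain ⟨O, hO, hOo, hxO⟩ := eventually_nhds_iff.1 hev
  refine ⟨n, e0.restrOpen O hOo, Nat.pos_of_ne_zero hn, ?_, ?_, ?_, ?_, ?_, ?_⟩
  · exact ⟨hx0, hxO⟩
  · intro z hz
    exact (hO z hz.2).2.2.2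
  · change G x = 0
    simp [hG]
  · intro z hz
    exact (hO z hz.2).1.differentiableAt.differentiableWithinAt
  · intro u hu
    have hz := (e0.restrOpen O hOo).map_target hu
    have h := hO _ hz.2
    exact ((e0.restrOpen O hOo).hasDerivAt_symm hu h.2.1
      h.1.differentiableAt.hasDerivAt).differentiableAt.differentiableWithinAt
  · intro z hz
    exact (hO z hz.2).2.2.1

theorem aux_roots (n : ℕ) (hn : 1 ≤ n) (a : ℂ) (ha : a ≠ 0) :
    ∃ s : Finset ℂ, s.card = n ∧ ∀ z, z ∈ s ↔ z ^ n = a := by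
  obtain ⟨α, hα⟩ := IsAlgClosed.exists_pow_nat_eq a hn
  have hζ := Complex.isPrimitiveRoot_exp n (by omega)
  classical
  refine ⟨(Polynomial.nthRoots n a).toFinset, ?_, ?_⟩
  · rw [Multiset.toFinset_card_of_nodup (hζ.nthRoots_nodup ha), hζ.card_nthRoots, if_pos ⟨α, hα⟩]
  · intro z
    rw [Multiset.mem_toFinset, Polynomial.mem_nthRoots hn]

open Filter Topology in
theorem aux_struct (X Y : Set ℂ) (hX : IsOpen X) (hY : IsOpen Y)
    (f : ℂ → ℂ) (hf : DifferentiableOn ℂ f X)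
    (hnc : NowhereConstantOn f X)
    (hproper : ∀ K : Set ℂ, K ⊆ Y → IsCompact K → IsCompact {z ∈ X | f z ∈ K})
    (y : ℂ) (hy : y ∈ Y) :
    ∃ (S : Finset ℂ) (d : ℂ → ℕ) (e : ℂ → OpenPartialHomeomorph ℂ ℂ) (r : ℝ), 0 < r ∧
      Metric.ball y r ⊆ Y ∧ (∀ z, z ∈ S ↔ z ∈ X ∧ f z = y) ∧
      (∀ x ∈ S, ∀ x' ∈ S, ∀ z, z ∈ (e x).source → z ∈ (e x').source → x = x') ∧
      (∀ z ∈ X, f z ∈ Metric.ball y r → ∃ x ∈ S, z ∈ (e x).source) ∧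
      ∀ x ∈ S, 1 ≤ d x ∧ x ∈ (e x).source ∧ (e x).source ⊆ X ∧ e x x = 0 ∧
        DifferentiableOn ℂ (e x) (e x).source ∧ DifferentiableOn ℂ (e x).symm (e x).target ∧
        (∀ z ∈ (e x).source, f z - y = e x z ^ d x) ∧
        ∀ u : ℂ, ‖u‖ ^ d x < r → u ∈ (e x).target := by
  have hloc : ∀ x ∈ X, ∀ W ∈ 𝓝 x, ∃ (d : ℕ) (e : OpenPartialHomeomorph ℂ ℂ),
      1 ≤ d ∧ x ∈ e.source ∧ e.source ⊆ W ∧ e x = 0 ∧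
      DifferentiableOn ℂ e e.source ∧ DifferentiableOn ℂ e.symm e.target ∧
      ∀ z ∈ e.source, f z - f x = e z ^ d := by
    intro x hx W hW
    refine aux_local_form f x (hf.analyticAt (hX.mem_nhds hx)) ?_ W hW
    intro h
    obtain ⟨O, hO, hOo, hxO⟩ := eventually_nhds_iff.1 (h.and (hX.mem_nhds hx))
    exact hnc O hOo ⟨x, hxO⟩ (fun z hz => (hO z hz).2) ⟨f x, fun z hz => (hO z hz).1⟩
  -- the fibre is finite
  have hfin : {z ∈ X | f z ∈ ({y} : Set ℂ)}.Finite := by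
    have hc := hproper {y} (by simpa using hy) isCompact_singleton
    have : ∀ x, ∃ N : Set ℂ, x ∈ {z ∈ X | f z ∈ ({y} : Set ℂ)} →
        N ∈ 𝓝 x ∧ ∀ z ∈ N, f z = y → z = x := by
      intro x
      by_cases hx : x ∈ {z ∈ X | f z ∈ ({y} : Set ℂ)}
      · obtain ⟨d, e, hd, hxe, -, he0, -, -, heq⟩ := hloc x hx.1 Set.univ univ_mem
        refine ⟨e.source, fun _ => ⟨e.open_source.mem_nhds hxe, fun z hz hzy => ?_⟩⟩
        have h1 := heq z hz
        have h2 : f x = y := hx.2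
        rw [hzy, h2, sub_self] at h1
        have h3 : e z = 0 := eq_zero_of_pow_eq_zero h1.symm
        exact e.injOn hz hxe (h3.trans he0.symm)
      · exact ⟨Set.univ, fun h => absurd h hx⟩
    choose N hN using this
    obtain ⟨t, ht, hcov⟩ := hc.elim_nhds_subcover N (fun x hx => (hN x hx).1)
    refine t.finite_toSet.subset ?_
    intro z hz
    obtain ⟨x, hx, hzx⟩ := Set.mem_iUnion₂.1 (hcov hz)
    rw [(hN x (ht x hx)).2 z hzx hz.2]
    exact hx
  obtain ⟨W, hW, hdisj⟩ := hfin.t2_separation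
  have hch : ∀ x, ∃ (d : ℕ) (e : OpenPartialHomeomorph ℂ ℂ), x ∈ X → 
      1 ≤ d ∧ x ∈ e.source ∧ e.source ⊆ W x ∩ X ∧ e x = 0 ∧
      DifferentiableOn ℂ e e.source ∧ DifferentiableOn ℂ e.symm e.target ∧
      ∀ z ∈ e.source, f z - f x = e z ^ d := by
    intro x
    by_cases hx : x ∈ X
    · obtain ⟨d, e, h⟩ := hloc x hx (W x ∩ X)
        (inter_mem ((hW x).2.mem_nhds (hW x).1) (hX.mem_nhds hx))
      exact ⟨d, e, fun _ => h⟩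
    · exact ⟨0, OpenPartialHomeomorph.refl ℂ, fun h => absurd h hx⟩
  choose d e he using hch
  have hS : ∀ z, z ∈ hfin.toFinset ↔ z ∈ X ∧ f z = y := by intro z; simp
  set S := hfin.toFinset
  have e1 : ∀ᶠ r in 𝓝[>] (0:ℝ), Metric.ball y r ⊆ Y := by
    obtain ⟨ε, hε, h⟩ := Metric.isOpen_iff.1 hY y hy
    filter_upwards [Ioo_mem_nhdsGT hε] with r hr
    exact (Metric.ball_subset_ball hr.2.le).trans h
  have e2 : ∀ᶠ r in 𝓝[>] (0:ℝ), ∀ x ∈ S, ∀ u : ℂ, ‖u‖ ^ d x < r → u ∈ (e x).target := by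
    rw [Filter.eventually_all_finset]
    intro x hx
    obtain ⟨hxX, hxy⟩ := (hS x).1 hx
    obtain ⟨hd, hxs, -, hx0, -⟩ := he x hxX
    have h0 : (0:ℂ) ∈ (e x).target := hx0 ▸ (e x).map_source hxs
    obtain ⟨ε, hε, h⟩ := Metric.isOpen_iff.1 (e x).open_target 0 h0
    filter_upwards [Ioo_mem_nhdsGT (pow_pos hε (d x))] with r hr u hu
    apply h
    rw [mem_ball_zero_iff]
    exact lt_of_pow_lt_pow_left₀ _ hε.le (hu.trans hr.2)
  have e3 : ∀ᶠ r in 𝓝[>] (0:ℝ), ∀ z ∈ X, f z ∈ Metric.ball y r → ∃ x ∈ S, z ∈ (e x).source := by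
    obtain ⟨ε, hε, h⟩ := Metric.nhds_basis_closedBall.mem_iff.1 (hY.mem_nhds hy)
    have hc := hproper _ h (isCompact_closedBall y ε)
    have hC := hc.diff (t := ⋃ x ∈ S, (e x).source)
      (isOpen_biUnion fun x _ => (e x).open_source)
    have hfC := hC.image_of_continuousOn
      (hf.continuousOn.mono (fun z hz => hz.1.1))
    have hyC : y ∈ (f '' ({z ∈ X | f z ∈ Metric.closedBall y ε} \ ⋃ x ∈ S, (e x).source))ᶜ := by
      rintro ⟨z, ⟨hz1, hz2⟩, hzy⟩
      exact hz2 (Set.mem_iUnion₂.2 ⟨z, (hS z).2 ⟨hz1.1, hzy⟩, (he z hz1.1).2.1⟩)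
    obtain ⟨δ, hδ, h'⟩ := Metric.isOpen_iff.1 hfC.isClosed.isOpen_compl y hyC
    filter_upwards [Ioo_mem_nhdsGT hε, Ioo_mem_nhdsGT hδ] with r hr hr' z hz hzr
    by_contra hcon
    refine h' (Metric.ball_subset_ball hr'.2.le hzr) ⟨z, ⟨⟨hz, ?_⟩, ?_⟩, rfl⟩
    · exact Metric.ball_subset_closedBall (Metric.ball_subset_ball hr.2.le hzr)
    · simpa using hcon
  obtain ⟨r, h1, h2, h3, hr⟩ := (e1.and (e2.and (e3.and self_mem_nhdsWithin))).exists
  refine ⟨S, d, e, r, hr, h1, hS, ?_, h3, ?_⟩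
  · intro x hx x' hx' z hz hz'
    have hx1 := (hS x).1 hx
    have hx1' := (hS x').1 hx'
    by_contra hne
    exact Set.disjoint_left.1 (hdisj (show x ∈ _ from hx1) (show x' ∈ _ from hx1') hne)
      ((he x hx1.1).2.2.1 hz).1 ((he x' hx1'.1).2.2.1 hz').1
  · intro x hx
    obtain ⟨hxX, hxy⟩ := (hS x).1 hx
    obtain ⟨a1, a2, a3, a4, a5, a6, a7⟩ := he x hxX
    refine ⟨a1, a2, fun z hz => (a3 hz).2, a4, a5, a6, ?_, h2 x hx⟩
    rw [← hxy]; exact a7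

theorem aux_branched (X Y : Set ℂ) (hX : IsOpen X) (hY : IsOpen Y)
    (f : ℂ → ℂ) (hf : DifferentiableOn ℂ f X)
    (hnc : NowhereConstantOn f X)
    (hproper : ∀ K : Set ℂ, K ⊆ Y → IsCompact K → IsCompact {z ∈ X | f z ∈ K}) :
    IsBranchedCovering f X Y := by
  intro y hy
  obtain ⟨S, d, e, r, hr, hball, hS, hdisj, hcov, H⟩ := aux_struct X Y hX hY f hf hnc hproper y hy
  have hrC : (r : ℂ) ≠ 0 := by exact_mod_cast hr.ne'
  refine ⟨Metric.ball y r, Metric.isOpen_ball, Metric.mem_ball_self hr, hball,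
    fun w => (w - y) / r, ?_, by simp, ?_⟩
  · have hinv : Set.InvOn (fun u : ℂ => y + r * u) (fun w => (w - y) / r)
        (Metric.ball y r) (Metric.ball (0:ℂ) 1) := by
      constructor
      · intro w _
        simp only
        field_simp
        ring
      · intro u _
        simp only
        field_simp
        ring
    refine ⟨by fun_prop, hinv.bijOn ?_ ?_, fun u => y + r * u, by fun_prop, hinv⟩
    · intro w hw
      rw [mem_ball_iff_norm] at hw
      rw [mem_ball_zero_iff, norm_div, Complex.norm_real, Real.norm_of_nonneg hr.le, div_lt_one hr]
      exact hw
    · intro u hu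
      rw [mem_ball_zero_iff] at hu
      rw [mem_ball_iff_norm, add_sub_cancel_left, norm_mul, Complex.norm_real,
        Real.norm_of_nonneg hr.le]
      nlinarith
  · rintro U ⟨p, hp, rfl⟩
    obtain ⟨x, hxS, hpx⟩ := hcov p hp.1 hp.2
    obtain ⟨hd, hxs, hsX, hx0, hde, hdi, heq, htar⟩ := H x hxS
    obtain ⟨ρ, hρ, hρd⟩ : ∃ ρ : ℝ, 0 < ρ ∧ ρ ^ d x = r :=
      ⟨r ^ ((d x : ℝ)⁻¹), Real.rpow_pos_of_pos hr _,
        Real.rpow_inv_natCast_pow hr.le (by omega)⟩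
    have hρC : (ρ : ℂ) ≠ 0 := by exact_mod_cast hρ.ne'
    have hbt : Metric.ball (0:ℂ) ρ ⊆ (e x).target := by
      intro u hu
      rw [mem_ball_zero_iff] at hu
      apply htar
      rw [← hρd]
      exact pow_lt_pow_left₀ hu (norm_nonneg _) (by omega)
    have hmem : ∀ z ∈ (e x).source, (f z ∈ Metric.ball y r ↔ ‖e x z‖ < ρ) := by
      intro z hz
      rw [mem_ball_iff_norm, heq z hz, norm_pow, ← hρd]
      exact pow_lt_pow_iff_left₀ (norm_nonneg _) hρ.le (by omega)
    have hT : ∀ u ∈ Metric.ball (0:ℂ) ρ, (e x).symm u ∈ (e x).source ∧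
        f ((e x).symm u) ∈ Metric.ball y r := by
      intro u hu
      have h1 := (e x).map_target (hbt hu)
      refine ⟨h1, (hmem _ h1).2 ?_⟩
      rw [(e x).right_inv (hbt hu)]
      simpa using hu
    have hU : ∀ z, z ∈ connectedComponentIn {z ∈ X | f z ∈ Metric.ball y r} p ↔
        z ∈ (e x).source ∧ ‖e x z‖ < ρ := by
      intro z
      constructor
      · intro hz
        have hsub := connectedComponentIn_subset {z ∈ X | f z ∈ Metric.ball y r} p
        have hzs : z ∈ (e x).source := by
          refine (isPreconnected_connectedComponentIn.subset_left_of_subset_union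
            (u := (e x).source) (v := ⋃ x' ∈ {x' | x' ∈ S ∧ x' ≠ x}, (e x').source)
            (e x).open_source (isOpen_biUnion fun x' _ => (e x').open_source) ?_ ?_ ?_) hz
          · rw [Set.disjoint_left]
            intro a ha ha'
            obtain ⟨x', hx', hax'⟩ := Set.mem_iUnion₂.1 ha'
            exact hx'.2 (hdisj x' hx'.1 x hxS a hax' ha)
          · intro a ha
            obtain ⟨x', hx', hax'⟩ := hcov a (hsub ha).1 (hsub ha).2
            by_cases hxx : x' = x
            · left; rwa [← hxx]
            · right; exact Set.mem_iUnion₂.2 ⟨x', ⟨hx', hxx⟩, hax'⟩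
          · exact ⟨p, mem_connectedComponentIn hp, hpx⟩
        exact ⟨hzs, (hmem z hzs).1 (hsub hz).2⟩
      · rintro ⟨hz, hzρ⟩
        have hpre : IsPreconnected ((e x).symm '' Metric.ball (0:ℂ) ρ) :=
          (convex_ball (0:ℂ) ρ).isPreconnected.image _ (hdi.continuousOn.mono hbt)
        refine hpre.subset_connectedComponentIn (x := p) ?_ ?_ ?_
        · exact ⟨e x p, by simpa using (hmem p hpx).1 hp.2, (e x).left_inv hpx⟩
        · rintro _ ⟨u, hu, rfl⟩
          exact ⟨hsX (hT u hu).1, (hT u hu).2⟩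
        · exact ⟨e x z, by simpa using hzρ, (e x).left_inv hz⟩
    have hscale : ∀ u ∈ Metric.ball (0:ℂ) 1, (ρ : ℂ) * u ∈ Metric.ball (0:ℂ) ρ := by
      intro u hu
      rw [mem_ball_zero_iff] at hu ⊢
      rw [norm_mul, Complex.norm_real, Real.norm_of_nonneg hρ.le]
      nlinarith
    have hinv : Set.InvOn (fun u : ℂ => (e x).symm (ρ * u)) (fun z => e x z / ρ)
        (connectedComponentIn {z ∈ X | f z ∈ Metric.ball y r} p) (Metric.ball (0:ℂ) 1) := by
      constructor
      · intro z hz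
        simp only
        rw [mul_div_cancel₀ _ hρC, (e x).left_inv ((hU z).1 hz).1]
      · intro u hu
        simp only
        rw [(e x).right_inv (hbt (hscale u hu)), mul_div_cancel_left₀ _ hρC]
    refine ⟨d x, hd, fun z => e x z / ρ, ⟨?_, hinv.bijOn ?_ ?_, fun u => (e x).symm (ρ * u), ?_, hinv⟩,
      ?_⟩
    · exact (hde.mono fun z hz => ((hU z).1 hz).1).div_const _
    · intro z hz
      rw [mem_ball_zero_iff, norm_div, Complex.norm_real, Real.norm_of_nonneg hρ.le, div_lt_one hρ]
      exact ((hU z).1 hz).2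
    · intro u hu
      refine (hU _).2 ⟨(hT _ (hscale u hu)).1, ?_⟩
      rw [(e x).right_inv (hbt (hscale u hu))]
      simpa using hscale u hu
    · exact hdi.comp (by fun_prop) fun u hu => hbt (hscale u hu)
    · intro z hz
      simp only
      rw [heq z ((hU z).1 hz).1, div_pow, ← hρd]
      push_cast
      rfl

open Topology in
theorem aux_count (X Y : Set ℂ) (hX : IsOpen X) (hY : IsOpen Y)
    (f : ℂ → ℂ) (hf : DifferentiableOn ℂ f X)
    (hnc : NowhereConstantOn f X)
    (hproper : ∀ K : Set ℂ, K ⊆ Y → IsCompact K → IsCompact {z ∈ X | f z ∈ K})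
    (y : ℂ) (hy : y ∈ Y) : ∃ (N : ℕ) (r : ℝ), 0 < r ∧ ∀ w ∈ Metric.ball y r,
      (w ≠ y ∨ y ∉ f '' {z ∈ X | deriv f z = 0}) →
      ∃ s : Finset ℂ, s.card = N ∧ ∀ z : ℂ, z ∈ s ↔ (z ∈ X ∧ f z = w) := by
  classical
  obtain ⟨S, d, e, r, hr, hball, hS, hdisj, hcov, H⟩ := aux_struct X Y hX hY f hf hnc hproper y hy
  refine ⟨∑ x ∈ S, d x, r, hr, fun w hw hor => ?_⟩
  by_cases hwy : w = y
  · subst hwy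
    have hcrit := hor.resolve_left (by simp)
    refine ⟨S, ?_, hS⟩
    rw [Finset.card_eq_sum_ones]
    refine Finset.sum_congr rfl fun x hx => ?_
    obtain ⟨hd, hxs, hsX, hx0, hde, hdi, heq, htar⟩ := H x hx
    by_contra hne
    apply hcrit
    refine ⟨x, ⟨((hS x).1 hx).1, ?_⟩, ((hS x).1 hx).2⟩
    have hnh : (e x).source ∈ 𝓝 x := (e x).open_source.mem_nhds hxs
    have h1 : HasDerivAt (fun z => e x z ^ d x + w) (d x * e x x ^ (d x - 1) * deriv (e x) x) x :=
      ((hde.differentiableAt hnh).hasDerivAt.pow (d x)).add_const w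
    have h2 : f =ᶠ[𝓝 x] fun z => e x z ^ d x + w := by
      filter_upwards [hnh] with z hz
      rw [← heq z hz]; ring
    rw [h2.deriv_eq, h1.deriv, hx0, zero_pow (by omega)]
    simp
  · have hroots : ∀ x, ∃ s : Finset ℂ, x ∈ S → s.card = d x ∧ ∀ u, u ∈ s ↔ u ^ d x = w - y := by
      intro x
      by_cases hx : x ∈ S
      · obtain ⟨s, hs⟩ := aux_roots (d x) (H x hx).1 (w - y) (sub_ne_zero.2 hwy)
        exact ⟨s, fun _ => hs⟩
      · exact ⟨∅, fun h => absurd h hx⟩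
    choose R hR using hroots
    have hRt : ∀ x ∈ S, ∀ u ∈ R x, u ∈ (e x).target := by
      intro x hx u hu
      apply (H x hx).2.2.2.2.2.2.2
      rw [← norm_pow, ((hR x hx).2 u).1 hu]
      exact mem_ball_iff_norm.1 hw
    refine ⟨S.biUnion fun x => (R x).image (e x).symm, ?_, ?_⟩
    · rw [Finset.card_biUnion]
      · refine Finset.sum_congr rfl fun x hx => ?_
        rw [Finset.card_image_of_injOn, (hR x hx).1]
        exact (e x).symm.injOn.mono fun u hu => hRt x hx u hu
      · intro x hx x' hx' hne
        rw [Function.onFun, Finset.disjoint_left]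
        intro z hz hz'
        obtain ⟨u, hu, rfl⟩ := Finset.mem_image.1 hz
        obtain ⟨u', hu', h'⟩ := Finset.mem_image.1 hz'
        refine hne (hdisj x hx x' hx' _ ((e x).map_target (hRt x hx u hu)) ?_)
        rw [← h']
        exact (e x').map_target (hRt x' hx' u' hu')
    · intro z
      simp only [Finset.mem_biUnion, Finset.mem_image]
      constructor
      · rintro ⟨x, hx, u, hu, rfl⟩
        obtain ⟨hd, hxs, hsX, hx0, hde, hdi, heq, htar⟩ := H x hx
        have hut := hRt x hx u hu
        have hz := (e x).map_target hut
        refine ⟨hsX hz, ?_⟩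
        have := heq _ hz
        rw [(e x).right_inv hut, ((hR x hx).2 u).1 hu] at this
        exact sub_left_injective this
      · rintro ⟨hzX, rfl⟩
        obtain ⟨x, hx, hzx⟩ := hcov z hzX hw
        obtain ⟨hd, hxs, hsX, hx0, hde, hdi, heq, htar⟩ := H x hx
        exact ⟨x, hx, e x z, ((hR x hx).2 _).2 (heq z hzx).symm, (e x).left_inv hzx⟩

open Filter Topology in
theorem aux_degree (X Y : Set ℂ) (hX : IsOpen X) (hY : IsOpen Y)
    (f : ℂ → ℂ) (hf : DifferentiableOn ℂ f X)
    (hnc : NowhereConstantOn f X)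
    (hproper : ∀ K : Set ℂ, K ⊆ Y → IsCompact K → IsCompact {z ∈ X | f z ∈ K})
    (hYc : IsConnected Y) : ∃ d : ℕ, ∀ y ∈ Y,
        y ∉ f '' {z ∈ X | deriv f z = 0} →
        ∃ s : Finset ℂ, s.card = d ∧ ∀ z : ℂ, z ∈ s ↔ (z ∈ X ∧ f z = y) := by
  have : ∀ y, ∃ (N : ℕ) (r : ℝ), y ∈ Y → 0 < r ∧ ∀ w ∈ Metric.ball y r,
      (w ≠ y ∨ y ∉ f '' {z ∈ X | deriv f z = 0}) →
      ∃ s : Finset ℂ, s.card = N ∧ ∀ z : ℂ, z ∈ s ↔ (z ∈ X ∧ f z = w) := by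
    intro y
    by_cases hy : y ∈ Y
    · obtain ⟨N, r, h⟩ := aux_count X Y hX hY f hf hnc hproper y hy
      exact ⟨N, r, fun _ => h⟩
    · exact ⟨0, 0, fun h => absurd h hy⟩
  choose N r H using this
  have hloc : ∀ y ∈ Y, ∀ y' ∈ Y, y' ∈ Metric.ball y (r y) → N y' = N y := by
    intro y hy y' hy' hyy
    by_cases hne : y' = y
    · rw [hne]
    have ev : ∀ᶠ w in 𝓝[≠] y', w ∈ Metric.ball y (r y) ∧ w ≠ y ∧ w ∈ Metric.ball y' (r y') ∧
        w ≠ y' := by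
      have h1 : ∀ᶠ w in 𝓝 y', w ∈ Metric.ball y (r y) ∧ w ≠ y ∧ w ∈ Metric.ball y' (r y') :=
        Filter.Eventually.and (Metric.isOpen_ball.mem_nhds hyy)
          ((eventually_ne_nhds hne).and (Metric.ball_mem_nhds y' (H y' hy').1))
      filter_upwards [h1.filter_mono nhdsWithin_le_nhds, self_mem_nhdsWithin] with w hw hw'
      exact ⟨hw.1, hw.2.1, hw.2.2, hw'⟩
    obtain ⟨w, w1, w2, w3, w4⟩ := ev.exists
    obtain ⟨s, hs, hs'⟩ := (H y hy).2 w w1 (Or.inl w2)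
    obtain ⟨t, ht, ht'⟩ := (H y' hy').2 w w3 (Or.inl w4)
    rw [← hs, ← ht]
    congr 1
    ext z
    rw [hs', ht']
  have hcont : ContinuousOn N Y := by
    intro y hy
    refine ContinuousWithinAt.congr_of_eventuallyEq (continuousWithinAt_const (b := N y)) ?_ rfl
    filter_upwards [self_mem_nhdsWithin,
      mem_nhdsWithin_of_mem_nhds (Metric.ball_mem_nhds y (H y hy).1)] with y' h1 h2
    exact hloc y hy y' h1 h2
  obtain ⟨y0, hy0⟩ := hYc.nonempty
  refine ⟨N y0, fun y hy hcrit => ?_⟩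
  rw [hYc.isPreconnected.constant hcont hy0 hy]
  exact (H y hy).2 y (Metric.mem_ball_self (H y hy).1) (Or.inr hcrit)

/-- a nowhere constant proper holomorphic map `f : X → Y` is a branched
covering, and if `Y` is connected it has finite degree: some `d ∈ ℕ` such that every
non-critical value `y ∈ Y` has exactly `d` preimages in `X`. -/
theorem stmt_6 (X Y : Set ℂ) (hX : IsOpen X) (hY : IsOpen Y)
    (f : ℂ → ℂ) (hf : DifferentiableOn ℂ f X) (hXY : f '' X ⊆ Y)
    (hnc : NowhereConstantOn f X)
    (hproper : ∀ K : Set ℂ, K ⊆ Y → IsCompact K → IsCompact {z ∈ X | f z ∈ K}) :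
    IsBranchedCovering f X Y ∧
      (IsConnected Y → ∃ d : ℕ, ∀ y ∈ Y,
        y ∉ f '' {z ∈ X | deriv f z = 0} →
        ∃ s : Finset ℂ, s.card = d ∧ ∀ z : ℂ, z ∈ s ↔ (z ∈ X ∧ f z = y)) := by
  exact ⟨aux_branched X Y hX hY f hf hnc hproper,
    fun hYc => aux_degree X Y hX hY f hf hnc hproper hYc⟩
end

section
/- Let U ⊆ ℂ be open and g : U → ℂ holomorphic. Let D ⊆ ℂ be a Jordan domain, i.e. a bounded connected open set whose frontier ∂D is the image of an injective continuous map from the unit circle into ℂ, and assume closure(D) ⊆ U. Let V ⊆ ℂ be open and simply connected. If g(∂D) ⊆ V then g(D) ⊆ V. -/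
open Filter Topology

theorem aux_deg (Z : Finset ℂ) (m : ℂ → ℕ) (k : ℂ → ℂ) (hk : Continuous k) (R : ℝ)
    (h : ∀ z : ℂ, R ≤ ‖z‖ → (∏ a ∈ Z, (z - a) ^ m a) * Complex.exp (k z) = 1) :
    ∑ a ∈ Z, m a = 0 := by
  obtain ⟨S, hS0, hSR, hSZ⟩ : ∃ S : ℝ, 0 < S ∧ R ≤ S ∧ ∀ a ∈ Z, ‖a‖ < S := by
    refine ⟨|R| + ∑ a ∈ Z, ‖a‖ + 1, by positivity, ?_, ?_⟩
    · have := le_abs_self R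
      have : 0 ≤ ∑ a ∈ Z, ‖a‖ := by positivity
      linarith
    · intro a ha
      have := Finset.single_le_sum (f := fun a : ℂ => ‖a‖) (fun i _ => norm_nonneg i) ha
      have := abs_nonneg R
      linarith
  have hS0' : (S : ℂ) ≠ 0 := by exact_mod_cast hS0.ne'
  let e : ℝ → ℂ := fun t => 2 * Real.pi * Complex.I * t
  let ζ : ℝ → ℂ := fun t => S * Complex.exp (e t)
  have hec : Continuous e := by fun_prop
  have hζc : Continuous ζ := by fun_prop
  have hζn : ∀ t, ‖ζ t‖ = S := by
    intro t
    have : e t = ((2 * Real.pi * t : ℝ) : ℂ) * Complex.I := by simp [e]; ring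
    simp only [ζ, norm_mul, this, Complex.norm_exp_ofReal_mul_I]
    simp [abs_of_pos hS0]
  have hζ0 : ∀ t, ζ t ≠ 0 := fun t => by simp [ζ, hS0', Complex.exp_ne_zero]
  have hslit : ∀ a ∈ Z, ∀ t, 1 - a / ζ t ∈ Complex.slitPlane := by
    intro a ha t
    rw [sub_eq_add_neg]
    apply Complex.mem_slitPlane_of_norm_lt_one
    rw [norm_neg, norm_div, hζn, div_lt_one hS0]
    exact hSZ a ha
  let φ : ℝ → ℂ := fun t => k (ζ t) +
    ∑ a ∈ Z, (m a : ℂ) * (Complex.log (1 - a / ζ t) + Complex.log S + e t)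
  have hφc : Continuous φ := by
    refine (hk.comp hζc).add (continuous_finsetSum _ fun a ha => ?_)
    refine continuous_const.mul (((Continuous.clog ?_ (hslit a ha)).add continuous_const).add hec)
    exact continuous_const.sub (continuous_const.div hζc hζ0)
  have hφ1 : ∀ t, Complex.exp (φ t) = 1 := by
    intro t
    rw [← h (ζ t) (by rw [hζn]; exact hSR), mul_comm]
    simp only [φ, Complex.exp_add, Complex.exp_sum]
    congr 1
    refine Finset.prod_congr rfl fun a ha => ?_
    rw [Complex.exp_nat_mul, Complex.exp_add, Complex.exp_add, Complex.exp_log hS0',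
      Complex.exp_log (Complex.slitPlane_ne_zero (hslit a ha t))]
    congr 1
    have : (S : ℂ) * Complex.exp (e t) = ζ t := rfl
    rw [mul_assoc, this, sub_mul, one_mul, div_mul_cancel₀ _ (hζ0 t)]
  have hconst : φ = fun _ => φ 0 := by
    refine Complex.isCoveringMap_exp.eq_of_comp_eq hφc continuous_const ?_ 0 rfl
    funext t
    apply Subtype.ext
    simp [hφ1]
  have h01 : φ 1 = φ 0 := congrFun hconst 1
  have hz : ζ 1 = ζ 0 := by simp [ζ, e, Complex.exp_two_pi_mul_I]
  simp only [φ, hz, add_right_inj] at h01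
  rw [← sub_eq_zero, ← Finset.sum_sub_distrib] at h01
  have h2 : ∑ a ∈ Z, (m a : ℂ) * (2 * Real.pi * Complex.I) = 0 := by
    rw [← h01]
    refine Finset.sum_congr rfl fun a _ => ?_
    simp only [e]; push_cast; ring
  rw [← Finset.sum_mul] at h2
  have h3 := (mul_eq_zero.1 h2).resolve_right Complex.two_pi_I_ne_zero
  exact_mod_cast h3

theorem aux_factor (Z : Finset ℂ) (m : ℂ → ℕ) : ∀ (F : ℂ → ℂ), Continuous F →
    (∀ z, F z = 0 → z ∈ Z) →
    (∀ a ∈ Z, ∃ G : ℂ → ℂ, ContinuousAt G a ∧ G a ≠ 0 ∧ ∀ᶠ z in 𝓝 a, F z = (z - a) ^ m a * G z) →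
    ∃ u : ℂ → ℂ, Continuous u ∧ (∀ z, u z ≠ 0) ∧ ∀ z, F z = (∏ a ∈ Z, (z - a) ^ m a) * u z := by
  classical
  induction Z using Finset.induction_on with
  | empty =>
    intro F hF h0 _
    exact ⟨F, hF, fun z hz => by simpa using h0 z hz, by simp⟩
  | insert a Z ha ih =>
    intro F hF h0 hloc
    obtain ⟨G, hGc, hG0, hG⟩ := hloc a (Finset.mem_insert_self _ _)
    let F1 : ℂ → ℂ := Function.update (fun z => F z / (z - a) ^ m a) a (G a)
    have hF1a : F1 a = G a := by simp [F1]
    have hF1 : ∀ z, z ≠ a → F1 z = F z / (z - a) ^ m a := fun z hz => by simp [F1, hz]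
    have hF1' : ∀ z, z ≠ a → F1 =ᶠ[𝓝 z] fun z => F z / (z - a) ^ m a := fun z hz => by
      filter_upwards [isOpen_ne.mem_nhds hz] with y hy using hF1 y hy
    have hmul : ∀ z, F z = (z - a) ^ m a * F1 z := by
      intro z
      by_cases hz : z = a
      · subst hz; rw [hF1a]; exact hG.self_of_nhds
      · rw [hF1 z hz, mul_div_cancel₀]
        exact pow_ne_zero _ (sub_ne_zero.2 hz)
    have hF1G : F1 =ᶠ[𝓝 a] G := by
      filter_upwards [hG] with z hz
      by_cases hza : z = a
      · subst hza; exact hF1a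
      · rw [hF1 z hza, hz, mul_div_cancel_left₀]
        exact pow_ne_zero _ (sub_ne_zero.2 hza)
    suffices hs : ∃ u : ℂ → ℂ, Continuous u ∧ (∀ z, u z ≠ 0) ∧
        ∀ z, F1 z = (∏ a ∈ Z, (z - a) ^ m a) * u z by
      obtain ⟨u, hu, hu0, hFu⟩ := hs
      refine ⟨u, hu, hu0, fun z => ?_⟩
      rw [Finset.prod_insert ha, hmul, hFu, mul_assoc]
    refine ih F1 ?_ ?_ ?_
    · rw [continuous_iff_continuousAt]
      intro z
      by_cases hz : z = a
      · subst hz; exact hGc.congr hF1G.symm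
      · refine ContinuousAt.congr ?_ (hF1' z hz).symm
        exact hF.continuousAt.div (by fun_prop) (pow_ne_zero _ (sub_ne_zero.2 hz))
    · intro z hz
      have hza : z ≠ a := by rintro rfl; exact hG0 (hF1a ▸ hz)
      have := h0 z (by rw [hmul, hz, mul_zero])
      exact (Finset.mem_insert.1 this).resolve_left hza
    · intro b hb
      have hba : b ≠ a := by rintro rfl; exact ha hb
      obtain ⟨H, hHc, hH0, hH⟩ := hloc b (Finset.mem_insert_of_mem hb)
      have hne : (b - a) ^ m a ≠ 0 := pow_ne_zero _ (sub_ne_zero.2 hba)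
      refine ⟨fun z => H z / (z - a) ^ m a, hHc.div (by fun_prop) hne, div_ne_zero hH0 hne, ?_⟩
      filter_upwards [hH, hF1' b hba] with z h1 h2
      rw [h2, h1, mul_div_assoc]

theorem aux_main (F : ℂ → ℂ) (hF : Continuous F) (R : ℝ) (hR : ∀ z, R ≤ ‖z‖ → F z = 1)
    (hloc : ∀ a, F a = 0 → ∃ n : ℕ, ∃ G : ℂ → ℂ, ContinuousAt G a ∧ G a ≠ 0 ∧
      ∀ᶠ z in 𝓝 a, F z = (z - a) ^ n * G z) (a : ℂ) : F a ≠ 0 := by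
  intro ha
  have hfin : {z | F z = 0}.Finite := by
    by_contra hinf
    have hcpt : IsCompact {z | F z = 0} := by
      apply (isCompact_closedBall (0 : ℂ) R).of_isClosed_subset
        (isClosed_eq hF continuous_const)
      intro z hz
      by_contra hz'
      have := hR z (by simp at hz'; exact hz'.le)
      simp only [Set.mem_ofPred_eq] at hz
      simp [hz] at this
    obtain ⟨z, hz, hacc⟩ := Set.Infinite.exists_accPt_of_subset_isCompact hinf hcpt subset_rfl
    obtain ⟨n, G, hGc, hG0, hG⟩ := hloc z hz
    rw [accPt_iff_frequently_nhdsNE] at hacc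
    apply hacc
    filter_upwards [nhdsWithin_le_nhds hG, nhdsWithin_le_nhds (hGc.eventually_ne hG0),
      self_mem_nhdsWithin] with y h1 h2 h3
    simp only [h1]
    exact mul_ne_zero (pow_ne_zero _ (sub_ne_zero.2 h3)) h2
  choose! m G hGc hG0 hG using hloc
  obtain ⟨u, hu, hu0, hFu⟩ := aux_factor hfin.toFinset m F hF (fun z hz => by simpa using hz)
    (fun b hb => ⟨G b, hGc b (by simpa using hb), hG0 b (by simpa using hb), hG b (by simpa using hb)⟩)
  have huniv : IsSimplyConnected (Set.univ : Set ℂ) := by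
    have : SimplyConnectedSpace ℂ := inferInstance
    exact (Homeomorph.Set.univ ℂ).toHomotopyEquiv.simplyConnectedSpace
  obtain ⟨k, hk, hku⟩ := Complex.exists_continuousOn_eqOn_exp_comp huniv isOpen_univ
    hu.continuousOn (by simp [hu0])
  have hsum := aux_deg hfin.toFinset m k (continuousOn_univ.1 hk) R (fun z hz => by
    have h1 : Complex.exp (k z) = u z := hku (Set.mem_univ z)
    rw [h1, ← hFu, hR z hz])
  have hma := (Finset.sum_eq_zero_iff.1 hsum) a (by simpa using ha)
  have := (hG a ha).self_of_nhds
  rw [hma, ha, pow_zero, one_mul] at this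
  exact hG0 a ha this.symm

/-- let `g : U → ℂ` be holomorphic, `D` a Jordan domain with
`closure D ⊆ U` and `V` a simply connected open set. If `g(∂D) ⊆ V` then `g(D) ⊆ V`. -/
theorem stmt_11 (U : Set ℂ) (hU : IsOpen U) (g : ℂ → ℂ)
    (hg : DifferentiableOn ℂ g U)
    (D : Set ℂ) (hDo : IsOpen D) (hDb : Bornology.IsBounded D) (hDc : IsConnected D)
    (hJordan : ∃ γ : ℂ → ℂ, ContinuousOn γ (Metric.sphere (0:ℂ) 1) ∧
      Set.InjOn γ (Metric.sphere (0:ℂ) 1) ∧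
      γ '' Metric.sphere (0:ℂ) 1 = frontier D)
    (hDU : closure D ⊆ U)
    (V : Set ℂ) (hV : IsOpen V) (hVsc : SimplyConnectedSpace V)
    (hgb : g '' frontier D ⊆ V) :
    g '' D ⊆ V := by
  classical
  rintro _ ⟨z₀, hz₀, rfl⟩
  by_contra hw
  set w := g z₀ with hwdef
  have hgc : ContinuousOn g (closure D) := hg.continuousOn.mono hDU
  -- logarithm on V
  obtain ⟨L, hL, hLe⟩ := Complex.exists_continuousOn_eqOn_exp_comp
    (U := V) (g := fun ζ => ζ - w) hVsc hV (by fun_prop) (by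
      rintro ⟨ζ, hζ, h0⟩
      exact hw (sub_eq_zero.1 h0 ▸ hζ))
  have hLg : ContinuousOn (fun z => L (g z)) (frontier D) :=
    hL.comp (hgc.mono frontier_subset_closure) (fun z hz => hgb ⟨z, hz, rfl⟩)
  obtain ⟨H, hH⟩ := ContinuousMap.exists_restrict_eq (isClosed_frontier (s := D))
    ⟨_, continuousOn_iff_continuous_domRestrict.1 hLg⟩
  have hH' : ∀ z ∈ frontier D, Complex.exp (H z) = g z - w := by
    intro z hz
    have h1 : H z = L (g z) := congr($hH ⟨z, hz⟩)
    rw [h1]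
    exact hLe (hgb ⟨z, hz, rfl⟩)
  let f : ℂ → ℂ := fun z => (g z - w) * Complex.exp (- H z)
  let F : ℂ → ℂ := D.piecewise f (fun _ => 1)
  have hFD : ∀ z ∈ D, F z = f z := fun z hz => Set.piecewise_eq_of_mem _ _ _ hz
  have hFD' : ∀ z ∉ D, F z = 1 := fun z hz => Set.piecewise_eq_of_notMem _ _ _ hz
  have hF : Continuous F := by
    refine continuous_piecewise ?_ ?_ continuousOn_const
    · intro z hz
      simp only [f]
      rw [← hH' z hz, ← Complex.exp_add]; simp
    · exact (hgc.sub continuousOn_const).mul (by fun_prop)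
  obtain ⟨R, hR⟩ := hDb.subset_ball 0
  have hR' : ∀ z, R ≤ ‖z‖ → F z = 1 := by
    intro z hz
    refine hFD' z fun hzD => ?_
    have := hR hzD
    simp at this
    linarith
  have hDU' : D ⊆ U := subset_closure.trans hDU
  have han : AnalyticOnNhd ℂ (fun z => g z - w) D :=
    ((hg.mono hDU').sub_const w).analyticOnNhd hDo
  refine aux_main F hF R hR' ?_ z₀ (by rw [hFD z₀ hz₀]; simp [f, hwdef])
  intro a ha
  have haD : a ∈ D := by
    by_contra h
    rw [hFD' a h] at ha
    exact one_ne_zero ha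
  have hnz : ¬ ∀ᶠ z in 𝓝 a, g z - w = 0 := by
    intro hev
    have hEq := han.eqOn_zero_of_preconnected_of_eventuallyEq_zero hDc.isPreconnected haD hev
    have hcl : Set.EqOn F (fun _ => 0) (closure D) :=
      Set.EqOn.closure (fun z hz => by
        have : g z - w = 0 := hEq hz
        rw [hFD z hz]; simp [f, this]) hF continuous_const
    have hfr : (frontier D).Nonempty := by
      rw [nonempty_frontier_iff]
      refine ⟨hDc.nonempty, ?_⟩
      rintro rfl
      exact NormedSpace.unbounded_univ ℂ ℂ hDb
    obtain ⟨b, hb⟩ := hfr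
    have h1 := hcl (frontier_subset_closure hb)
    have h2 : b ∉ D := by
      rw [hDo.frontier_eq] at hb; exact hb.2
    rw [hFD' b h2] at h1
    exact one_ne_zero h1
  obtain ⟨n, G, hGa, hG0, hG⟩ := (han a haD).exists_eventuallyEq_pow_smul_nonzero_iff.2 hnz
  refine ⟨n, fun z => G z * Complex.exp (- H z), hGa.continuousAt.mul (by fun_prop),
    mul_ne_zero hG0 (Complex.exp_ne_zero _), ?_⟩
  filter_upwards [hG, hDo.mem_nhds haD] with z h1 h2
  rw [hFD z h2]
  simp only [f]
  rw [h1, smul_eq_mul, mul_assoc]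
end

section
/- Let U and V be simply connected open subsets of ℂ and g : U → ℂ holomorphic. Then every connected component of g⁻¹(V) = { z ∈ U : g(z) ∈ V } is simply connected. -/
open Set Topology

lemma hull_circle (a : ℂ) (R : ℝ) (hR : 0 < R) (L : ℂ → ℂ) (hL : Continuous L)
    (h : ∀ z, ‖z - a‖ = R → Complex.exp (L z) = z - a) : False := by
  let e : ℝ → ℂ := fun t => a + R * Complex.exp (t * Complex.I)
  have he : Continuous e := by fun_prop
  have hexp : ∀ t, Complex.exp (L (e t)) = R * Complex.exp (t * Complex.I) := by
    intro t
    rw [h]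
    · simp [e]
    · simp [e, Complex.norm_exp_ofReal_mul_I, abs_of_pos hR]
  let f : ℝ → ℂ := fun t => t * Complex.I + L (e 0)
  have hcov := Complex.isCoveringMapOn_exp
  have key : (fun t : ℝ => L (e t)) = f := by
    have hR' : (R : ℂ) ≠ 0 := by exact_mod_cast hR.ne'
    have := hcov.isCoveringMap_restrictPreimage.eq_of_comp_eq (A := ℝ)
      (g₁ := fun t => ⟨L (e t), by simp⟩) (g₂ := fun t => ⟨f t, by simp⟩)
      (by fun_prop) (by fun_prop) (by
        funext t
        apply Subtype.ext
        simp only [Function.comp, restrictPreimage_coe]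
        rw [hexp t]
        simp only [f, Complex.exp_add, hexp 0]
        simp [mul_comm]) 0 (by apply Subtype.ext; simp [f])
    funext t
    exact congrArg Subtype.val (congrFun this t)
  have h2 := congrFun key (2 * Real.pi)
  have : e (2 * Real.pi) = e 0 := by simp [e]
  simp only [this, f] at h2
  simp [Real.pi_ne_zero] at h2

lemma glue2 {Y Z : Type*} [TopologicalSpace Y] [TopologicalSpace Z] {D₁ D₂ : Set Y}
    (h₁ : IsClosed D₁) (h₂ : IsClosed D₂) {f₁ f₂ : Y → Z}
    (c₁ : ContinuousOn f₁ D₁) (c₂ : ContinuousOn f₂ D₂) (h : EqOn f₁ f₂ (D₁ ∩ D₂)) :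
    ∃ f, ContinuousOn f (D₁ ∪ D₂) ∧ EqOn f f₁ D₁ ∧ EqOn f f₂ D₂ := by
  classical
  have e₁ : EqOn (D₁.piecewise f₁ f₂) f₁ D₁ := piecewise_eqOn _ _ _
  have e₂ : EqOn (D₁.piecewise f₁ f₂) f₂ D₂ := by
    intro x hx
    by_cases hx1 : x ∈ D₁
    · rw [piecewise_eq_of_mem _ _ _ hx1]; exact h ⟨hx1, hx⟩
    · rw [piecewise_eq_of_notMem _ _ _ hx1]
  exact ⟨_, (c₁.congr e₁).union_of_isClosed (c₂.congr e₂) h₁ h₂, e₁, e₂⟩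

lemma hull_sc {U : Set ℂ} (hU : IsOpen U) (hs : IsSimplyConnected U) {O : Set ℂ} (hO : IsOpen O)
    (hb : Bornology.IsBounded O) (hf : frontier O ⊆ U) : O ⊆ U := by
  intro a haO
  by_contra haU
  obtain ⟨L, hLc, hL⟩ := Complex.exists_continuousOn_eqOn_exp_comp hs hU
    (g := fun z => z - a) (by fun_prop) (by
      rintro ⟨z, hz, h⟩
      exact haU (by rwa [← sub_eq_zero.mp h]))
  obtain ⟨M, hM⟩ := ContinuousMap.exists_restrict_eq (Y := ℂ) (isClosed_frontier (s := O))
    ⟨(frontier O).domRestrict L, continuousOn_iff_continuous_domRestrict.mp (hLc.mono hf)⟩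
  have hM' : ∀ z ∈ frontier O, M z = L z := fun z hz => congrArg (fun k => k ⟨z, hz⟩) hM
  obtain ⟨F, hFc, hF1, hF2⟩ := glue2 (f₁ := fun z => Complex.exp (M z)) (f₂ := fun z => z - a)
    (isClosed_closure (s := O)) (hO.isClosed_compl) (by fun_prop) (by fun_prop) (by
      rintro z ⟨hz1, hz2⟩
      have : z ∈ frontier O := by rw [hO.frontier_eq]; exact ⟨hz1, hz2⟩
      simp only [hM' z this]
      exact hL (hf this))
  have hu : closure O ∪ Oᶜ = univ := by
    apply eq_univ_of_forall
    intro z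
    by_cases h : z ∈ O
    · exact Or.inl (subset_closure h)
    · exact Or.inr h
  rw [hu] at hFc
  obtain ⟨Λ, hΛc, hΛ⟩ := Complex.exists_continuousOn_eqOn_exp_comp (X := ℂ) (U := univ)
    (by
      have : ContractibleSpace (univ : Set ℂ) := (Homeomorph.Set.univ ℂ).contractibleSpace
      exact SimplyConnectedSpace.ofContractible _) isOpen_univ (g := F) hFc (by
      rintro ⟨z, -, h⟩
      by_cases hz : z ∈ O
      · rw [hF1 (subset_closure hz)] at h
        exact Complex.exp_ne_zero _ h
      · rw [hF2 hz] at h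
        exact hz (by rwa [sub_eq_zero.mp h]))
  obtain ⟨R, hR0, hR⟩ := hb.subset_ball_lt 0 a
  refine hull_circle a R hR0 Λ (continuousOn_univ.mp hΛc) ?_
  intro z hz
  have : z ∉ O := fun h => by
    have := hR h
    rw [Metric.mem_ball, dist_eq_norm, hz] at this
    exact lt_irrefl _ this
  refine Eq.trans ?_ (hF2 this)
  exact hΛ (mem_univ z)

lemma hull_comp (U V : Set ℂ) (hU : IsOpen U) (hV : IsOpen V)
    (hUsc : IsSimplyConnected U) (hVsc : IsSimplyConnected V)
    (g : ℂ → ℂ) (hg : DifferentiableOn ℂ g U) (hopen : ∀ s ⊆ U, IsOpen s → IsOpen (g '' s))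
    (x : ℂ) {O : Set ℂ} (hO : IsOpen O)
    (hb : Bornology.IsBounded O)
    (hf : frontier O ⊆ connectedComponentIn {z ∈ U | g z ∈ V} x) :
    O ⊆ connectedComponentIn {z ∈ U | g z ∈ V} x := by
  set G := {z ∈ U | g z ∈ V} with hG
  set W := connectedComponentIn G x with hW
  have hGo : IsOpen G := hg.continuousOn.isOpen_inter_preimage hU hV
  have hWG : W ⊆ G := connectedComponentIn_subset _ _
  have hWo : IsOpen W := hGo.connectedComponentIn
  have hOU : O ⊆ U := hull_sc hU hUsc hO hb fun z hz => (hWG (hf hz)).1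
  have hcl : closure O = O ∪ frontier O := by
    rw [closure_eq_self_union_frontier]
  have hclU : closure O ⊆ U := by
    rw [hcl]; exact union_subset hOU fun z hz => (hWG (hf hz)).1
  have hK : IsCompact (g '' closure O) := hb.isCompact_closure.image_of_continuousOn
    (hg.continuousOn.mono hclU)
  have hOV : g '' O ⊆ V := by
    have ho := hopen O hOU hO
    refine hull_sc hV hVsc ho (hK.isBounded.subset (image_mono subset_closure)) ?_
    rw [ho.frontier_eq]
    rintro w ⟨hw1, hw2⟩
    have : w ∈ g '' closure O :=
      closure_minimal (image_mono subset_closure) hK.isClosed hw1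
    obtain ⟨z, hz, rfl⟩ := this
    rw [hcl] at hz
    rcases hz with hz | hz
    · exact absurd ⟨z, hz, rfl⟩ hw2
    · exact (hWG (hf hz)).2
  have hOG : O ⊆ G := fun z hz => ⟨hOU hz, hOV ⟨z, hz, rfl⟩⟩
  have hGW : IsOpen (G \ W) := by
    rw [isOpen_iff_mem_nhds]
    rintro y ⟨hyG, hyW⟩
    refine Filter.mem_of_superset
      ((hGo.connectedComponentIn (x := y)).mem_nhds (mem_connectedComponentIn hyG)) ?_
    intro z hz
    refine ⟨connectedComponentIn_subset _ _ hz, fun hzW => hyW ?_⟩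
    rw [hW, connectedComponentIn_eq hzW, ← connectedComponentIn_eq hz]
    exact mem_connectedComponentIn hyG
  have hOW : O \ W = O ∩ (G \ W) := by
    ext z; constructor
    · rintro ⟨h1, h2⟩; exact ⟨h1, hOG h1, h2⟩
    · rintro ⟨h1, -, h2⟩; exact ⟨h1, h2⟩
  have hopen' : IsOpen (O \ W) := by rw [hOW]; exact hO.inter hGW
  have hclosed : IsClosed (O \ W) := by
    have : O \ W = closure O \ W := by
      rw [hcl]; ext z; constructor
      · rintro ⟨h1, h2⟩; exact ⟨Or.inl h1, h2⟩
      · rintro ⟨h1 | h1, h2⟩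
        · exact ⟨h1, h2⟩
        · exact absurd (hf h1) h2
    rw [this]
    exact isClosed_closure.sdiff hWo
  rcases isClopen_iff.mp ⟨hclosed, hopen'⟩ with h | h
  · exact sdiff_eq_empty.mp h
  · exfalso
    have : Bornology.IsBounded (univ : Set ℂ) := h ▸ hb.subset sdiff_subset
    exact NoncompactSpace.noncompact_univ (X := ℂ)
      (by simpa using this.isCompact_closure)

lemma ext_int {X : Set ℂ} (hX : IsPathConnected X) {E : Set ℝ} (hE : IsClosed E) {p q : ℝ}
    (hpq : p < q) (h : Icc p q ⊆ E ∨ ∀ t ∈ Ioo p q, t ∉ E) {f : ℝ → ℂ}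
    (hf : ContinuousOn f E) (hm : MapsTo f E X) :
    ∃ k, ContinuousOn k (E ∪ Icc p q) ∧ MapsTo k (E ∪ Icc p q) X ∧ EqOn k f E := by
  classical
  rcases h with h | h
  · refine ⟨f, ?_, ?_, fun _ _ => rfl⟩
    · rwa [union_eq_self_of_subset_right h]
    · rwa [union_eq_self_of_subset_right h]
  obtain ⟨x0, hx0⟩ := hX.nonempty
  let v : ℝ → ℂ := fun t => if t ∈ E then f t else x0
  have hv : ∀ t, v t ∈ X := by
    intro t
    by_cases ht : t ∈ E
    · simp only [v, if_pos ht]; exact hm ht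
    · simp only [v, if_neg ht]; exact hx0
  obtain ⟨γ, hγ⟩ := hX.joinedIn _ (hv p) _ (hv q)
  obtain ⟨k, hkc, hk1, hk2⟩ := glue2 (f₁ := f) (f₂ := fun t => γ.extend ((t - p) / (q - p)))
    hE (isClosed_Icc (a := p) (b := q)) hf
    ((γ.continuous_extend.comp (by fun_prop)).continuousOn) (by
      rintro t ⟨htE, ht⟩
      rcases eq_or_lt_of_le ht.1 with h1 | h1
      · subst h1; simp [v, htE]
      rcases eq_or_lt_of_le ht.2 with h2 | h2
      · subst h2
        simp [v, htE, div_self (sub_pos.mpr hpq).ne']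
      · exact absurd htE (h t ⟨h1, h2⟩))
  refine ⟨k, hkc, ?_, hk1⟩
  rintro t (ht | ht)
  · rw [hk1 ht]; exact hm ht
  · rw [hk2 ht]
    have : γ.extend ((t - p) / (q - p)) ∈ range γ := by
      rw [← γ.extend_range]; exact mem_range_self _
    obtain ⟨s, hs⟩ := this
    simp only [← hs]; exact hγ s

def gridSq (p : ℤ × ℤ) : Set ℂ := {z | |z.re - 2 * p.1| ≤ 1 ∧ |z.im - 2 * p.2| ≤ 1}

lemma gridSq_closed (p : ℤ × ℤ) : IsClosed (gridSq p) := by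
  have h1 : IsClosed {z : ℂ | |z.re - 2 * p.1| ≤ 1} := isClosed_le (by fun_prop) (by fun_prop)
  have h2 : IsClosed {z : ℂ | |z.im - 2 * p.2| ≤ 1} := isClosed_le (by fun_prop) (by fun_prop)
  exact h1.inter h2

lemma square_ext {X : Set ℂ} (hX : IsPathConnected X) {D : Set ℂ} (hD : IsClosed D)
    {f : ℂ → ℂ} (hf : ContinuousOn f D) (hm : MapsTo f D X) (φ : ℂ ≃ₜ ℂ)
    (h1 : ∀ ξ ∈ gridSq (0, 0), φ ξ ∈ D → ξ.re = 1 ∨ ξ.re = -1 ∨ ξ.im = -1)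
    (hr : (∀ y ∈ Icc (-1 : ℝ) 1, φ ⟨1, y⟩ ∈ D) ∨ (∀ y ∈ Ioo (-1 : ℝ) 1, φ ⟨1, y⟩ ∉ D))
    (hl : (∀ y ∈ Icc (-1 : ℝ) 1, φ ⟨-1, y⟩ ∈ D) ∨ (∀ y ∈ Ioo (-1 : ℝ) 1, φ ⟨-1, y⟩ ∉ D))
    (hd : (∀ x ∈ Icc (-1 : ℝ) 1, φ ⟨x, -1⟩ ∈ D) ∨ (∀ x ∈ Ioo (-1 : ℝ) 1, φ ⟨x, -1⟩ ∉ D)) :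
    ∃ f', ContinuousOn f' (D ∪ φ '' gridSq (0, 0)) ∧ MapsTo f' (D ∪ φ '' gridSq (0, 0)) X ∧
      EqOn f' f D := by
  let c : ℝ → ℂ := fun s => ((max (-1) (min 1 s) : ℝ) : ℂ) + ((max (|s| - 1) 0 - 1 : ℝ) : ℂ) * Complex.I
  have hc : Continuous c := by fun_prop
  have c1 : ∀ s, 1 ≤ s → c s = ⟨1, s - 2⟩ := by
    intro s hs
    have : |s| = s := abs_of_nonneg (by linarith)
    apply Complex.ext
    · simp [c, min_eq_left hs]
    · simp [c, this, max_eq_left (sub_nonneg.mpr hs)]; ring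
  have c2 : ∀ s, s ≤ -1 → c s = ⟨-1, -s - 2⟩ := by
    intro s hs
    have : |s| = -s := abs_of_nonpos (by linarith)
    apply Complex.ext
    · simp [c, min_eq_right (show s ≤ 1 by linarith), hs]
    · simp [c, this, max_eq_left (show 0 ≤ -s - 1 by linarith)]; ring
  have c3 : ∀ s, -1 ≤ s → s ≤ 1 → c s = ⟨s, -1⟩ := by
    intro s hs hs'
    have : |s| ≤ 1 := abs_le.mpr ⟨hs, hs'⟩
    apply Complex.ext
    · simp [c, min_eq_right hs', hs]
    · simp [c, this]
  let E : Set ℝ := Icc (-3) 3 ∩ (fun s => φ (c s)) ⁻¹' D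
  have hE : IsClosed E := isClosed_Icc.inter (hD.preimage (φ.continuous.comp hc))
  have hfE : ContinuousOn (fun s => f (φ (c s))) E :=
    hf.comp (φ.continuous.comp hc).continuousOn (fun s hs => hs.2)
  have hmE : MapsTo (fun s => f (φ (c s))) E X := fun s hs => hm hs.2
  obtain ⟨k1, k1c, k1m, k1e⟩ := ext_int hX hE (p := -3) (q := -1) (by norm_num) (by
    rcases hl with h | h
    · left; intro s hs
      refine ⟨⟨hs.1, by linarith [hs.2]⟩, ?_⟩
      simp only [mem_preimage, c2 s hs.2]
      exact h _ ⟨by linarith [hs.2], by linarith [hs.1]⟩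
    · right; rintro s hs ⟨-, hs'⟩
      simp only [mem_preimage, c2 s hs.2.le] at hs'
      exact h _ ⟨by linarith [hs.2], by linarith [hs.1]⟩ hs') hfE hmE
  obtain ⟨k2, k2c, k2m, k2e⟩ := ext_int hX (hE.union isClosed_Icc) (p := -1) (q := 1)
    (by norm_num) (by
    rcases hd with h | h
    · left; intro s hs
      refine Or.inl ⟨⟨by linarith [hs.1], by linarith [hs.2]⟩, ?_⟩
      simp only [mem_preimage, c3 s hs.1 hs.2]
      exact h _ hs
    · right; rintro s hs (⟨-, hs'⟩ | hs')
      · simp only [mem_preimage, c3 s hs.1.le hs.2.le] at hs'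
        exact h _ hs hs'
      · linarith [hs'.2, hs.1]) k1c k1m
  obtain ⟨k3, k3c, k3m, k3e⟩ := ext_int hX ((hE.union isClosed_Icc).union isClosed_Icc)
    (p := 1) (q := 3) (by norm_num) (by
    rcases hr with h | h
    · left; intro s hs
      refine Or.inl (Or.inl ⟨⟨by linarith [hs.1], by linarith [hs.2]⟩, ?_⟩)
      simp only [mem_preimage, c1 s hs.1]
      exact h _ ⟨by linarith [hs.1], by linarith [hs.2]⟩
    · right; rintro s hs ((⟨-, hs'⟩ | hs') | hs')
      · simp only [mem_preimage, c1 s hs.1.le] at hs'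
        exact h _ ⟨by linarith [hs.1], by linarith [hs.2]⟩ hs'
      · linarith [hs'.2, hs.1]
      · linarith [hs'.2, hs.1]) k2c k2m
  have hsub : Icc (-3 : ℝ) 3 ⊆ ((E ∪ Icc (-3) (-1)) ∪ Icc (-1) 1) ∪ Icc 1 3 := by
    intro s hs
    rcases le_total s (-1) with h | h
    · exact Or.inl (Or.inl (Or.inr ⟨hs.1, h⟩))
    rcases le_total s 1 with h' | h'
    · exact Or.inl (Or.inr ⟨h, h'⟩)
    · exact Or.inr ⟨h', hs.2⟩
  have ke : ∀ s ∈ E, k3 s = f (φ (c s)) := fun s hs => by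
    rw [k3e (Or.inl (Or.inl hs)), k2e (Or.inl hs), k1e hs]
  let σ : ℂ → ℝ := fun ξ => ξ.re * (2 + ξ.im)
  have hσ : ∀ ξ ∈ gridSq (0, 0), σ ξ ∈ Icc (-3 : ℝ) 3 := by
    rintro ξ ⟨ha, hb⟩
    simp only [Int.cast_zero, mul_zero, sub_zero, abs_le] at ha hb
    constructor <;> simp only [σ] <;> nlinarith
  have hσc : Continuous (fun z => σ (φ.symm z)) := by
    have : Continuous σ := by fun_prop
    exact this.comp φ.symm.continuous
  obtain ⟨F, hFc, hF1, hF2⟩ := glue2 (f₁ := f) (f₂ := fun z => k3 (σ (φ.symm z))) hD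
    (φ.isClosed_image.mpr (gridSq_closed (0, 0))) hf
    (k3c.comp hσc.continuousOn (by
      rintro _ ⟨ξ, hξ, rfl⟩
      simp only [Homeomorph.symm_apply_apply]
      exact hsub (hσ ξ hξ))) (by
      rintro _ ⟨hz, ξ, hξ, rfl⟩
      simp only [Homeomorph.symm_apply_apply]
      have hcs : c (σ ξ) = ξ := by
        have hξ' := hξ
        obtain ⟨ha, hb⟩ := hξ'
        simp only [Int.cast_zero, mul_zero, sub_zero, abs_le] at ha hb
        rcases h1 ξ hξ hz with h | h | h
        · have : σ ξ = 2 + ξ.im := by simp [σ, h]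
          rw [this, c1 _ (by linarith)]
          apply Complex.ext <;> simp [h]
        · have : σ ξ = -(2 + ξ.im) := by simp [σ, h]
          rw [this, c2 _ (by linarith)]
          apply Complex.ext <;> simp [h]
        · have : σ ξ = ξ.re := by simp only [σ, h]; ring
          rw [this, c3 _ ha.1 ha.2]
          apply Complex.ext <;> simp [h]
      rw [ke _ ⟨hσ ξ hξ, by simpa [hcs] using hz⟩, hcs])
  refine ⟨F, hFc, ?_, hF1⟩
  rintro z (hz | hz)
  · rw [hF1 hz]; exact hm hz
  · rw [hF2 hz]
    obtain ⟨ξ, hξ, rfl⟩ := hz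
    simp only [Homeomorph.symm_apply_apply]
    exact k3m (hsub (hσ ξ hξ))

def gridCells (A : Finset (ℤ × ℤ)) : Set ℂ := ⋃ p ∈ A, gridSq p

lemma mem_cells {A : Finset (ℤ × ℤ)} {z : ℂ} : z ∈ gridCells A ↔ ∃ p ∈ A, z ∈ gridSq p := by
  simp [gridCells]

lemma cells_closed (A : Finset (ℤ × ℤ)) : IsClosed (gridCells A) :=
  A.finite_toSet.isClosed_biUnion fun p _ => gridSq_closed p

def GridExt (X D : Set ℂ) : Prop := ∀ f : ℂ → ℂ, ContinuousOn f D → MapsTo f D X →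
  ∃ F : ℂ → ℂ, Continuous F ∧ (∀ z, F z ∈ X) ∧ EqOn F f D

lemma int_aux {x : ℝ} {m : ℤ} (h : |x| ≤ 1) (h' : |x - 2 * m| ≤ 1) :
    m = 0 ∨ (m = 1 ∧ x = 1) ∨ (m = -1 ∧ x = -1) := by
  rw [abs_le] at h h'
  have h1 : (m : ℝ) ≤ 1 := by linarith
  have h2 : (-1 : ℝ) ≤ m := by linarith
  have h1' : m ≤ 1 := by exact_mod_cast h1
  have h2' : -1 ≤ m := by exact_mod_cast h2
  have : m = -1 ∨ m = 0 ∨ m = 1 := by omega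
  rcases this with rfl | rfl | rfl
  · right; right; refine ⟨rfl, ?_⟩; push_cast at h'; linarith
  · left; rfl
  · right; left; refine ⟨rfl, ?_⟩; push_cast at h'; linarith

lemma shrink {X : Set ℂ} (hX : IsPathConnected X) {A : Finset (ℤ × ℤ)} (hA : GridExt X (gridCells A))
    {p : ℤ × ℤ} (hp : p ∈ A) (a b : ℤ)
    (hab : (a = 1 ∧ b = 0) ∨ (a = -1 ∧ b = 0) ∨ (a = 0 ∧ b = 1) ∨ (a = 0 ∧ b = -1))
    (hn : (p.1 - b, p.2 + a) ∉ A) : GridExt X (gridCells (A.erase p)) := by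
  let r : ℤ → ℤ → ℤ × ℤ := fun m n => (p.1 + a * m - b * n, p.2 + b * m + a * n)
  have hr0 : r 0 0 = p := by simp [r]
  have hr1 : r 0 1 = (p.1 - b, p.2 + a) := by simp [r]
  have hsurj : ∀ q, ∃ m n, q = r m n := by
    intro q
    refine ⟨a * (q.1 - p.1) + b * (q.2 - p.2), -b * (q.1 - p.1) + a * (q.2 - p.2), ?_⟩
    rcases hab with ⟨rfl, rfl⟩ | ⟨rfl, rfl⟩ | ⟨rfl, rfl⟩ | ⟨rfl, rfl⟩ <;>
      ext <;> simp [r]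
  have hinj : ∀ m n, r m n = p → m = 0 ∧ n = 0 := by
    intro m n h
    have e1 := congrArg Prod.fst h
    have e2 := congrArg Prod.snd h
    rcases hab with ⟨rfl, rfl⟩ | ⟨rfl, rfl⟩ | ⟨rfl, rfl⟩ | ⟨rfl, rfl⟩ <;>
      simp [r] at e1 e2 <;> omega
  have hu : (a + b * Complex.I : ℂ) ≠ 0 := by
    rcases hab with ⟨rfl, rfl⟩ | ⟨rfl, rfl⟩ | ⟨rfl, rfl⟩ | ⟨rfl, rfl⟩ <;> simp
  let φ : ℂ ≃ₜ ℂ := (Homeomorph.mulLeft₀ _ hu).trans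
    (Homeomorph.addLeft (2 * p.1 + 2 * p.2 * Complex.I : ℂ))
  have φre : ∀ ξ, (φ ξ).re = 2 * p.1 + (a * ξ.re - b * ξ.im) := by intro ξ; simp [φ]
  have φim : ∀ ξ, (φ ξ).im = 2 * p.2 + (a * ξ.im + b * ξ.re) := by intro ξ; simp [φ]
  have hφ : ∀ m n ξ, φ ξ ∈ gridSq (r m n) ↔ ξ ∈ gridSq (m, n) := by
    intro m n ξ
    simp only [gridSq, mem_ofPred_eq, φre, φim, r, abs_le]
    rcases hab with ⟨rfl, rfl⟩ | ⟨rfl, rfl⟩ | ⟨rfl, rfl⟩ | ⟨rfl, rfl⟩ <;> push_cast <;>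
      constructor <;> rintro ⟨⟨h1, h2⟩, h3, h4⟩ <;> refine ⟨⟨?_, ?_⟩, ?_, ?_⟩ <;> linarith
  have hmem : ∀ ξ, φ ξ ∈ gridCells (A.erase p) ↔ ∃ m n, r m n ∈ A ∧ (m, n) ≠ (0, 0) ∧
      ξ ∈ gridSq (m, n) := by
    intro ξ
    rw [mem_cells]
    constructor
    · rintro ⟨q, hq, h⟩
      obtain ⟨m, n, rfl⟩ := hsurj q
      rw [Finset.mem_erase] at hq
      refine ⟨m, n, hq.2, ?_, (hφ m n ξ).mp h⟩
      intro h0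
      simp only [Prod.mk.injEq] at h0
      rw [h0.1, h0.2] at hq
      exact hq.1 hr0
    · rintro ⟨m, n, h1, h2, h3⟩
      refine ⟨r m n, Finset.mem_erase.mpr ⟨fun h => h2 ?_, h1⟩, (hφ m n ξ).mpr h3⟩
      obtain ⟨h, h'⟩ := hinj m n h
      rw [h, h']
  rw [← hr1] at hn
  intro f hf hm
  have himg : φ '' gridSq (0, 0) = gridSq p := by
    ext z
    constructor
    · rintro ⟨ξ, hξ, rfl⟩
      have := (hφ 0 0 ξ).mpr hξ
      rwa [hr0] at this
    · intro hz
      refine ⟨φ.symm z, ?_, by simp⟩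
      rw [← hφ 0 0, hr0]; simpa using hz
  obtain ⟨f', hf'c, hf'm, hf'e⟩ := square_ext hX (cells_closed _) hf hm φ
    (by
      rintro ξ ⟨hx, hy⟩ hξ
      obtain ⟨m, n, hmn, hne, h1, h2⟩ := (hmem ξ).mp hξ
      simp only [Int.cast_zero, mul_zero, sub_zero] at hx hy
      simp only at h1 h2
      rcases int_aux hx h1 with h | h | h
      · rcases int_aux hy h2 with h' | h' | h'
        · exact absurd (by rw [h, h']) hne
        · rw [h, h'.1] at hmn; exact absurd hmn hn
        · exact Or.inr (Or.inr h'.2)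
      · exact Or.inl h.2
      · exact Or.inr (Or.inl h.2))
    (by
      by_cases h : r 1 0 ∈ A
      · left; rintro y hy
        refine (hmem _).mpr ⟨1, 0, h, by simp, ?_, ?_⟩
        · norm_num
        · simpa [abs_le] using hy
      · right; rintro y hy hξ
        obtain ⟨m, n, hmn, hne, h1, h2⟩ := (hmem _).mp hξ
        simp only at h1 h2
        have hn0 : n = 0 := by
          rcases int_aux (abs_le.mpr ⟨hy.1.le, hy.2.le⟩) h2 with h' | h' | h'
          · exact h'
          · linarith [hy.2, h'.2]
          · linarith [hy.1, h'.2]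
        rcases int_aux (by norm_num) h1 with h' | h' | h'
        · exact hne (by rw [h', hn0])
        · rw [h'.1, hn0] at hmn; exact h hmn
        · linarith [h'.2])
    (by
      by_cases h : r (-1) 0 ∈ A
      · left; rintro y hy
        refine (hmem _).mpr ⟨-1, 0, h, by simp, ?_, ?_⟩
        · norm_num
        · simpa [abs_le] using hy
      · right; rintro y hy hξ
        obtain ⟨m, n, hmn, hne, h1, h2⟩ := (hmem _).mp hξ
        simp only at h1 h2
        have hn0 : n = 0 := by
          rcases int_aux (abs_le.mpr ⟨hy.1.le, hy.2.le⟩) h2 with h' | h' | h'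
          · exact h'
          · linarith [hy.2, h'.2]
          · linarith [hy.1, h'.2]
        rcases int_aux (by norm_num) h1 with h' | h' | h'
        · exact hne (by rw [h', hn0])
        · linarith [h'.2]
        · rw [h'.1, hn0] at hmn; exact h hmn)
    (by
      by_cases h : r 0 (-1) ∈ A
      · left; rintro y hy
        refine (hmem _).mpr ⟨0, -1, h, by simp, ?_, ?_⟩
        · simpa [abs_le] using hy
        · norm_num
      · right; rintro y hy hξ
        obtain ⟨m, n, hmn, hne, h1, h2⟩ := (hmem _).mp hξ
        simp only at h1 h2
        have hn0 : m = 0 := by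
          rcases int_aux (abs_le.mpr ⟨hy.1.le, hy.2.le⟩) h1 with h' | h' | h'
          · exact h'
          · linarith [hy.2, h'.2]
          · linarith [hy.1, h'.2]
        rcases int_aux (by norm_num) h2 with h' | h' | h'
        · exact hne (by rw [h', hn0])
        · linarith [h'.2]
        · rw [h'.1, hn0] at hmn; exact h hmn)
  have hun : gridCells (A.erase p) ∪ φ '' gridSq (0, 0) = gridCells A := by
    rw [himg]
    ext z
    simp only [mem_union, mem_cells, Finset.mem_erase]
    constructor
    · rintro (⟨q, hq, h⟩ | h)
      · exact ⟨q, hq.2, h⟩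
      · exact ⟨p, hp, h⟩
    · rintro ⟨q, hq, h⟩
      by_cases hqp : q = p
      · right; rwa [← hqp]
      · exact Or.inl ⟨q, ⟨hqp, hq⟩, h⟩
  rw [hun] at hf'c hf'm
  obtain ⟨F, hFc, hFm, hFe⟩ := hA f' hf'c hf'm
  refine ⟨F, hFc, hFm, fun z hz => ?_⟩
  rw [hFe (by rw [← hun]; exact Or.inl hz), hf'e hz]

lemma box_aux (n : ℕ) (x : ℝ) (h1 : -(2 * n + 1) ≤ x) (h2 : x ≤ 2 * n + 1) :
    ∃ m : ℤ, -(n : ℤ) ≤ m ∧ m ≤ n ∧ |x - 2 * m| ≤ 1 := by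
  have ha := Int.le_ceil ((x - 1) / 2)
  have hb := Int.ceil_lt_add_one ((x - 1) / 2)
  have hn : ⌈(x - 1) / 2⌉ ≤ (n : ℤ) := by
    rw [Int.ceil_le]; push_cast; linarith
  by_cases h : -(n : ℤ) ≤ ⌈(x - 1) / 2⌉
  · exact ⟨_, h, hn, abs_le.mpr ⟨by linarith, by linarith⟩⟩
  · refine ⟨-n, le_rfl, by omega, ?_⟩
    have h3 : ⌈(x - 1) / 2⌉ ≤ -(n : ℤ) - 1 := by omega
    rw [Int.ceil_le] at h3
    push_cast at h3 ⊢
    rw [abs_le]; constructor <;> linarith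

lemma mem_box (n : ℕ) (z : ℂ) (h1 : |z.re| ≤ 2 * n + 1) (h2 : |z.im| ≤ 2 * n + 1) :
    z ∈ gridCells (Finset.Icc (-(n : ℤ), -(n : ℤ)) ((n : ℤ), (n : ℤ))) := by
  rw [abs_le] at h1 h2
  obtain ⟨m, ha, hb, hc⟩ := box_aux n z.re h1.1 h1.2
  obtain ⟨m', ha', hb', hc'⟩ := box_aux n z.im h2.1 h2.2
  exact mem_cells.mpr ⟨(m, m'), by simp [*], hc, hc'⟩

lemma box_sub (n : ℕ) (z : ℂ)
    (h : z ∈ gridCells (Finset.Icc (-(n : ℤ), -(n : ℤ)) ((n : ℤ), (n : ℤ)))) :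
    |z.re| ≤ 2 * n + 1 ∧ |z.im| ≤ 2 * n + 1 := by
  obtain ⟨⟨p, q⟩, hp, h1, h2⟩ := mem_cells.mp h
  simp only [Finset.mem_Icc, Prod.mk_le_mk] at hp
  obtain ⟨⟨a, b⟩, c, d⟩ := hp
  have a' : (-(n : ℝ)) ≤ p := by exact_mod_cast a
  have b' : (-(n : ℝ)) ≤ q := by exact_mod_cast b
  have c' : (p : ℝ) ≤ n := by exact_mod_cast c
  have d' : (q : ℝ) ≤ n := by exact_mod_cast d
  simp only [abs_le] at h1 h2 ⊢
  exact ⟨⟨by linarith, by linarith⟩, by linarith, by linarith⟩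

lemma ext_box (X : Set ℂ) (n : ℕ) :
    GridExt X (gridCells (Finset.Icc (-(n : ℤ), -(n : ℤ)) ((n : ℤ), (n : ℤ)))) := by
  intro f hf hm
  let M : ℝ := 2 * n + 1
  have hM : 0 ≤ M := by positivity
  let k : ℝ → ℝ := fun x => max (-M) (min M x)
  have hk : ∀ x, |k x| ≤ M := fun x =>
    abs_le.mpr ⟨le_max_left _ _, max_le (by linarith) (min_le_left _ _)⟩
  have hk' : ∀ x, |x| ≤ M → k x = x := fun x hx => by
    rw [abs_le] at hx
    simp [k, hx.1, hx.2]
  let ρ : ℂ → ℂ := fun z => (k z.re : ℂ) + (k z.im : ℂ) * Complex.I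
  have hρ : Continuous ρ := by fun_prop
  have hρm : ∀ z, ρ z ∈ gridCells (Finset.Icc (-(n : ℤ), -(n : ℤ)) ((n : ℤ), (n : ℤ))) := by
    intro z
    apply mem_box
    · simpa [ρ] using hk z.re
    · simpa [ρ] using hk z.im
  refine ⟨fun z => f (ρ z), hf.comp_continuous hρ hρm, fun z => hm (hρm z), fun z hz => ?_⟩
  have := box_sub n z hz
  have : ρ z = z := by
    apply Complex.ext
    · simpa [ρ] using hk' _ this.1
    · simpa [ρ] using hk' _ this.2
  simp only [this]

lemma gridSq_lf : LocallyFinite gridSq := by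
  intro z
  refine ⟨Metric.ball z 1, Metric.ball_mem_nhds _ one_pos, ?_⟩
  refine (Set.finite_Icc ((⌈(z.re - 2) / 2⌉, ⌈(z.im - 2) / 2⌉) : ℤ × ℤ)
    (⌊(z.re + 2) / 2⌋, ⌊(z.im + 2) / 2⌋)).subset ?_
  rintro ⟨p, q⟩ ⟨w, ⟨h1, h2⟩, hw⟩
  rw [Metric.mem_ball, dist_eq_norm] at hw
  have h3 := (Complex.abs_re_le_norm (w - z)).trans hw.le
  have h4 := (Complex.abs_im_le_norm (w - z)).trans hw.le
  simp only [Complex.sub_re, Complex.sub_im, abs_le] at h1 h2 h3 h4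
  simp only [mem_Icc, Prod.mk_le_mk, Int.ceil_le, Int.le_floor]
  refine ⟨⟨?_, ?_⟩, ?_, ?_⟩ <;> linarith

lemma adj_all {X : Set ℂ} (hX : IsPathConnected X) (S : Finset (ℤ × ℤ))
    (n : ℕ) (hS : S ⊆ Finset.Icc (-(n : ℤ), -(n : ℤ)) ((n : ℤ), (n : ℤ))) :
    ∃ A, S ⊆ A ∧ GridExt X (gridCells A) ∧ ∀ p ∈ A, p ∉ S → (p.1 + 1, p.2) ∈ A ∧ (p.1 - 1, p.2) ∈ A ∧
      (p.1, p.2 + 1) ∈ A ∧ (p.1, p.2 - 1) ∈ A := by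
  obtain ⟨A, ⟨hA1, hA2⟩, hmin⟩ := (measure Finset.card).wf.has_min
    {A : Finset (ℤ × ℤ) | S ⊆ A ∧ GridExt X (gridCells A)} ⟨_, hS, ext_box X n⟩
  refine ⟨A, hA1, hA2, fun p hp hpS => ?_⟩
  have key : ∀ a b : ℤ,
      ((a = 1 ∧ b = 0) ∨ (a = -1 ∧ b = 0) ∨ (a = 0 ∧ b = 1) ∨ (a = 0 ∧ b = -1)) →
      (p.1 - b, p.2 + a) ∈ A := by
    intro a b hab
    by_contra h
    refine hmin (A.erase p) ⟨?_, shrink hX hA2 hp a b hab h⟩ (Finset.card_erase_lt_of_mem hp)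
    exact Finset.subset_erase.mpr ⟨hA1, hpS⟩
  have h1 := key 0 (-1) (by simp)
  have h2 := key 0 1 (by simp)
  have h3 := key 1 0 (by simp)
  have h4 := key (-1) 0 (by simp)
  simp only [sub_neg_eq_add, add_zero, sub_zero] at h1 h2 h3 h4
  exact ⟨h1, h2, h3, h4⟩

lemma int_aux2 {x : ℝ} {m k : ℤ} (h : |x - 2 * m| ≤ 1) (h' : |x - 2 * k| ≤ 1) :
    k = m ∨ k = m + 1 ∨ k = m - 1 := by
  have := int_aux (m := k - m) h (by push_cast; convert h' using 2; ring)
  omega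

lemma sc_of_hull {W : Set ℂ} (hWo : IsOpen W) (hWc : IsPathConnected W)
    (hull : ∀ O : Set ℂ, IsOpen O → Bornology.IsBounded O → frontier O ⊆ W → O ⊆ W) :
    IsSimplyConnected W := by
  classical
  rw [isSimplyConnected_iff_exists_homotopy_refl_forall_mem]
  refine ⟨hWc, fun x γ hγ => ?_⟩
  have hK : IsCompact (range γ) := isCompact_range γ.continuous
  obtain ⟨ε, hε, hth⟩ := hK.exists_thickening_subset_open hWo (range_subset_iff.mpr hγ)
  let δ : ℝ := ε / 5
  have hδ : 0 < δ := by positivity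
  have hδ' : (δ : ℂ) ≠ 0 := by exact_mod_cast hδ.ne'
  obtain ⟨R, hR⟩ := hK.isBounded.exists_norm_le
  obtain ⟨n, hn⟩ := exists_nat_ge (R / δ)
  let B := Finset.Icc (-(n : ℤ), -(n : ℤ)) ((n : ℤ), (n : ℤ))
  let S := B.filter fun p => ∃ w : ℂ, w ∈ gridSq p ∧ δ * w ∈ range γ
  have hKS : ∀ w : ℂ, δ * w ∈ range γ → w ∈ gridCells S := by
    intro w hw
    have h1 := hR _ hw
    rw [norm_mul, Complex.norm_real, Real.norm_of_nonneg hδ.le] at h1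
    have h2 : ‖w‖ ≤ 2 * n + 1 := by
      have : ‖w‖ ≤ R / δ := by rw [le_div_iff₀ hδ]; linarith
      have : (0 : ℝ) ≤ n := by positivity
      linarith
    obtain ⟨p, hp, hpw⟩ := mem_cells.mp
      (mem_box n w ((Complex.abs_re_le_norm w).trans h2) ((Complex.abs_im_le_norm w).trans h2))
    exact mem_cells.mpr ⟨p, Finset.mem_filter.mpr ⟨hp, w, hpw, hw⟩, hpw⟩
  have hSW : ∀ z ∈ gridCells S, δ * z ∈ W := by
    intro z hz
    obtain ⟨p, hp, hz1, hz2⟩ := mem_cells.mp hz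
    obtain ⟨-, w, ⟨hw1, hw2⟩, hw⟩ := Finset.mem_filter.mp hp
    apply hth
    rw [Metric.mem_thickening_iff]
    refine ⟨_, hw, ?_⟩
    rw [dist_eq_norm, ← mul_sub, norm_mul, Complex.norm_real, Real.norm_of_nonneg hδ.le]
    have h1 := Complex.norm_le_abs_re_add_abs_im (z - w)
    have h2 : |(z - w).re| ≤ 2 := by
      rw [abs_le] at *; simp only [Complex.sub_re]; constructor <;> linarith
    have h3 : |(z - w).im| ≤ 2 := by
      rw [abs_le] at *; simp only [Complex.sub_im]; constructor <;> linarith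
    have h4 : ‖z - w‖ ≤ 4 := by linarith
    calc δ * ‖z - w‖ ≤ δ * 4 := by gcongr
      _ < ε := by simp only [δ]; linarith
  obtain ⟨A, hSA, hExt, hadj⟩ := adj_all hWc S n (Finset.filter_subset _ _)
  let O : Set ℂ := gridCells A \ gridCells S
  have hOo : IsOpen O := by
    have hcl : IsClosed (gridCells S ∪ ⋃ p : {p : ℤ × ℤ // p ∉ A}, gridSq p) :=
      (cells_closed S).union
        ((gridSq_lf.comp_injective Subtype.val_injective).isClosed_iUnion fun p => gridSq_closed p)
    have : O = (gridCells S ∪ ⋃ p : {p : ℤ × ℤ // p ∉ A}, gridSq p)ᶜ := by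
      ext z
      simp only [O, mem_sdiff, mem_compl_iff, mem_union, not_or, mem_iUnion, not_exists]
      constructor
      · rintro ⟨h1, h2⟩
        refine ⟨h2, ?_⟩
        rintro ⟨⟨t1, t2⟩, ht⟩ ⟨ht1, ht2⟩
        obtain ⟨⟨s1, s2⟩, hs, hs1, hs2⟩ := mem_cells.mp h1
        have hnS : ∀ p, z ∈ gridSq p → p ∉ S := fun p hp hpS => h2 (mem_cells.mpr ⟨p, hpS, hp⟩)
        have a1 := hadj _ hs (hnS _ ⟨hs1, hs2⟩)
        have hm : (t1, s2) ∈ A := by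
          rcases int_aux2 hs1 ht1 with h | h | h
          · simp only at h; rw [h]; exact hs
          · simp only at h; rw [h]; exact a1.1
          · simp only at h; rw [h]; exact a1.2.1
        have a2 := hadj _ hm (hnS _ ⟨ht1, hs2⟩)
        apply ht
        rcases int_aux2 hs2 ht2 with h | h | h
        · simp only at h; rw [h]; exact hm
        · simp only at h; rw [h]; exact a2.2.2.1
        · simp only at h; rw [h]; exact a2.2.2.2
      · rintro ⟨h1, h2⟩
        refine ⟨?_, h1⟩
        obtain ⟨m, hm⟩ := exists_nat_ge ‖z‖
        have h0 : (0 : ℝ) ≤ m := by positivity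
        obtain ⟨p, -, hp⟩ := mem_cells.mp (mem_box m z
          ((Complex.abs_re_le_norm z).trans (by linarith))
          ((Complex.abs_im_le_norm z).trans (by linarith)))
        by_cases hpA : p ∈ A
        · exact mem_cells.mpr ⟨p, hpA, hp⟩
        · exact absurd hp (h2 ⟨p, hpA⟩)
    rw [this]
    exact hcl.isOpen_compl
  have hsqb : ∀ p, Bornology.IsBounded (gridSq p) := by
    intro p
    apply isBounded_iff_forall_norm_le.mpr
    refine ⟨|2 * (p.1 : ℝ)| + 1 + (|2 * (p.2 : ℝ)| + 1), ?_⟩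
    rintro z ⟨h1, h2⟩
    have h3 := Complex.norm_le_abs_re_add_abs_im z
    have h4 := abs_sub_abs_le_abs_sub z.re (2 * p.1)
    have h5 := abs_sub_abs_le_abs_sub z.im (2 * p.2)
    linarith
  have hOb : Bornology.IsBounded (gridCells A) :=
    (Bornology.isBounded_biUnion_finset A).mpr fun p _ => hsqb p
  let φ : ℂ ≃ₜ ℂ := Homeomorph.mulLeft₀ (δ : ℂ) hδ'
  have hφ : ∀ z, φ z = δ * z := fun z => rfl
  have hfr : frontier O ⊆ gridCells S := by
    rw [hOo.frontier_eq]
    rintro z ⟨h1, h2⟩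
    by_contra h3
    exact h2 ⟨closure_minimal sdiff_subset (cells_closed A) h1, h3⟩
  have hOW : φ '' O ⊆ W := by
    apply hull
    · exact φ.isOpenMap _ hOo
    · have : IsCompact (φ '' gridCells A) :=
        (Metric.isCompact_of_isClosed_isBounded (cells_closed A) hOb).image φ.continuous
      exact this.isBounded.subset (image_mono sdiff_subset)
    · rw [← φ.image_frontier]
      rintro _ ⟨z, hz, rfl⟩
      exact hSW z (hfr hz)
  have hAW : MapsTo φ (gridCells A) W := by
    intro z hz
    by_cases h : z ∈ gridCells S
    · exact hSW z h
    · exact hOW ⟨z, ⟨hz, h⟩, rfl⟩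
  obtain ⟨F, hFc, hFW, hFe⟩ := hExt φ φ.continuous.continuousOn hAW
  have hFγ : ∀ t, F ((δ : ℂ)⁻¹ * γ t) = γ t := by
    intro t
    have h1 : (δ : ℂ) * ((δ : ℂ)⁻¹ * γ t) = γ t := by field_simp
    have : (δ : ℂ)⁻¹ * γ t ∈ gridCells A := by
      obtain ⟨p, hp, h⟩ := mem_cells.mp (hKS ((δ : ℂ)⁻¹ * γ t) (by rw [h1]; exact mem_range_self t))
      exact mem_cells.mpr ⟨p, hSA hp, h⟩
    rw [hFe this, hφ, h1]
  have hFx : F ((δ : ℂ)⁻¹ * x) = x := by simpa using hFγ 0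
  let H : unitInterval × unitInterval → ℂ := fun q =>
    F ((δ : ℂ)⁻¹ * ((1 - ((q.1 : ℝ) : ℂ)) * γ q.2 + ((q.1 : ℝ) : ℂ) * x))
  have hHc : Continuous H := by fun_prop
  refine ⟨{ toFun := H, continuous_toFun := hHc, map_zero_left := ?_, map_one_left := ?_,
            prop' := ?_ }, fun q => hFW _⟩
  · intro t; simp [H, hFγ]
  · intro t; simp [H, hFx]
  · rintro t q (rfl | hq)
    · simp [H, ← add_mul, hFx]
    · rw [mem_singleton_iff] at hq
      subst hq
      simp [H, ← add_mul, hFx]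

/-- if `U`, `V` are simply connected open subsets of `ℂ` and
`g : U → ℂ` is holomorphic, then every connected component of
`g⁻¹(V) = {z ∈ U | g z ∈ V}` is simply connected. -/
theorem stmt_12 (U V : Set ℂ) (hU : IsOpen U) (hV : IsOpen V)
    (hUsc : SimplyConnectedSpace U) (hVsc : SimplyConnectedSpace V)
    (g : ℂ → ℂ) (hg : DifferentiableOn ℂ g U)
    (W : Set ℂ)
    (hW : ∃ x ∈ {z ∈ U | g z ∈ V}, W = connectedComponentIn {z ∈ U | g z ∈ V} x) :
    SimplyConnectedSpace W := by
  obtain ⟨x, hx, rfl⟩ := hW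
  have hUs : IsSimplyConnected U := hUsc
  have hVs : IsSimplyConnected V := hVsc
  have hUc : IsPreconnected U := hUs.isPathConnected.isConnected.isPreconnected
  rcases (hg.analyticOnNhd hU).is_constant_or_isOpen hUc with ⟨w, hw⟩ | hopen
  · have hG : {z ∈ U | g z ∈ V} = U := by
      ext z
      refine ⟨fun h => h.1, fun h => ⟨h, ?_⟩⟩
      rw [hw z h, ← hw x hx.1]; exact hx.2
    rw [hG, hUc.connectedComponentIn hx.1]
    exact hUsc
  · have hGo : IsOpen {z ∈ U | g z ∈ V} := hg.continuousOn.isOpen_inter_preimage hU hV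
    have hWo := hGo.connectedComponentIn (x := x)
    exact sc_of_hull hWo
      ((hWo.isConnected_iff_isPathConnected).mp (isConnected_connectedComponentIn_iff.mpr hx))
      fun O hO hb hf => hull_comp U V hU hV hUs hVs g hg hopen x hO hb hf
end

section
/- Let U ⊆ ℂ be open with every connected component simply connected, and let f : U → ℂ be holomorphic. Define the domains of the iterates of f by D₁ = U and D_{n+1} = { z ∈ U : f(z) ∈ D_n } (so D_n is the domain of definition of fⁿ as a partial map). Then for every n ≥ 1, D_n is open and every connected component of D_n is simply connected. -/
namespace SC13

/-- `IsW E u l v`: the list of directed edges `l` is a walk from `u` to `v` with edges in `E`. -/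
def IsW {V : Type*} (E : V → V → Prop) : V → List (V × V) → V → Prop
  | u, [], v => u = v
  | u, d :: l, v => d.1 = u ∧ E d.1 d.2 ∧ IsW E d.2 l v

def wprod {V G : Type*} [Group G] (τ : V → V → G) (l : List (V × V)) : G :=
  (l.map (fun d => τ d.1 d.2)).prod

section gen
variable {V : Type*} {E : V → V → Prop}

theorem isW_append {u v : V} {l m : List (V × V)} :
    IsW E u (l ++ m) v ↔ ∃ w, IsW E u l w ∧ IsW E w m v := by
  induction l generalizing u with
  | nil => simp [IsW]
  | cons d l ih => simp [IsW, ih, and_assoc]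

theorem isW_mem {u v : V} {l : List (V × V)} (h : IsW E u l v) : ∀ d ∈ l, E d.1 d.2 := by
  induction l generalizing u with
  | nil => simp
  | cons d l ih =>
    intro e he
    rcases List.mem_cons.1 he with rfl | he
    · exact h.2.1
    · exact ih h.2.2 e he

theorem isW_tele {u v : V} {l : List (V × V)} (h : IsW E u l v) (φ : V → ℤ) :
    (l.map (fun d => φ d.2 - φ d.1)).sum = φ v - φ u := by
  induction l generalizing u with
  | nil => simp [IsW] at h; simp [h]
  | cons d l ih =>
    obtain ⟨rfl, h1, h2⟩ := h
    simp [ih h2]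

theorem wprod_append {G : Type*} [Group G] (τ : V → V → G) (l m : List (V × V)) :
    wprod τ (l ++ m) = wprod τ l * wprod τ m := by simp [wprod]

theorem wprod_cons {G : Type*} [Group G] (τ : V → V → G) (d) (m : List (V × V)) :
    wprod τ (d :: m) = τ d.1 d.2 * wprod τ m := by simp [wprod]

theorem list_sum_ne {α : Type*} (l : List α) (f g : α → ℤ) (h : (l.map f).sum ≠ (l.map g).sum) :
    ∃ d ∈ l, f d ≠ g d := by
  by_contra! hc
  exact h (by rw [List.map_congr_left hc])

theorem exists_opp {α : Type*} (l : List α) (f : α → ℤ) (h : (l.map f).sum = 0) (d : α)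
    (hd : d ∈ l) (hf : f d ≠ 0) : ∃ e ∈ l, f d * f e < 0 := by
  by_contra! hcon
  obtain ⟨a, b, hab⟩ := List.append_of_mem hd
  have hsum : f d * (l.map f).sum = ((a ++ d :: b).map (fun e => f d * f e)).sum := by
    rw [← hab, List.sum_map_mul_left]
  rw [h, mul_zero] at hsum
  rw [hab] at hcon
  have ha : 0 ≤ (a.map (fun e => f d * f e)).sum := by
    apply List.sum_nonneg
    simp only [List.mem_map]
    rintro _ ⟨e, he, rfl⟩
    exact hcon e (by simp [he])
  have hb : 0 ≤ (b.map (fun e => f d * f e)).sum := by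
    apply List.sum_nonneg
    simp only [List.mem_map]
    rintro _ ⟨e, he, rfl⟩
    exact hcon e (by simp [he])
  simp only [List.map_append, List.map_cons, List.sum_append, List.sum_cons] at hsum
  have := mul_self_pos.2 hf
  linarith
end gen

def Adj4 (u v : ℤ × ℤ) : Prop :=
  (u.2 = v.2 ∧ (v.1 = u.1 + 1 ∨ u.1 = v.1 + 1)) ∨ (u.1 = v.1 ∧ (v.2 = u.2 + 1 ∨ u.2 = v.2 + 1))

def nn (c : ℤ × ℤ) (d : (ℤ × ℤ) × (ℤ × ℤ)) : ℤ :=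
  if c.2 < d.1.2 then (if c.1 < d.2.1 then 1 else 0) - (if c.1 < d.1.1 then 1 else 0) else 0

def mu (y0 : ℤ) (l : List ((ℤ × ℤ) × (ℤ × ℤ))) : ℕ :=
  (l.map (fun d => 3 * (if d.1.2 = d.2.2 then (d.1.2 - y0).toNat else 0) + 1)).sum

theorem grid_bound (l : List ((ℤ × ℤ) × (ℤ × ℤ))) : ∃ B : ℤ, ∀ d ∈ l,
    |d.1.1| ≤ B ∧ |d.1.2| ≤ B ∧ |d.2.1| ≤ B ∧ |d.2.2| ≤ B := by
  induction l with
  | nil => simp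
  | cons d l ih =>
    obtain ⟨B, hB⟩ := ih
    refine ⟨|B| + |d.1.1| + |d.1.2| + |d.2.1| + |d.2.2|, ?_⟩
    have h0 := le_abs_self B
    have := abs_nonneg d.1.1
    have := abs_nonneg d.1.2
    have := abs_nonneg d.2.1
    have := abs_nonneg d.2.2
    have := abs_nonneg B
    intro e he
    rcases List.mem_cons.1 he with rfl | he
    · refine ⟨?_, ?_, ?_, ?_⟩ <;> linarith
    · obtain ⟨h1, h2, h3, h4⟩ := hB e he
      refine ⟨?_, ?_, ?_, ?_⟩ <;> linarith

theorem grid_trivial {G : Type*} [Group G] (τ : ℤ × ℤ → ℤ × ℤ → G) (E : ℤ × ℤ → ℤ × ℤ → Prop)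
    (Cell : ℤ × ℤ → Prop)
    (Esymm : ∀ u v, E u v → E v u) (Eadj : ∀ u v, E u v → Adj4 u v)
    (hinv : ∀ u v, E u v → τ u v * τ v u = 1)
    (hcellE : ∀ x y, Cell (x, y) → E (x, y) (x + 1, y) ∧ E (x, y) (x, y + 1) ∧
      E (x + 1, y) (x + 1, y + 1))
    (hcell : ∀ x y, Cell (x, y) → τ (x, y + 1) (x + 1, y + 1) =
      τ (x, y + 1) (x, y) * τ (x, y) (x + 1, y) * τ (x + 1, y) (x + 1, y + 1))
    (hole : ∀ n : ℤ × ℤ → ℤ, (∃ B : ℤ, ∀ c, n c ≠ 0 → |c.1| ≤ B ∧ |c.2| ≤ B) →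
      (∀ x y, n (x, y) ≠ n (x, y + 1) → E (x, y + 1) (x + 1, y + 1)) →
      (∀ x y, n (x, y) ≠ n (x + 1, y) → E (x + 1, y) (x + 1, y + 1)) → ∀ c, n c ≠ 0 → Cell c)
    (u : ℤ × ℤ) (l : List ((ℤ × ℤ) × (ℤ × ℤ))) (hl : IsW E u l u) : wprod τ l = 1 := by
  obtain ⟨y0, hy0⟩ : ∃ y0 : ℤ, ∀ d ∈ l, y0 ≤ d.1.2 ∧ y0 ≤ d.2.2 := by
    obtain ⟨B, hB⟩ := grid_bound l
    exact ⟨-B, fun d hd => ⟨(abs_le.1 (hB d hd).2.1).1, (abs_le.1 (hB d hd).2.2.2).1⟩⟩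
  induction hm : mu y0 l using Nat.strong_induction_on generalizing l u with
  | _ k ih =>
  subst hm
  have mu_app : ∀ a b, mu y0 (a ++ b) = mu y0 a + mu y0 b := by intro a b; simp [mu]
  have mu_cons : ∀ d b, mu y0 (d :: b) =
      (3 * (if d.1.2 = d.2.2 then (d.1.2 - y0).toNat else 0) + 1) + mu y0 b := by
    intro a b; simp [mu]
  -- cancellation
  have cancel0 : ∀ v w a b c, l = a ++ (v, w) :: (b ++ (w, v) :: c) → wprod τ l = 1 := by
    rintro v w a b c rfl
    obtain ⟨v', ha, rfl, hE, hb⟩ := isW_append.1 hl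
    obtain ⟨w', hb, rfl, hE', hc⟩ := isW_append.1 hb
    have hb1 : wprod τ b = 1 := by
      refine ih _ ?_ _ b hb (fun d hd => hy0 d (by simp [hd])) rfl
      simp only [mu_app, mu_cons]; omega
    have hac1 : wprod τ (a ++ c) = 1 := by
      refine ih _ ?_ _ (a ++ c) (isW_append.2 ⟨_, ha, hc⟩) (fun d hd => hy0 d ?_) rfl
      · simp only [mu_app, mu_cons]; omega
      · simp at hd ⊢; tauto
    rw [wprod_append] at hac1
    rw [wprod_append, wprod_cons, wprod_append, wprod_cons, hb1, one_mul, ← mul_assoc (τ _ _),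
      hinv _ _ hE, one_mul, hac1]
  have cancel : ∀ d ∈ l, (d.2, d.1) ∈ l → wprod τ l = 1 := by
    intro d hd hd'
    have hne : d.1 ≠ d.2 := by
      have := Eadj _ _ (isW_mem hl d hd)
      intro h
      rw [h] at this
      rcases this with ⟨_, h | h⟩ | ⟨_, h | h⟩ <;> omega
    obtain ⟨a, b, rfl⟩ := List.append_of_mem hd
    rcases List.mem_append.1 hd' with h | h
    · obtain ⟨a1, a2, rfl⟩ := List.append_of_mem h
      exact cancel0 d.2 d.1 a1 a2 b (by simp)
    · rcases List.mem_cons.1 h with h | h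
      · exact absurd (congrArg Prod.snd h) hne
      · obtain ⟨a1, a2, rfl⟩ := List.append_of_mem h
        exact cancel0 d.1 d.2 a a1 a2 (by simp)
  by_cases hhor : ∃ d ∈ l, d.1.2 = d.2.2
  · obtain ⟨d, hd, hdh, hmax⟩ : ∃ d ∈ l, d.1.2 = d.2.2 ∧ ∀ e ∈ l, e.1.2 = e.2.2 → e.1.2 ≤ d.1.2 := by
      have : ((l.toFinset.filter (fun d => d.1.2 = d.2.2))).Nonempty := by
        obtain ⟨d, hd, h⟩ := hhor
        exact ⟨d, by simp [hd, h]⟩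
      obtain ⟨d, hd, h⟩ := Finset.exists_max_image _ (fun d => d.1.2) this
      simp only [Finset.mem_filter, List.mem_toFinset] at hd h
      exact ⟨d, hd.1, hd.2, fun e he he' => h e ⟨he, he'⟩⟩
    have hadj : ∀ e ∈ l, Adj4 e.1 e.2 := fun e he => Eadj _ _ (isW_mem hl e he)
    -- the counting function
    set n : ℤ × ℤ → ℤ := fun c => (l.map (nn c)).sum with hn
    have below : ∀ c : ℤ × ℤ, (∀ e ∈ l, e.1.2 = e.2.2 → c.2 < e.1.2) → n c = 0 := by
      intro c hc
      have := isW_tele hl (fun v => if c.1 < v.1 then 1 else 0)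
      rw [sub_self] at this
      rw [← this]
      simp only [hn]
      congr 1
      apply List.map_congr_left
      intro e he
      have h1 := hc e he
      have h2 := hadj e he
      simp only [nn, Adj4] at *
      grind
    have hcellN : ∀ c, n c ≠ 0 → Cell c := by
      apply hole n
      · obtain ⟨B, hB⟩ := grid_bound l
        refine ⟨B + 1, fun c hc => ?_⟩
        by_contra hcon
        apply hc
        by_cases hb : c.2 < -B
        · exact below c (fun e he _ => by have := abs_le.1 (hB e he).2.1; omega)
        · simp only [hn]
          apply List.sum_eq_zero
          intro z hz
          obtain ⟨e, he, rfl⟩ := List.mem_map.1 hz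
          obtain ⟨h1, h2, h3, h4⟩ := hB e he
          rw [abs_le] at h1 h2 h3 h4 hcon
          rw [abs_le] at hcon
          simp only [nn]
          split_ifs <;> omega
      · intro x y hxy
        obtain ⟨e, he, hne⟩ := list_sum_ne _ _ _ hxy
        have h2 := hadj e he
        have h3 := isW_mem hl e he
        have h4 := Esymm _ _ h3
        obtain ⟨⟨a, b⟩, ⟨a', b'⟩⟩ := e
        simp only [nn, Adj4] at *
        have : b = y + 1 ∧ b' = y + 1 ∧ ((a = x ∧ a' = x + 1) ∨ (a' = x ∧ a = x + 1)) := by grind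
        obtain ⟨rfl, rfl, ⟨rfl, rfl⟩ | ⟨rfl, rfl⟩⟩ := this <;> assumption
      · intro x y hxy
        have ht := isW_tele hl (fun v => if y < v.2 ∧ v.1 = x + 1 then 1 else 0)
        rw [sub_self] at ht
        have hxy' : (l.map (fun d => nn (x, y) d - nn (x + 1, y) d)).sum ≠
            (l.map (fun d => (if y < d.2.2 ∧ d.2.1 = x + 1 then (1 : ℤ) else 0) -
              (if y < d.1.2 ∧ d.1.1 = x + 1 then 1 else 0))).sum := by
          rw [ht]
          have : (l.map (fun d => nn (x, y) d - nn (x + 1, y) d)).sum = n (x, y) - n (x + 1, y) := by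
            simp only [hn]
            clear * -
            induction l with
            | nil => simp
            | cons d l ih => simp only [List.map_cons, List.sum_cons, ih]; ring
          rw [this]
          exact sub_ne_zero.2 hxy
        obtain ⟨e, he, hne⟩ := list_sum_ne _ _ _ hxy'
        have h2 := hadj e he
        have h3 := isW_mem hl e he
        have h4 := Esymm _ _ h3
        obtain ⟨⟨a, b⟩, ⟨a', b'⟩⟩ := e
        simp only [nn, Adj4] at *
        have : a = x + 1 ∧ a' = x + 1 ∧ ((b = y ∧ b' = y + 1) ∨ (b' = y ∧ b = y + 1)) := by grind
        obtain ⟨rfl, rfl, ⟨rfl, rfl⟩ | ⟨rfl, rfl⟩⟩ := this <;> assumption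
    -- normalize the edge
    obtain ⟨x, y, hxy⟩ : ∃ x y : ℤ, d = ((x, y + 1), (x + 1, y + 1)) ∨ d = ((x + 1, y + 1), (x, y + 1)) := by
      obtain ⟨⟨a, b⟩, ⟨a', b'⟩⟩ := d
      have := hadj _ hd
      simp only [Adj4] at *
      refine ⟨min a a', b - 1, ?_⟩
      grind
    by_cases hnz : n (x, y) = 0
    · -- cancel
      by_contra hcon
      obtain ⟨s, hs⟩ : ∃ s : ℤ, s = nn (x, y) d := ⟨_, rfl⟩
      have hnotin : (d.2, d.1) ∉ l := fun h => hcon (cancel d hd h)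
      have key : ∀ e ∈ l, 0 ≤ s * nn (x, y) e := by
        intro e he
        by_cases hee : nn (x, y) e = 0
        · simp [hee]
        have h2 := hadj e he
        have h3 := hmax e he
        have h5 : e = d ∨ e = (d.2, d.1) := by
          clear hcon hnz hnotin hs hcellN below ih cancel cancel0 mu_app mu_cons hn n
          obtain ⟨⟨a, b⟩, ⟨a', b'⟩⟩ := e
          simp only [nn, Adj4] at *
          rcases hxy with rfl | rfl <;> grind
        rcases h5 with rfl | rfl
        · rw [hs]; exact mul_self_nonneg _
        · exact absurd he hnotin
      have hs2 : s ≠ 0 := by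
        rw [hs]
        rcases hxy with rfl | rfl <;> simp [nn]
      obtain ⟨a, b, hab⟩ := List.append_of_mem hd
      have hsum : s * n (x, y) = ((a ++ d :: b).map (fun e => s * nn (x, y) e)).sum := by
        rw [← hab]
        simp only [hn]
        rw [List.sum_map_mul_left]
      rw [hnz, mul_zero] at hsum
      rw [hab] at key
      have ha : 0 ≤ (a.map (fun e => s * nn (x, y) e)).sum := by
        apply List.sum_nonneg
        simp only [List.mem_map]
        rintro _ ⟨e, he, rfl⟩
        exact key e (by simp [he])
      have hb : 0 ≤ (b.map (fun e => s * nn (x, y) e)).sum := by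
        apply List.sum_nonneg
        simp only [List.mem_map]
        rintro _ ⟨e, he, rfl⟩
        exact key e (by simp [he])
      simp only [List.map_append, List.map_cons, List.sum_append, List.sum_cons] at hsum
      rw [← hs] at hsum
      have := mul_self_pos.2 hs2
      linarith
    · have hC := hcellN _ hnz
      have hy : y0 ≤ y := by
        by_contra hy
        apply hnz
        apply below
        intro e he _
        have := (hy0 e he).1
        simp only
        omega
      obtain ⟨hE1, hE2, hE3⟩ := hcellE _ _ hC
      have hc := hcell _ _ hC
      obtain ⟨a, b, rfl⟩ := List.append_of_mem hd
      obtain ⟨w, ha, h1, h2, hb⟩ := isW_append.1 hl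
      rcases hxy with rfl | rfl
      · have := ih _ ?_ u (a ++ ((x, y + 1), (x, y)) :: ((x, y), (x + 1, y)) ::
          ((x + 1, y), (x + 1, y + 1)) :: b) ?_ ?_ rfl
        · rw [← this]
          simp only [wprod_append, wprod_cons, hc, mul_assoc]
        · simp only [mu_app, mu_cons]
          simp
          omega
        · rw [isW_append]
          exact ⟨w, ha, h1, Esymm _ _ hE2, rfl, hE1, rfl, hE3, hb⟩
        · intro e he
          simp only [List.mem_append, List.mem_cons] at he
          rcases he with he | rfl | rfl | rfl | he
          · exact hy0 e (by simp [he])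
          · simp; omega
          · simp; omega
          · simp; omega
          · exact hy0 e (by simp [he])
      · have hc' : τ (x + 1, y + 1) (x, y + 1) =
            τ (x + 1, y + 1) (x + 1, y) * (τ (x + 1, y) (x, y) * τ (x, y) (x, y + 1)) := by
          have e1 := mul_eq_one_iff_eq_inv.1 (hinv _ _ h2)
          have e2 := mul_eq_one_iff_eq_inv.1 (hinv _ _ (Esymm _ _ hE3))
          have e3 := mul_eq_one_iff_eq_inv.1 (hinv _ _ (Esymm _ _ hE1))
          have e4 := mul_eq_one_iff_eq_inv.1 (hinv _ _ hE2)
          rw [e1, e2, e3, e4, hc]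
          simp [mul_assoc]
        have := ih _ ?_ u (a ++ ((x + 1, y + 1), (x + 1, y)) :: ((x + 1, y), (x, y)) ::
          ((x, y), (x, y + 1)) :: b) ?_ ?_ rfl
        · rw [← this]
          simp only [wprod_append, wprod_cons, hc', mul_assoc]
        · simp only [mu_app, mu_cons]
          simp
          omega
        · rw [isW_append]
          exact ⟨w, ha, h1, Esymm _ _ hE3, rfl, Esymm _ _ hE1, rfl, hE2, hb⟩
        · intro e he
          simp only [List.mem_append, List.mem_cons] at he
          rcases he with he | rfl | rfl | rfl | he
          · exact hy0 e (by simp [he])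
          · simp; omega
          · simp; omega
          · simp; omega
          · exact hy0 e (by simp [he])
  · push Not at hhor
    cases l with
    | nil => simp [wprod]
    | cons d l' =>
      have hadj : ∀ e ∈ d :: l', Adj4 e.1 e.2 := fun e he => Eadj _ _ (isW_mem hl e he)
      have ht : ∀ y x : ℤ, _ := fun y x => isW_tele hl (fun v => if y < v.2 ∧ v.1 = x then 1 else 0)
      simp only [sub_self] at ht
      have hd : d ∈ d :: l' := by simp
      obtain ⟨e, he, hlt⟩ := exists_opp _ _ (ht (min d.1.2 d.2.2) d.1.1) d hd (by
        have h1 := hadj d hd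
        have h2 := hhor d hd
        simp only [Adj4] at *
        grind)
      apply cancel d hd
      convert he using 1
      have h1 := hadj d hd
      have h2 := hhor d hd
      have h3 := hadj e he
      have h4 := hhor e he
      clear * - h1 h2 h3 h4 hlt
      obtain ⟨⟨a, b⟩, ⟨a', b'⟩⟩ := e
      obtain ⟨⟨x, y⟩, ⟨x', y'⟩⟩ := d
      simp only [Adj4] at *
      have h1' : x = x' ∧ (y' = y + 1 ∨ y = y' + 1) := by tauto
      have h3' : a = a' ∧ (b' = b + 1 ∨ b = b' + 1) := by tauto
      clear h1 h2 h3 h4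
      obtain ⟨rfl, h1⟩ := h1'
      obtain ⟨rfl, h3⟩ := h3'
      simp only [Prod.mk.injEq]
      by_cases hax : a = x
      · subst hax
        simp only [and_true, true_and] at *
        rcases h1 with rfl | rfl <;> rcases h3 with rfl | rfl <;> simp at hlt ⊢ <;>
          split_ifs at hlt <;> omega
      · simp [hax] at hlt
open Set Filter Topology

def HoleFree (V : Set ℂ) : Prop :=
  ∀ Ω : Set ℂ, IsOpen Ω → Bornology.IsBounded Ω → frontier Ω ⊆ V → Ω ⊆ V

theorem empty_of_frontier {A : Set ℂ} (hA : Bornology.IsBounded A) (hf : frontier A = ∅) : A = ∅ := by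
  rcases isClopen_iff.1 (isClopen_iff_frontier_eq_empty.2 hf) with h | h
  · exact h
  · subst h
    exact absurd hA (NormedSpace.unbounded_univ ℂ ℂ)

theorem no_log (a : ℂ) (R : ℝ) (hR : 0 < R) (G : ℂ → ℂ) (hG : Continuous G)
    (h : ∀ z, ‖z - a‖ = R → Complex.exp (G z) = z - a) : False := by
  set k : ℝ → ℝ := fun θ => ((G (a + R * Complex.exp (θ * Complex.I))).im - θ) / (2 * Real.pi) with hk
  have hkc : Continuous k := by fun_prop
  have hpi := Real.pi_pos
  have hint : ∀ θ, ∃ n : ℤ, k θ = n := by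
    intro θ
    have h1 := h (a + R * Complex.exp (θ * Complex.I)) (by
      simp [Complex.norm_exp_ofReal_mul_I, hR.le])
    have h2 : Complex.exp (G (a + R * Complex.exp (θ * Complex.I))) =
        Complex.exp (Real.log R + θ * Complex.I) := by
      rw [h1, Complex.exp_add, ← Complex.ofReal_exp, Real.exp_log hR]; ring
    obtain ⟨n, hn⟩ := Complex.exp_eq_exp_iff_exists_int.1 h2
    refine ⟨n, ?_⟩
    have h3 := congrArg Complex.im hn
    simp at h3
    simp only [hk]
    rw [h3]
    field_simp
    ring
  have h0 : k (2 * Real.pi) = k 0 - 1 := by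
    simp only [hk]
    push_cast
    rw [Complex.exp_two_pi_mul_I]
    simp
    field_simp
  have hiv := intermediate_value_Icc' (by positivity : (0 : ℝ) ≤ 2 * Real.pi) hkc.continuousOn
  obtain ⟨θ, -, hθ⟩ := hiv (show k 0 - 1 / 2 ∈ _ from ⟨by linarith, by linarith⟩)
  obtain ⟨n, hn⟩ := hint θ
  obtain ⟨m, hm⟩ := hint 0
  rw [hn, hm] at hθ
  have : (2 * n : ℝ) = 2 * m - 1 := by linarith
  have : (2 * n : ℤ) = 2 * m - 1 := by exact_mod_cast this
  omega

theorem exists_log {U : Set ℂ} (hU : IsOpen U)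
    (hUsc : ∀ x ∈ U, SimplyConnectedSpace (connectedComponentIn U x)) (a : ℂ) (ha : a ∉ U) :
    ∃ g : ℂ → ℂ, ContinuousOn g U ∧ ∀ z ∈ U, Complex.exp (g z) = z - a := by
  have h1 : ∀ C : Set ℂ, ∃ F : ℂ → ℂ, ∀ x ∈ U, C = connectedComponentIn U x →
      ContinuousOn F C ∧ ∀ z ∈ C, Complex.exp (F z) = z - a := by
    intro C
    by_cases hC : ∃ x ∈ U, C = connectedComponentIn U x
    · obtain ⟨x, hx, rfl⟩ := hC
      obtain ⟨F, hF, hF'⟩ := Complex.exists_continuousOn_eqOn_exp_comp (hUsc x hx)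
        hU.connectedComponentIn (g := fun z => z - a) (by fun_prop) (by
          rintro ⟨z, hz, hz'⟩
          rw [sub_eq_zero] at hz'
          subst hz'
          exact ha (connectedComponentIn_subset _ _ hz))
      exact ⟨F, fun _ _ _ => ⟨hF, fun z hz => hF' hz⟩⟩
    · push Not at hC
      exact ⟨id, fun x hx h => absurd h (hC x hx)⟩
  choose F hF using h1
  refine ⟨fun z => F (connectedComponentIn U z) z, fun z hz => ?_, fun z hz =>
    (hF _ z hz rfl).2 z (mem_connectedComponentIn hz)⟩
  have hn : connectedComponentIn U z ∈ 𝓝 z :=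
    hU.connectedComponentIn.mem_nhds (mem_connectedComponentIn hz)
  have hc := ((hF _ z hz rfl).1.continuousAt hn)
  refine (hc.congr ?_).continuousWithinAt
  filter_upwards [hn] with w hw
  rw [connectedComponentIn_eq hw]

theorem holeFree_of_sc {U : Set ℂ} (hU : IsOpen U)
    (hUsc : ∀ x ∈ U, SimplyConnectedSpace (connectedComponentIn U x)) : HoleFree U := by
  classical
  intro Ω hΩ hb hfr a haΩ
  by_contra ha
  obtain ⟨g, hg, hge⟩ := exists_log hU hUsc a ha
  obtain ⟨L, hL⟩ := ContinuousMap.exists_restrict_eq (Y := ℂ) (isClosed_frontier (s := Ω))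
    ⟨(frontier Ω).domRestrict g, continuousOn_iff_continuous_domRestrict.1 (hg.mono hfr)⟩
  have hL' : ∀ z ∈ frontier Ω, L z = g z := fun z hz => congrArg (fun f => f ⟨z, hz⟩) hL
  set F : ℂ → ℂ := Ω.piecewise (fun z => Complex.exp (L z)) (fun z => z - a) with hF
  have hFc : Continuous F := by
    refine Continuous.piecewise ?_ (by fun_prop) (by fun_prop)
    intro z hz
    rw [hL' z hz, hge z (hfr hz)]
  have hF0 : ∀ z, F z ≠ 0 := by
    intro z
    by_cases hz : z ∈ Ω
    · simp [hF, hz]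
    · simp only [hF, hz, not_false_eq_true, piecewise_eq_of_notMem]
      rw [sub_ne_zero]
      rintro rfl
      exact hz haΩ
  have huniv : IsSimplyConnected (univ : Set ℂ) :=
    ((Homeomorph.Set.univ ℂ).toHomotopyEquiv).simplyConnectedSpace
  obtain ⟨G, hG, hGe⟩ := Complex.exists_continuousOn_eqOn_exp_comp huniv isOpen_univ
    hFc.continuousOn (by rintro ⟨z, -, hz⟩; exact hF0 z hz)
  obtain ⟨R, hR⟩ := hb.subset_ball a
  refine no_log a (max R 1) (by positivity) G (continuousOn_univ.1 hG) (fun z hz => ?_)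
  have h1 := hGe (mem_univ z)
  simp only [Function.comp] at h1
  rw [h1]
  have : z ∉ Ω := by
    intro h
    have := hR h
    rw [Metric.mem_ball, dist_eq_norm, hz] at this
    exact absurd this (by simp)
  simp [hF, this]

theorem holeFree_preimage {U W : Set ℂ} (hU : IsOpen U) (hUH : HoleFree U) (hWH : HoleFree W)
    (f : ℂ → ℂ) (hf : DifferentiableOn ℂ f U) : HoleFree {z ∈ U | f z ∈ W} := by
  intro Ω hΩ hb hfr
  have hΩU : Ω ⊆ U := hUH Ω hΩ hb (fun z hz => (hfr hz).1)
  have hcl : closure Ω = Ω ∪ frontier Ω := closure_eq_self_union_frontier Ω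
  have hclU : closure Ω ⊆ U := by
    rw [hcl]; exact union_subset hΩU (fun z hz => (hfr hz).1)
  have hK : IsCompact (closure Ω) := hb.isCompact_closure
  have hfc : ContinuousOn f (closure Ω) := hf.continuousOn.mono hclU
  have hKi : IsCompact (f '' closure Ω) := hK.image_of_continuousOn hfc
  have hfrc : IsCompact (f '' frontier Ω) :=
    (hK.of_isClosed_subset isClosed_frontier frontier_subset_closure).image_of_continuousOn
      (hfc.mono frontier_subset_closure)
  have han : ∀ z ∈ U, AnalyticAt ℂ f z := fun z hz => hf.analyticAt (hU.mem_nhds hz)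
  set O := f '' closure Ω \ f '' frontier Ω with hO
  have hOo : IsOpen O := by
    rw [isOpen_iff_mem_nhds]
    rintro y ⟨⟨z, hz, rfl⟩, hy⟩
    have hzΩ : z ∈ Ω := by
      rw [hcl] at hz
      exact hz.resolve_right (fun h => hy ⟨z, h, rfl⟩)
    rcases (han z (hΩU hzΩ)).eventually_constant_or_nhds_le_map_nhds with h | h
    · exfalso
      set A := {w ∈ Ω | ∀ᶠ v in 𝓝 w, f v = f z} with hA
      have hAe : A = ∅ := by
        refine empty_of_frontier (hb.subset (fun w hw => hw.1)) ?_
        have hAo : IsOpen A := by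
          have : A = Ω ∩ {w | ∀ᶠ v in 𝓝 w, f v = f z} := rfl
          rw [this]
          exact hΩ.inter isOpen_setOfPred_eventually_nhds
        rw [hAo.frontier_eq]
        ext p
        simp only [Set.mem_sdiff, mem_empty_iff_false, iff_false, not_and, not_not]
        intro hp
        have hpc : p ∈ closure Ω := closure_mono (fun w hw => hw.1) hp
        have hfreq : ∃ᶠ w in 𝓝 p, f w = f z :=
          (mem_closure_iff_frequently.1 hp).mono (fun w hw => hw.2.self_of_nhds)
        have hfp : f p = f z := by
          have hca : ContinuousAt f p := (han p (hclU hpc)).continuousAt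
          by_contra hne
          exact hfreq (hca.eventually_ne hne)
        have hpΩ : p ∈ Ω := by
          rw [hcl] at hpc
          exact hpc.resolve_right (fun h => hy ⟨p, h, hfp⟩)
        by_contra hpA
        refine hpA ⟨hpΩ, ?_⟩
        have hfreq' : ∃ᶠ w in 𝓝[≠] p, f w = f z := by
          rw [frequently_nhdsWithin_iff]
          refine (mem_closure_iff_frequently.1 hp).mono (fun w hw => ⟨hw.2.self_of_nhds, ?_⟩)
          rintro rfl
          exact hpA hw
        exact ((han p (hΩU hpΩ)).frequently_eq_iff_eventually_eq analyticAt_const).1 hfreq'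
      have : z ∈ A := ⟨hzΩ, h⟩
      rw [hAe] at this
      exact this
    · have h1 : f '' Ω ∈ 𝓝 (f z) := h (image_mem_map (hΩ.mem_nhds hzΩ))
      filter_upwards [h1, hfrc.isClosed.isOpen_compl.mem_nhds hy] with w hw hw'
      exact ⟨image_mono subset_closure hw, hw'⟩
  have hOW : O ⊆ W := by
    refine hWH O hOo (hKi.isBounded.subset sdiff_subset) ?_
    rw [hOo.frontier_eq]
    rintro y ⟨hy, hy'⟩
    have : y ∈ f '' closure Ω := (closure_minimal sdiff_subset hKi.isClosed) hy
    by_cases h : y ∈ f '' frontier Ω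
    · obtain ⟨w, hw, rfl⟩ := h
      exact (hfr hw).2
    · exact absurd ⟨this, h⟩ hy'
  intro z hz
  refine ⟨hΩU hz, ?_⟩
  by_cases h : f z ∈ f '' frontier Ω
  · obtain ⟨w, hw, he⟩ := h
    rw [← he]
    exact (hfr hw).2
  · exact hOW ⟨⟨z, subset_closure hz, rfl⟩, h⟩

theorem holeFree_component {V : Set ℂ} (hV : IsOpen V) (hH : HoleFree V) (x : ℂ) :
    HoleFree (connectedComponentIn V x) := by
  intro Ω hΩ hb hfr
  have hΩV : Ω ⊆ V := hH Ω hΩ hb (hfr.trans (connectedComponentIn_subset _ _))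
  have hCo : IsOpen (connectedComponentIn V x) := hV.connectedComponentIn
  have hAo : IsOpen (Ω \ connectedComponentIn V x) := by
    rw [isOpen_iff_mem_nhds]
    rintro z ⟨hz, hzC⟩
    filter_upwards [hΩ.mem_nhds hz,
      hV.connectedComponentIn.mem_nhds (mem_connectedComponentIn (hΩV hz))] with w hw hwz
    refine ⟨hw, fun hwx => hzC ?_⟩
    rw [connectedComponentIn_eq hwx, ← connectedComponentIn_eq hwz]
    exact mem_connectedComponentIn (hΩV hz)
  rw [← sdiff_eq_empty]
  refine empty_of_frontier (hb.subset sdiff_subset) ?_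
  rw [hAo.frontier_eq]
  ext p
  simp only [Set.mem_sdiff, mem_empty_iff_false, iff_false]
  rintro ⟨hp, hp'⟩
  have hpc : p ∈ closure Ω := closure_mono sdiff_subset hp
  have hpC : p ∉ connectedComponentIn V x := by
    intro h
    obtain ⟨w, hw, hw'⟩ := mem_closure_iff.1 hp _ hCo h
    exact hw'.2 hw
  rw [closure_eq_self_union_frontier] at hpc
  rcases hpc with h | h
  · exact hp' ⟨h, hpC⟩
  · exact hpC (hfr h)

noncomputable def ev (N : ℝ) (v : ℤ × ℤ) : ℂ := ⟨v.1 / N, v.2 / N⟩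

def sq (N : ℝ) (c : ℤ × ℤ) : Set ℂ :=
  {z | (c.1 ≤ N * z.re ∧ N * z.re ≤ c.1 + 1) ∧ (c.2 ≤ N * z.im ∧ N * z.im ≤ c.2 + 1)}

def EE (N : ℝ) (V : Set ℂ) (u v : ℤ × ℤ) : Prop := Adj4 u v ∧ segment ℝ (ev N u) (ev N v) ⊆ V

theorem seg_h {N : ℝ} (hN : 0 < N) {z : ℂ} {x y : ℤ} (h1 : x ≤ N * z.re) (h2 : N * z.re ≤ x + 1)
    (h3 : N * z.im = y) : z ∈ segment ℝ (ev N (x, y)) (ev N (x + 1, y)) := by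
  refine ⟨1 - (N * z.re - x), N * z.re - x, by linarith, by linarith, by ring, ?_⟩
  apply Complex.ext
  · simp [ev]; field_simp; ring
  · simp [ev]; rw [← h3]; field_simp; ring

theorem seg_v {N : ℝ} (hN : 0 < N) {z : ℂ} {x y : ℤ} (h1 : y ≤ N * z.im) (h2 : N * z.im ≤ y + 1)
    (h3 : N * z.re = x) : z ∈ segment ℝ (ev N (x, y)) (ev N (x, y + 1)) := by
  refine ⟨1 - (N * z.im - y), N * z.im - y, by linarith, by linarith, by ring, ?_⟩
  apply Complex.ext
  · simp [ev]; rw [← h3]; field_simp; ring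
  · simp [ev]; field_simp; ring

theorem convex_box (A B : Set ℝ) (N : ℝ) (hA : Convex ℝ A) (hB : Convex ℝ B) :
    Convex ℝ {z : ℂ | N * z.re ∈ A ∧ N * z.im ∈ B} := by
  have h1 : IsLinearMap ℝ (fun z : ℂ => N * z.re) :=
    ⟨fun a b => by simp [mul_add], fun c a => by simp; ring⟩
  have h2 : IsLinearMap ℝ (fun z : ℂ => N * z.im) :=
    ⟨fun a b => by simp [mul_add], fun c a => by simp; ring⟩
  exact (hA.is_linear_preimage h1).inter (hB.is_linear_preimage h2)

theorem convex_sq (N : ℝ) (c) : Convex ℝ (sq N c) :=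
  convex_box (Icc _ _) (Icc _ _) N (convex_Icc _ _) (convex_Icc _ _)

theorem isClosed_sq (N : ℝ) (c) : IsClosed (sq N c) := by
  have h1 : Continuous (fun z : ℂ => N * z.re) := by fun_prop
  have h2 : Continuous (fun z : ℂ => N * z.im) := by fun_prop
  exact (isClosed_Icc.preimage h1).inter (isClosed_Icc.preimage h2)

theorem ev_mem_sq {N : ℝ} (hN : 0 < N) {x y a b : ℤ} (h1 : x ≤ a) (h2 : a ≤ x + 1) (h3 : y ≤ b)
    (h4 : b ≤ y + 1) : ev N (a, b) ∈ sq N (x, y) := by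
  have e1 : N * (a / N : ℝ) = a := by field_simp
  have e2 : N * (b / N : ℝ) = b := by field_simp
  simp only [sq, ev, mem_ofPred_eq, e1, e2]
  exact ⟨⟨by exact_mod_cast h1, by exact_mod_cast h2⟩, by exact_mod_cast h3, by exact_mod_cast h4⟩

theorem floor_near (t : ℝ) : ∀ᶠ s in 𝓝 t, (⌊s⌋ : ℝ) ≤ t ∧ t ≤ ⌊s⌋ + 1 := by
  have h1 : (⌈t⌉ : ℝ) - 1 < t := by linarith [Int.ceil_lt_add_one t]
  have h2 : t < (⌊t⌋ : ℝ) + 1 := Int.lt_floor_add_one t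
  filter_upwards [Ioo_mem_nhds h1 h2] with s hs
  have h3 : ⌊s⌋ ≤ ⌊t⌋ := by
    have : ⌊s⌋ < ⌊t⌋ + 1 := Int.floor_lt.2 (by exact_mod_cast hs.2)
    omega
  have h4 : ⌈t⌉ - 1 ≤ ⌊s⌋ := Int.le_floor.2 (by push_cast; exact hs.1.le)
  constructor
  · exact le_trans (by exact_mod_cast h3) (Int.floor_le t)
  · have : (⌈t⌉ : ℝ) ≤ ⌊s⌋ + 1 := by exact_mod_cast (by omega : ⌈t⌉ ≤ ⌊s⌋ + 1)
    exact le_trans (Int.le_ceil t) this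

theorem hole_grid {V : Set ℂ} (hV : HoleFree V) {N : ℝ} (hN : 0 < N) (n : ℤ × ℤ → ℤ)
    (hb : ∃ B : ℤ, ∀ c, n c ≠ 0 → |c.1| ≤ B ∧ |c.2| ≤ B)
    (hh : ∀ x y, n (x, y) ≠ n (x, y + 1) → EE N V (x, y + 1) (x + 1, y + 1))
    (hv : ∀ x y, n (x, y) ≠ n (x + 1, y) → EE N V (x + 1, y) (x + 1, y + 1))
    (c : ℤ × ℤ) (hc : n c ≠ 0) : sq N c ⊆ V := by
  set S : Set ℂ := ⋃ c ∈ {c | n c ≠ 0}, sq N c with hS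
  obtain ⟨B, hB⟩ := hb
  have hfin : {c | n c ≠ 0}.Finite := by
    refine ((Set.finite_Icc (-B) B).prod (Set.finite_Icc (-B) B)).subset (fun c hc => ?_)
    have := hB c hc
    rw [abs_le, abs_le] at this
    exact this
  have hSc : IsClosed S := hfin.isClosed_biUnion (fun c _ => isClosed_sq N c)
  have hSb : Bornology.IsBounded S := by
    rw [hS, Bornology.isBounded_biUnion hfin]
    intro c _
    have h1 : sq N c ⊆ Icc (c.1 / N : ℝ) ((c.1 + 1) / N) ×ℂ Icc (c.2 / N : ℝ) ((c.2 + 1) / N) := by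
      rintro z ⟨⟨h1, h2⟩, h3, h4⟩
      refine ⟨⟨?_, ?_⟩, ?_, ?_⟩
      · rw [div_le_iff₀ hN]; linarith
      · rw [le_div_iff₀ hN]; linarith
      · rw [div_le_iff₀ hN]; linarith
      · rw [le_div_iff₀ hN]; linarith
    exact ((Metric.isBounded_Icc _ _).reProdIm (Metric.isBounded_Icc _ _)).subset h1
  have hSfr : S \ interior S ⊆ V := by
    rintro z ⟨hz, hzi⟩
    obtain ⟨c, hc, hzc⟩ : ∃ c, n c ≠ 0 ∧ z ∈ sq N c := by simpa [hS] using hz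
    obtain ⟨c', hc', hzc'⟩ : ∃ c', n c' = 0 ∧ z ∈ sq N c' := by
      by_contra! hcon
      apply hzi
      rw [mem_interior_iff_mem_nhds]
      have h1 : Tendsto (fun z : ℂ => N * z.re) (𝓝 z) (𝓝 (N * z.re)) :=
        Continuous.tendsto (by fun_prop) z
      have h2 : Tendsto (fun z : ℂ => N * z.im) (𝓝 z) (𝓝 (N * z.im)) :=
        Continuous.tendsto (by fun_prop) z
      filter_upwards [h1.eventually (floor_near _), h2.eventually (floor_near _)] with w hw1 hw2
      rw [hS]
      simp only [mem_ofPred_eq, mem_iUnion]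
      refine ⟨(⌊N * w.re⌋, ⌊N * w.im⌋), ?_, ?_⟩
      · intro h0
        exact hcon _ h0 ⟨hw1, hw2⟩
      · exact ⟨⟨Int.floor_le _, (Int.lt_floor_add_one _).le⟩,
          ⟨Int.floor_le _, (Int.lt_floor_add_one _).le⟩⟩
    obtain ⟨x, y⟩ := c
    obtain ⟨x', y'⟩ := c'
    obtain ⟨⟨a1, a2⟩, a3, a4⟩ := hzc
    obtain ⟨⟨b1, b2⟩, b3, b4⟩ := hzc'
    simp only at a1 a2 a3 a4 b1 b2 b3 b4
    -- horizontal move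
    have H : ∀ x y : ℤ, n (x, y) ≠ n (x + 1, y) → ((x + 1 : ℤ) : ℝ) ≤ N * z.re → N * z.re ≤ x + 1 →
        y ≤ N * z.im → N * z.im ≤ y + 1 → z ∈ V := by
      intro x y hne h1 h2 h3 h4
      exact (hv x y hne).2 (seg_v hN h3 h4 (le_antisymm (by push_cast; exact h2) h1))
    have W : ∀ x y : ℤ, n (x, y) ≠ n (x, y + 1) → ((y + 1 : ℤ) : ℝ) ≤ N * z.im → N * z.im ≤ y + 1 →
        x ≤ N * z.re → N * z.re ≤ x + 1 → z ∈ V := by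
      intro x y hne h1 h2 h3 h4
      exact (hh x y hne).2 (seg_h hN h3 h4 (le_antisymm (by push_cast; exact h2) h1))
    have hx1 : x ≤ x' + 1 := by exact_mod_cast a1.trans b2
    have hx2 : x' ≤ x + 1 := by exact_mod_cast b1.trans a2
    have hy1 : y ≤ y' + 1 := by exact_mod_cast a3.trans b4
    have hy2 : y' ≤ y + 1 := by exact_mod_cast b3.trans a4
    by_cases hmid : n (x', y) = 0
    · -- differ in x
      have : x = x' ∨ x = x' + 1 ∨ x' = x + 1 := by omega
      rcases this with rfl | rfl | rfl
      · exact absurd hmid hc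
      · exact H x' y (by rw [hmid]; exact hc.symm) a1 b2 a3 a4
      · exact H x y (by rw [hmid]; exact hc) b1 a2 a3 a4
    · have : y = y' ∨ y = y' + 1 ∨ y' = y + 1 := by omega
      rcases this with rfl | rfl | rfl
      · exact absurd hc' hmid
      · exact W x' y' (by rw [hc']; exact fun h => hmid h.symm) a3 b4 b1 b2
      · exact W x' y (by rw [hc']; exact hmid) b3 a4 b1 b2
  have hfr : frontier (interior S) ⊆ V := by
    refine subset_trans ?_ hSfr
    rw [isOpen_interior.frontier_eq]
    exact sdiff_subset_sdiff_left (closure_minimal interior_subset hSc)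
  have hint := hV _ isOpen_interior (hSb.subset interior_subset) hfr
  intro z hz
  have hzS : z ∈ S := by
    rw [hS]; simp only [mem_iUnion]; exact ⟨c, hc, hz⟩
  by_cases h : z ∈ interior S
  · exact hint h
  · exact hSfr ⟨hzS, h⟩

theorem exists_cl (X : Type) [TopologicalSpace X] [PathConnectedSpace X] :
    ∃ (G : Type) (_ : Group G) (cl : ∀ x y : X, Path x y → G),
      (∀ x y (p q : Path x y), p.Homotopic q → cl x y p = cl x y q) ∧
      (∀ x y z (p : Path x y) (q : Path y z), cl x z (p.trans q) = cl x y p * cl y z q) ∧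
      (∀ x, cl x x (Path.refl x) = 1) ∧
      (∀ x (p : Path x x), cl x x p = 1 → p.Homotopic (Path.refl x)) := by
  obtain ⟨x0⟩ := (inferInstance : Nonempty X)
  obtain ⟨s⟩ : Nonempty (∀ x, Path.Homotopic.Quotient x0 x) := ⟨fun x =>
    Path.Homotopic.Quotient.mk (PathConnectedSpace.somePath x0 x)⟩
  let m : Mul (Path.Homotopic.Quotient x0 x0) := ⟨fun a b => a.trans b⟩
  let i : Inv (Path.Homotopic.Quotient x0 x0) := ⟨fun a => a.symm⟩
  let o : One (Path.Homotopic.Quotient x0 x0) := ⟨Path.Homotopic.Quotient.refl x0⟩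
  let g : Group (Path.Homotopic.Quotient x0 x0) := Group.ofLeftAxioms
    (fun a b c => Path.Homotopic.Quotient.trans_assoc a b c)
    (fun a => Path.Homotopic.Quotient.refl_trans a)
    (fun a => Path.Homotopic.Quotient.symm_trans a)
  have hmul : ∀ a b : Path.Homotopic.Quotient x0 x0, a * b = a.trans b := fun a b => rfl
  have hone : (1 : Path.Homotopic.Quotient x0 x0) = Path.Homotopic.Quotient.refl x0 := rfl
  refine ⟨Path.Homotopic.Quotient x0 x0, g, fun x y p =>
      ((s x).trans ((Path.Homotopic.Quotient.mk p).trans (s y).symm)), ?_, ?_, ?_, ?_⟩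
  · intro x y p q h
    beta_reduce
    rw [Path.Homotopic.Quotient.eq.2 h]
  · intro x y z p q
    rw [hmul]
    beta_reduce
    rw [Path.Homotopic.Quotient.mk_trans]
    simp only [Path.Homotopic.Quotient.trans_assoc]
    rw [← Path.Homotopic.Quotient.trans_assoc (s y).symm (s y),
      Path.Homotopic.Quotient.symm_trans, Path.Homotopic.Quotient.refl_trans]
  · intro x
    rw [hone]
    beta_reduce
    rw [Path.Homotopic.Quotient.mk_refl, Path.Homotopic.Quotient.refl_trans,
      Path.Homotopic.Quotient.trans_symm]
  · intro x p h
    rw [hone] at h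
    rw [← Path.Homotopic.Quotient.eq]
    have h3 := congrArg (fun a => (s x).symm.trans (Path.Homotopic.Quotient.trans a (s x))) h
    simp only [
      Path.Homotopic.Quotient.trans_assoc, Path.Homotopic.Quotient.symm_trans,
      Path.Homotopic.Quotient.trans_refl, Path.Homotopic.Quotient.refl_trans] at h3
    rw [← Path.Homotopic.Quotient.trans_assoc (s x).symm (s x),
      Path.Homotopic.Quotient.symm_trans, Path.Homotopic.Quotient.refl_trans] at h3
    exact h3

theorem convex_homotopic {C S : Set ℂ} (hS : Convex ℝ S) (hSC : S ⊆ C) {a b : C} (p q : Path a b)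
    (hp : ∀ t, (p t : ℂ) ∈ S) (hq : ∀ t, (q t : ℂ) ∈ S) : p.Homotopic q := by
  have ha : (a : ℂ) ∈ S := by simpa using hp 0
  have hb : (b : ℂ) ∈ S := by simpa using hp 1
  have : ContractibleSpace S := hS.contractibleSpace ⟨_, ha⟩
  let p' : Path (⟨a, ha⟩ : S) ⟨b, hb⟩ :=
    { toFun := fun t => ⟨p t, hp t⟩
      continuous_toFun := by fun_prop
      source' := by simp
      target' := by simp }
  let q' : Path (⟨a, ha⟩ : S) ⟨b, hb⟩ :=
    { toFun := fun t => ⟨q t, hq t⟩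
      continuous_toFun := by fun_prop
      source' := by simp
      target' := by simp }
  have h : p'.Homotopic q' := SimplyConnectedSpace.paths_homotopic p' q'
  exact h.map ⟨Set.inclusion hSC, continuous_inclusion hSC⟩

theorem exists_tau {C : Set ℂ} {G : Type} [Group G] (cl : ∀ x y : C, Path x y → G)
    (h1 : ∀ x y (p q : Path x y), p.Homotopic q → cl x y p = cl x y q)
    (h2 : ∀ x y z (p : Path x y) (q : Path y z), cl x z (p.trans q) = cl x y p * cl y z q) :
    ∃ τ : ℂ → ℂ → G,
      (∀ S, Convex ℝ S → S ⊆ C → ∀ (a b : C) (p : Path a b), (∀ t, (p t : ℂ) ∈ S) →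
        cl a b p = τ a b) ∧
      (∀ S, Convex ℝ S → S ⊆ C → ∀ a ∈ S, ∀ b ∈ S, ∀ c ∈ S, τ a b * τ b c = τ a c) := by
  classical
  let sg : ∀ a b : ℂ, (h : segment ℝ a b ⊆ C) →
      Path (⟨a, h (left_mem_segment ℝ a b)⟩ : C) ⟨b, h (right_mem_segment ℝ a b)⟩ := fun a b h =>
    { toFun := fun t => ⟨Path.segment a b t, h (by
        rw [← Path.range_segment]; exact ⟨t, rfl⟩)⟩
      continuous_toFun := by fun_prop
      source' := by simp
      target' := by simp }
  have hsg : ∀ a b h t, ((sg a b h) t : ℂ) ∈ segment ℝ a b := by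
    intro a b h t
    rw [← Path.range_segment]; exact ⟨t, rfl⟩
  let τ : ℂ → ℂ → G := fun a b =>
    if h : segment ℝ a b ⊆ C then cl _ _ (sg a b h) else 1
  have key : ∀ S, Convex ℝ S → S ⊆ C → ∀ (a b : C) (p : Path a b), (∀ t, (p t : ℂ) ∈ S) →
        cl a b p = τ a b := by
    intro S hS hSC a b p hp
    have ha : (a : ℂ) ∈ S := by simpa using hp 0
    have hb : (b : ℂ) ∈ S := by simpa using hp 1
    have hs := hS.segment_subset ha hb
    simp only [τ, dif_pos (hs.trans hSC)]
    exact h1 _ _ _ _ (convex_homotopic hS hSC _ _ hp fun t => hs (hsg _ _ _ t))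
  refine ⟨τ, key, ?_⟩
  intro S hS hSC a ha b hb c hc
  have hab := hS.segment_subset ha hb
  have hbc := hS.segment_subset hb hc
  have e1 := key S hS hSC _ _ (sg a b (hab.trans hSC)) fun t => hab (hsg _ _ _ t)
  have e2 := key S hS hSC _ _ (sg b c (hbc.trans hSC)) fun t => hbc (hsg _ _ _ t)
  have e3 := key S hS hSC _ _ ((sg a b (hab.trans hSC)).trans (sg b c (hbc.trans hSC))) (by
    intro t
    rw [Path.trans_apply]
    split_ifs
    · exact hab (hsg _ _ _ _)
    · exact hbc (hsg _ _ _ _))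
  rw [h2, e1, e2] at e3
  exact e3

def bx (N : ℝ) (z : ℂ) (m : ℝ) : Set ℂ :=
  {w | N * w.re ∈ Ioo (N * z.re - m) (N * z.re + m) ∧ N * w.im ∈ Ioo (N * z.im - m) (N * z.im + m)}

theorem convex_bx (N z m) : Convex ℝ (bx N z m) :=
  convex_box _ _ N (convex_Ioo _ _) (convex_Ioo _ _)

theorem isOpen_bx (N z m) : IsOpen (bx N z m) := by
  have h1 : Continuous (fun z : ℂ => N * z.re) := by fun_prop
  have h2 : Continuous (fun z : ℂ => N * z.im) := by fun_prop
  exact (isOpen_Ioo.preimage h1).inter (isOpen_Ioo.preimage h2)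

theorem ev_mem_bx {N : ℝ} (hN : 0 < N) (z : ℂ) (m : ℝ) (u : ℤ × ℤ) : ev N u ∈ bx N z m ↔
    (u.1 : ℝ) ∈ Ioo (N * z.re - m) (N * z.re + m) ∧ (u.2 : ℝ) ∈ Ioo (N * z.im - m) (N * z.im + m) := by
  have e1 : N * (u.1 / N : ℝ) = u.1 := by field_simp
  have e2 : N * (u.2 / N : ℝ) = u.2 := by field_simp
  simp only [bx, ev, mem_ofPred_eq, e1, e2]

theorem reach {C : Set ℂ} {G : Type} [Group G] (τ : ℂ → ℂ → G)
    (hT : ∀ S, Convex ℝ S → S ⊆ C → ∀ a ∈ S, ∀ b ∈ S, ∀ c ∈ S, τ a b * τ b c = τ a c)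
    {N : ℝ} (hN : 0 < N) (z : ℂ) (m : ℝ) (hS : bx N z m ⊆ C) (u v : ℤ × ℤ)
    (hu : ev N u ∈ bx N z m) (hv : ev N v ∈ bx N z m) :
    ∃ l, IsW (EE N C) u l v ∧ wprod (fun a b => τ (ev N a) (ev N b)) l = τ (ev N u) (ev N v) := by
  set R : ℤ × ℤ → ℤ × ℤ → Prop := fun u v =>
    ∃ l, IsW (EE N C) u l v ∧ wprod (fun a b => τ (ev N a) (ev N b)) l = τ (ev N u) (ev N v) with hR
  have hc := convex_bx N z m
  have T := hT _ hc hS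
  have hrefl : ∀ u, ev N u ∈ bx N z m → R u u := by
    intro u hu
    refine ⟨[], rfl, ?_⟩
    have := T _ hu _ hu _ hu
    simpa [wprod, eq_comm] using this
  have htrans : ∀ u v w, ev N u ∈ bx N z m → ev N v ∈ bx N z m → ev N w ∈ bx N z m →
      R u v → R v w → R u w := by
    rintro u v w hu hv hw ⟨l, hl, el⟩ ⟨k, hk, ek⟩
    exact ⟨l ++ k, isW_append.2 ⟨v, hl, hk⟩, by rw [wprod_append, el, ek, T _ hu _ hv _ hw]⟩
  have hedge : ∀ u v, ev N u ∈ bx N z m → ev N v ∈ bx N z m → Adj4 u v → R u v := by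
    intro u v hu hv ha
    exact ⟨[(u, v)], ⟨rfl, ⟨ha, (hc.segment_subset hu hv).trans hS⟩, rfl⟩, by simp [wprod]⟩
  have hh : ∀ (k : ℕ) (x y : ℤ), ev N (x, y) ∈ bx N z m → ev N (x + k, y) ∈ bx N z m →
      R (x, y) (x + k, y) ∧ R (x + k, y) (x, y) := by
    intro k
    induction k with
    | zero => intro x y h _; simpa using hrefl _ h
    | succ k ih =>
      intro x y h1 h2
      have h3 : ev N (x + k, y) ∈ bx N z m := by
        rw [ev_mem_bx hN] at h1 h2 ⊢
        simp only [mem_Ioo] at h1 h2 ⊢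
        push_cast at h1 h2 ⊢
        have : (0 : ℝ) ≤ k := by positivity
        refine ⟨⟨by linarith [h1.1.1], by linarith [h2.1.2]⟩, h1.2⟩
      obtain ⟨r1, r2⟩ := ih x y h1 h3
      refine ⟨htrans _ _ _ h1 h3 h2 r1 (hedge _ _ h3 h2 ?_), htrans _ _ _ h2 h3 h1 (hedge _ _ h2 h3 ?_) r2⟩
      · simp [Adj4]; omega
      · simp [Adj4]; omega
  have hvv : ∀ (k : ℕ) (x y : ℤ), ev N (x, y) ∈ bx N z m → ev N (x, y + k) ∈ bx N z m →
      R (x, y) (x, y + k) ∧ R (x, y + k) (x, y) := by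
    intro k
    induction k with
    | zero => intro x y h _; simpa using hrefl _ h
    | succ k ih =>
      intro x y h1 h2
      have h3 : ev N (x, y + k) ∈ bx N z m := by
        rw [ev_mem_bx hN] at h1 h2 ⊢
        simp only [mem_Ioo] at h1 h2 ⊢
        push_cast at h1 h2 ⊢
        have : (0 : ℝ) ≤ k := by positivity
        refine ⟨h1.1, by linarith [h1.2.1], by linarith [h2.2.2]⟩
      obtain ⟨r1, r2⟩ := ih x y h1 h3
      refine ⟨htrans _ _ _ h1 h3 h2 r1 (hedge _ _ h3 h2 ?_), htrans _ _ _ h2 h3 h1 (hedge _ _ h2 h3 ?_) r2⟩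
      · simp [Adj4]; omega
      · simp [Adj4]; omega
  obtain ⟨a, b⟩ := u
  obtain ⟨c, d⟩ := v
  have hw : ev N (c, b) ∈ bx N z m := by
    rw [ev_mem_bx hN] at hu hv ⊢
    exact ⟨hv.1, hu.2⟩
  have s1 : R (a, b) (c, b) := by
    rcases le_total a c with h | h
    · obtain ⟨k, rfl⟩ := Int.le.dest h
      exact (hh k a b hu hw).1
    · obtain ⟨k, rfl⟩ := Int.le.dest h
      exact (hh k c b hw hu).2
  have s2 : R (c, b) (c, d) := by
    rcases le_total b d with h | h
    · obtain ⟨k, rfl⟩ := Int.le.dest h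
      exact (hvv k c b hw hv).1
    · obtain ⟨k, rfl⟩ := Int.le.dest h
      exact (hvv k c d hv hw).2
  exact htrans _ _ _ hu hw hv s1 s2

theorem grid_loop {C : Set ℂ} {G : Type} [Group G] (hH : HoleFree C) (τ : ℂ → ℂ → G)
    (hT : ∀ S, Convex ℝ S → S ⊆ C → ∀ a ∈ S, ∀ b ∈ S, ∀ c ∈ S, τ a b * τ b c = τ a c)
    {N : ℝ} (hN : 0 < N) (u : ℤ × ℤ) (l : List ((ℤ × ℤ) × (ℤ × ℤ))) (hl : IsW (EE N C) u l u) :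
    wprod (fun a b => τ (ev N a) (ev N b)) l = 1 := by
  have hsq : ∀ x y, sq N (x, y) ⊆ C → ∀ a b c d : ℤ, x ≤ a → a ≤ x + 1 → y ≤ b → b ≤ y + 1 →
      x ≤ c → c ≤ x + 1 → y ≤ d → d ≤ y + 1 →
      segment ℝ (ev N (a, b)) (ev N (c, d)) ⊆ C := by
    intro x y h a b c d h1 h2 h3 h4 h5 h6 h7 h8
    exact ((convex_sq N _).segment_subset (ev_mem_sq hN h1 h2 h3 h4)
      (ev_mem_sq hN h5 h6 h7 h8)).trans h
  refine grid_trivial _ (EE N C) (fun c => sq N c ⊆ C) ?_ (fun u v h => h.1) ?_ ?_ ?_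
    (fun n hb h1 h2 c hc => hole_grid hH hN n hb h1 h2 c hc) u l hl
  · rintro ⟨a, b⟩ ⟨c, d⟩ ⟨h1, h2⟩
    refine ⟨?_, by rwa [segment_symm]⟩
    simp only [Adj4] at h1 ⊢
    omega
  · rintro u v ⟨h1, h2⟩
    have hl := left_mem_segment ℝ (ev N u) (ev N v)
    have hr := right_mem_segment ℝ (ev N u) (ev N v)
    have T := hT _ (convex_segment _ _) h2
    have e := T _ hl _ hl _ hl
    have e2 := T _ hl _ hr _ hl
    rw [e2]
    simpa using e
  · intro x y h
    refine ⟨⟨?_, ?_⟩, ⟨?_, ?_⟩, ⟨?_, ?_⟩⟩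
    · simp [Adj4]
    · apply hsq x y h <;> omega
    · simp [Adj4]
    · apply hsq x y h <;> omega
    · simp [Adj4]
    · apply hsq x y h <;> omega
  · intro x y h
    have T := hT _ (convex_sq N (x, y)) h
    have m1 : ev N (x, y) ∈ sq N (x, y) := by apply ev_mem_sq hN <;> omega
    have m2 : ev N (x + 1, y) ∈ sq N (x, y) := by apply ev_mem_sq hN <;> omega
    have m3 : ev N (x, y + 1) ∈ sq N (x, y) := by apply ev_mem_sq hN <;> omega
    have m4 : ev N (x + 1, y + 1) ∈ sq N (x, y) := by apply ev_mem_sq hN <;> omega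
    rw [T _ m3 _ m1 _ m2, T _ m3 _ m2 _ m4]

theorem sc_of_holeFree {C : Set ℂ} (hC : IsOpen C) (hH : HoleFree C) (hp : IsPathConnected C) :
    SimplyConnectedSpace C := by
  have : PathConnectedSpace C := isPathConnected_iff_pathConnectedSpace.1 hp
  rw [simply_connected_iff_loops_nullhomotopic]
  refine ⟨this, fun x0 γ => ?_⟩
  obtain ⟨G, _, cl, c1, c2, c3, c4⟩ := exists_cl C
  apply c4
  obtain ⟨τ, t1, hT⟩ := exists_tau cl c1 c2
  have hcast : ∀ (x y x' y' : C) (hx : x' = x) (hy : y' = y) (p : Path x y),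
      cl x' y' (p.cast hx hy) = cl x y p := by
    intro x y x' y' hx hy p
    subst hx hy
    rfl
  have hγ : Continuous fun t => (γ t : ℂ) := by fun_prop
  obtain ⟨δ, hδ, hth⟩ := (isCompact_range hγ).exists_thickening_subset_open hC (by
    rintro _ ⟨t, rfl⟩; exact (γ t).2)
  set N : ℝ := 4 / δ with hNdef
  have hN : 0 < N := by positivity
  have hbox : ∀ s, bx N (γ s) 2 ⊆ C := by
    intro s w hw
    apply hth
    rw [Metric.mem_thickening_iff]
    refine ⟨_, ⟨s, rfl⟩, ?_⟩
    obtain ⟨⟨a1, a2⟩, a3, a4⟩ := hw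
    rw [dist_eq_norm]
    refine (Complex.norm_le_abs_re_add_abs_im _).trans_lt ?_
    have b1 : N * |(w - γ s).re| < 2 := by
      rw [← abs_of_pos hN, ← abs_mul, abs_lt, Complex.sub_re, mul_sub]
      constructor <;> linarith
    have b2 : N * |(w - γ s).im| < 2 := by
      rw [← abs_of_pos hN, ← abs_mul, abs_lt, Complex.sub_im, mul_sub]
      constructor <;> linarith
    have b3 : N * δ = 4 := by rw [hNdef]; field_simp
    have : N * (|(w - γ s).re| + |(w - γ s).im|) < N * δ := by rw [mul_add]; linarith
    exact lt_of_mul_lt_mul_left this hN.le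
  set rd : ℂ → ℤ × ℤ := fun w => (⌊N * w.re⌋, ⌊N * w.im⌋) with hrd
  have hrdm : ∀ z w, w ∈ bx N z 1 → ev N (rd w) ∈ bx N z 2 := by
    rintro z w ⟨⟨a1, a2⟩, a3, a4⟩
    rw [ev_mem_bx hN]
    have := Int.floor_le (N * w.re)
    have := Int.floor_le (N * w.im)
    have := Int.lt_floor_add_one (N * w.re)
    have := Int.lt_floor_add_one (N * w.im)
    refine ⟨⟨?_, ?_⟩, ?_, ?_⟩ <;> simp only [hrd] <;> linarith
  have hself : ∀ z m, 0 < m → z ∈ bx N z m := by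
    intro z m hm
    refine ⟨⟨?_, ?_⟩, ?_, ?_⟩ <;> linarith
  have hmono : ∀ z, bx N z 1 ⊆ bx N z 2 := by
    rintro z w ⟨⟨a1, a2⟩, a3, a4⟩
    refine ⟨⟨?_, ?_⟩, ?_, ?_⟩ <;> linarith
  obtain ⟨t, ht0, htm, ⟨n, hn⟩, htc⟩ := exists_monotone_Icc_subset_open_cover_unitInterval
    (c := fun s => (fun t => (γ t : ℂ)) ⁻¹' bx N (γ s) 1)
    (fun s => (isOpen_bx _ _ _).preimage hγ)
    (fun s _ => mem_iUnion.2 ⟨s, hself _ _ one_pos⟩)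
  have key : ∀ n, ∃ l, IsW (EE N C) (rd (γ 0)) l (rd (γ (t n))) ∧
      cl _ _ (γ.subpath 0 (t n)) = τ (γ 0) (ev N (rd (γ 0))) *
        wprod (fun a b => τ (ev N a) (ev N b)) l * τ (ev N (rd (γ (t n)))) (γ (t n)) := by
    intro n
    induction n with
    | zero =>
      refine ⟨[], by simp [IsW, ht0], ?_⟩
      have T := hT _ (convex_bx N (γ 0) 2) (hbox 0)
      have m1 := hself (γ 0) 2 two_pos
      have m2 := hrdm _ _ (hself (γ 0) 1 one_pos)
      have e := T _ m1 _ m1 _ m1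
      rw [ht0, Path.subpath_self, c3]
      simp only [wprod, List.map_nil, List.prod_nil, mul_one]
      rw [T _ m1 _ m2 _ m1]
      exact (by simpa using e : τ (γ 0) (γ 0) = 1).symm
    | succ n ih =>
      obtain ⟨l, hl, el⟩ := ih
      obtain ⟨s, hs⟩ := htc n
      have hle := htm (Nat.le_succ n)
      have m1 := hs (left_mem_Icc.2 hle)
      have m2 := hs (right_mem_Icc.2 hle)
      simp only [mem_preimage] at m1 m2
      have T := hT _ (convex_bx N (γ s) 2) (hbox s)
      obtain ⟨k, hk, ek⟩ := reach τ hT hN (γ s) 2 (hbox s) _ _ (hrdm _ _ m1) (hrdm _ _ m2)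
      refine ⟨l ++ k, isW_append.2 ⟨_, hl, hk⟩, ?_⟩
      rw [← c1 _ _ _ _ ⟨Path.Homotopy.subpathTransSubpath γ 0 (t n) (t (n + 1))⟩, c2, el,
        t1 _ (convex_bx N (γ s) 2) (hbox s) _ _ (γ.subpath (t n) (t (n + 1))) ?_,
        wprod_append, ek, mul_assoc,
        T _ (hrdm _ _ m1) _ (hmono _ m1) _ (hmono _ m2),
        ← T _ (hrdm _ _ m1) _ (hrdm _ _ m2) _ (hmono _ m2)]
      · simp only [mul_assoc]
      intro r
      have hr : γ.subpath (t n) (t (n + 1)) r ∈ range (γ.subpath (t n) (t (n + 1))) := ⟨r, rfl⟩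
      rw [Path.range_subpath_of_le _ _ _ hle] at hr
      obtain ⟨q, hq, e⟩ := hr
      rw [← e]
      exact hmono _ (hs hq)
  obtain ⟨l, hl, el⟩ := key n
  rw [hn n le_rfl] at hl el
  rw [Path.subpath_zero_one, hcast] at el
  rw [el]
  rw [Path.source, Path.target] at *
  rw [grid_loop hH τ hT hN _ l hl, mul_one]
  have hb0 := hbox 0
  rw [Path.source] at hb0
  have T := hT _ (convex_bx N x0 2) hb0
  have m1 := hself x0 2 two_pos
  have m2 := hrdm _ _ (hself x0 1 one_pos)
  have e := T _ m1 _ m1 _ m1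
  rw [T _ m1 _ m2 _ m1]
  simpa using e

end SC13

/-- let `U ⊆ ℂ` be open with all connected components simply connected
and `f : U → ℂ` holomorphic. Define `D 1 = U`, `D (n+1) = {z ∈ U | f z ∈ D n}`
(the domain of the iterate `fⁿ`). Then each `D n` (`n ≥ 1`) is open and all its
connected components are simply connected. -/
theorem stmt_13 (U : Set ℂ) (hU : IsOpen U)
    (hUsc : ∀ x ∈ U, SimplyConnectedSpace (connectedComponentIn U x))
    (f : ℂ → ℂ) (hf : DifferentiableOn ℂ f U)
    (D : ℕ → Set ℂ) (hD1 : D 1 = U)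
    (hDrec : ∀ n : ℕ, 1 ≤ n → D (n + 1) = {z ∈ U | f z ∈ D n}) :
    ∀ n : ℕ, 1 ≤ n → IsOpen (D n) ∧
      ∀ x ∈ D n, SimplyConnectedSpace (connectedComponentIn (D n) x) := by
  have hUH := SC13.holeFree_of_sc hU hUsc
  have key : ∀ n : ℕ, 1 ≤ n → IsOpen (D n) ∧ SC13.HoleFree (D n) := by
    intro n hn
    induction n, hn using Nat.le_induction with
    | base => rw [hD1]; exact ⟨hU, hUH⟩
    | succ n hn ih =>
      rw [hDrec n hn]
      exact ⟨hf.continuousOn.isOpen_inter_preimage hU ih.1,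
        SC13.holeFree_preimage hU hUH ih.2 f hf⟩
  intro n hn
  obtain ⟨ho, hh⟩ := key n hn
  refine ⟨ho, fun x hx => ?_⟩
  have hoc : IsOpen (connectedComponentIn (D n) x) := ho.connectedComponentIn
  exact SC13.sc_of_holeFree hoc (SC13.holeFree_component ho hh x)
    (hoc.isConnected_iff_isPathConnected.1 (isConnected_connectedComponentIn_iff.2 hx))
end
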